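/- Let n ≥ 1, 0 < p ≤ 1, 0 < q ≤ ∞, and let ψ be smooth, compactly supported on ℝⁿ with ∫ψ ≠ 0. Let f ∈ L¹_loc(ℝⁿ) satisfy ‖Nf‖_{p,q} < ∞. Then there exist H^p atoms a_{j,k} with defining cubes I_{j,k}, and coefficients λ_{j,k} = 2^k |I_{j,k}|^{1/p} ≥ 0, such that: (i) for each fixed k the cubes {I_{j,k}}_j have bounded overlap, Σ_j χ_{I_{j,k}} ≤ C with C independent of k; (ii) for every smooth compactly supported test function g one has ∫ f g = lim_{n→∞} Σ_{|k|≤n} Σ_j λ_{j,k} ∫ a_{j,k} g; and (iii) (Σ_k (Σ_j λ_{j,k}^p)^{q/p})^{1/q} is comparable to ‖Nf‖_{p,q}, i.e. c₁ ‖Nf‖_{p,q} ≤ (Σ_k (Σ_j λ_{j,k}^p)^{q/p})^{1/q} ≤ c₂ ‖Nf‖_{p,q} with constants depending only on n, p, q, ψ (with the usual supremum interpretation of the outer ℓ^q sum when q = ∞). -/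

import Mathlib

open MeasureTheory ENNReal Set

noncomputable section

abbrev Euc (n : ℕ) := EuclideanSpace ℝ (Fin n)

/-- Distribution function `m(F, lam) = |{x : lam < F x}|` (Lebesgue measure). -/
def distFn {n : ℕ} (F : Euc n → ℝ≥0∞) (lam : ℝ≥0∞) : ℝ≥0∞ :=
  volume {x | lam < F x}

/-- View a real-valued function as an `ℝ≥0∞`-valued one via its absolute value. -/
def eF {n : ℕ} (g : Euc n → ℝ) : Euc n → ℝ≥0∞ :=
  fun x => ENNReal.ofReal |g x|

/-- Dyadic Lorentz `L^{p,q}` quasinorm. -/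
def lorentzNorm {n : ℕ} (p : ℝ) (q : ℝ≥0∞) (F : Euc n → ℝ≥0∞) : ℝ≥0∞ :=
  if q = ∞ then ⨆ k : ℤ, (2 : ℝ≥0∞) ^ k * (distFn F ((2 : ℝ≥0∞) ^ k)) ^ (1/p)
  else (∑' k : ℤ, ((2 : ℝ≥0∞) ^ k * (distFn F ((2 : ℝ≥0∞) ^ k)) ^ (1/p)) ^ q.toReal) ^ (1/q.toReal)

/-- `ℓ^q(ℤ)` norm of a nonnegative sequence. -/
def ellq (q : ℝ≥0∞) (a : ℤ → ℝ≥0∞) : ℝ≥0∞ :=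
  if q = ∞ then ⨆ k : ℤ, a k else (∑' k : ℤ, (a k) ^ q.toReal) ^ (1/q.toReal)

/-- The axis-parallel closed cube centered at `c` with half side-length `r`. -/
def cube {n : ℕ} (c : Euc n) (r : ℝ) : Set (Euc n) := {y | ∀ i, |y i - c i| ≤ r}

/-- `H^p` atom with defining cube `cube c r`; `|cube c r| = (2r)^n`. -/
def IsHpAtom {n : ℕ} (p : ℝ) (a : Euc n → ℝ) (c : Euc n) (r : ℝ) : Prop :=
  0 < r ∧ Measurable a ∧ (∀ x, x ∉ cube c r → a x = 0) ∧
    (∀ᵐ x ∂(volume : Measure (Euc n)), |a x| ≤ ((((2*r)^n : ℝ)) ^ (1/p))⁻¹) ∧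
    ∀ α : Fin n → ℕ, (∑ i, α i) ≤ ⌊(n : ℝ) * (1/p - 1)⌋₊ →
      (∫ y : Euc n, (∏ i, y i ^ α i) * a y) = 0

/-- `(f * ψ_t)(y)` where `ψ_t(x) = t⁻ⁿ ψ(x/t)`. -/
def convAt {n : ℕ} (ψ f : Euc n → ℝ) (t : ℝ) (y : Euc n) : ℝ :=
  ∫ z : Euc n, f z * ((t ^ n)⁻¹ * ψ (t⁻¹ • (y - z)))

/-- Non-tangential maximal function. -/
def ntMax {n : ℕ} (ψ f : Euc n → ℝ) (x : Euc n) : ℝ≥0∞ :=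
  ⨆ (y : Euc n) (t : ℝ) (_ : 0 < t) (_ : dist x y < t), ENNReal.ofReal |convAt ψ f t y|

/-- Radial maximal function. -/
def radMax {n : ℕ} (φ f : Euc n → ℝ) (x : Euc n) : ℝ≥0∞ :=
  ⨆ (t : ℝ) (_ : 0 < t), ENNReal.ofReal |convAt φ f t x|



/-! ### Sequence spaces -/

theorem seq_bound (q : ℝ≥0∞) (hq : 0 < q) (θ : ℝ≥0∞) (hθ : θ < 1) :
    ∃ D : ℝ≥0∞, D ≠ ∞ ∧ ∀ (C : ℝ≥0∞) (a b : ℤ → ℝ≥0∞) (τ : ℕ → ℤ),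
      (∀ k, b k ≤ C * ⨆ s : ℕ, θ ^ s * a (k + τ s)) → ellq q b ≤ C * D * ellq q a := by
  by_cases hqt : q = ∞
  · refine ⟨1, one_ne_top, fun C a b τ h => ?_⟩
    simp only [ellq, hqt, if_true, mul_one]
    refine iSup_le fun k => (h k).trans ?_
    gcongr
    refine iSup_le fun s => ?_
    calc θ ^ s * a (k + τ s) ≤ 1 * a (k + τ s) := by
            gcongr; exact pow_le_one₀ (zero_le) hθ.le
      _ = a (k + τ s) := one_mul _
      _ ≤ _ := le_iSup a _
  · have hq' : 0 < q.toReal := ENNReal.toReal_pos hq.ne' hqt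
    set r := q.toReal with hr
    have hθr : θ ^ r < 1 := ENNReal.rpow_lt_one hθ hq'
    refine ⟨((1 - θ ^ r)⁻¹) ^ (1 / r), ?_, fun C a b τ h => ?_⟩
    · apply ENNReal.rpow_ne_top_of_nonneg (by positivity)
      simp only [ne_eq, ENNReal.inv_eq_top]
      exact (tsub_pos_of_lt hθr).ne'
    · simp only [ellq, hqt, if_false]
      rw [← hr]
      have h1 : ∀ k, b k ^ r ≤ C ^ r * ∑' s : ℕ, (θ ^ r) ^ s * a (k + τ s) ^ r := by
        intro k
        calc b k ^ r ≤ (C * ⨆ s : ℕ, θ ^ s * a (k + τ s)) ^ r :=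
              ENNReal.rpow_le_rpow (h k) hq'.le
          _ = C ^ r * (⨆ s : ℕ, θ ^ s * a (k + τ s)) ^ r :=
              ENNReal.mul_rpow_of_nonneg _ _ hq'.le
          _ ≤ _ := by
            gcongr
            have : (⨆ s : ℕ, θ ^ s * a (k + τ s)) ≤
                (∑' s : ℕ, (θ ^ r) ^ s * a (k + τ s) ^ r) ^ (1 / r) := by
              refine iSup_le fun s => ?_
              rw [one_div, ENNReal.le_rpow_inv_iff hq']
              calc (θ ^ s * a (k + τ s)) ^ r = (θ ^ r) ^ s * a (k + τ s) ^ r := by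
                    rw [ENNReal.mul_rpow_of_nonneg _ _ hq'.le, ← ENNReal.rpow_natCast,
                      ← ENNReal.rpow_natCast, ← ENNReal.rpow_mul, ← ENNReal.rpow_mul, mul_comm r]
                _ ≤ _ := ENNReal.le_tsum (f := fun s : ℕ => (θ ^ r) ^ s * a (k + τ s) ^ r) s
            rwa [one_div, ENNReal.le_rpow_inv_iff hq'] at this
      have h2 : ∑' k, b k ^ r ≤ C ^ r * ((1 - θ ^ r)⁻¹ * ∑' k, a k ^ r) := by
        calc ∑' k, b k ^ r ≤ ∑' k, C ^ r * ∑' s : ℕ, (θ ^ r) ^ s * a (k + τ s) ^ r :=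
              ENNReal.tsum_le_tsum h1
          _ = C ^ r * ∑' s : ℕ, ∑' k, (θ ^ r) ^ s * a (k + τ s) ^ r := by
              rw [ENNReal.tsum_mul_left, ENNReal.tsum_comm]
          _ = C ^ r * ∑' s : ℕ, (θ ^ r) ^ s * ∑' k, a k ^ r := by
              congr 1; apply tsum_congr; intro s
              rw [ENNReal.tsum_mul_left]
              congr 1
              exact (Equiv.addRight (τ s)).tsum_eq (fun k => a k ^ r)
          _ = _ := by rw [ENNReal.tsum_mul_right, ENNReal.tsum_geometric]
      calc (∑' k, b k ^ r) ^ (1 / r)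
          ≤ (C ^ r * ((1 - θ ^ r)⁻¹ * ∑' k, a k ^ r)) ^ (1 / r) :=
            ENNReal.rpow_le_rpow h2 (by positivity)
        _ = _ := by
            rw [ENNReal.mul_rpow_of_nonneg _ _ (by positivity),
              ENNReal.mul_rpow_of_nonneg _ _ (by positivity), ← ENNReal.rpow_mul,
              mul_one_div_cancel hq'.ne', ENNReal.rpow_one, mul_assoc]

theorem ellq_mono (q : ℝ≥0∞) (a b : ℤ → ℝ≥0∞) (h : ∀ k, a k ≤ b k) : ellq q a ≤ ellq q b := by
  unfold ellq
  split_ifs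
  · exact iSup_mono h
  · apply ENNReal.rpow_le_rpow _ (by positivity)
    exact ENNReal.tsum_le_tsum fun k => ENNReal.rpow_le_rpow (h k) (by positivity)

theorem le_ellq (q : ℝ≥0∞) (hq : 0 < q) (a : ℤ → ℝ≥0∞) (k : ℤ) : a k ≤ ellq q a := by
  unfold ellq
  split_ifs with h
  · exact le_iSup a k
  · have hq' : 0 < q.toReal := ENNReal.toReal_pos hq.ne' h
    rw [one_div, ENNReal.le_rpow_inv_iff hq']
    exact ENNReal.le_tsum (f := fun k => a k ^ q.toReal) k

/-! ### Aperture sets -/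

/-- the set where the maximal function of aperture `2^s` exceeds `v` -/
def apSet {n : ℕ} (ψ f : Euc n → ℝ) (s : ℕ) (v : ℝ) : Set (Euc n) :=
  {x | ∃ (y : Euc n) (t : ℝ), 0 < t ∧ dist x y < 2 ^ s * t ∧ v < |convAt ψ f t y|}

theorem apSet_open {n : ℕ} (ψ f : Euc n → ℝ) (s : ℕ) (v : ℝ) : IsOpen (apSet ψ f s v) := by
  have : apSet ψ f s v = ⋃ (y : Euc n) (t : ℝ) (_ : 0 < t) (_ : v < |convAt ψ f t y|),
      Metric.ball y (2 ^ s * t) := by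
    ext x; simp only [apSet, mem_ofPred_eq, mem_iUnion, Metric.mem_ball, exists_prop]
    constructor
    · rintro ⟨y, t, h1, h2, h3⟩; exact ⟨y, t, h1, h3, h2⟩
    · rintro ⟨y, t, h1, h2, h3⟩; exact ⟨y, t, h1, h3, h2⟩
  rw [this]
  exact isOpen_iUnion fun y => isOpen_iUnion fun t => isOpen_iUnion fun _ => isOpen_iUnion fun _ =>
    Metric.isOpen_ball

/-- volume of balls -/
theorem vol_cball {n : ℕ} (x : Euc n) {r : ℝ} (hr : 0 ≤ r) :
    volume (Metric.closedBall x r) = ENNReal.ofReal (r ^ n) * volume (Metric.ball (0 : Euc n) 1) := by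
  rw [Measure.addHaar_closedBall volume x hr]; simp

theorem vol_ball {n : ℕ} (x : Euc n) {r : ℝ} (hr : 0 < r) :
    volume (Metric.ball x r) = ENNReal.ofReal (r ^ n) * volume (Metric.ball (0 : Euc n) 1) := by
  rw [Measure.addHaar_ball_of_pos volume x hr]; simp

/-- a finite volume set contains only balls of bounded radius -/
theorem radius_bound {n : ℕ} (hn : 1 ≤ n) (U : Set (Euc n)) (hU : volume U ≠ ∞) :
    ∃ R : ℝ, 0 < R ∧ ∀ (y : Euc n) (t : ℝ), 0 < t → Metric.ball y t ⊆ U → t ≤ R := by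
  set ω := volume (Metric.ball (0 : Euc n) 1)
  have hω : 0 < ω := Metric.measure_ball_pos _ _ one_pos
  have hω' : ω ≠ ∞ := measure_ball_lt_top.ne
  refine ⟨max 1 (volume U / ω).toReal, by positivity, fun y t ht hy => ?_⟩
  by_contra! hlt
  have ht1 : 1 < t := lt_of_le_of_lt (le_max_left _ _) hlt
  have h1 : ENNReal.ofReal (t ^ n) * ω ≤ volume U := by
    rw [← vol_ball y ht]; exact measure_mono hy
  have h2 : ENNReal.ofReal (t ^ n) ≤ volume U / ω := by
    rwa [ENNReal.le_div_iff_mul_le (Or.inl hω.ne') (Or.inl hω')]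
  have h3 : t ^ n ≤ (volume U / ω).toReal := by
    rwa [ENNReal.ofReal_le_iff_le_toReal] at h2
    exact ENNReal.div_ne_top hU hω.ne'
  have h4 : t ≤ t ^ n := le_self_pow₀ ht1.le (by omega)
  exact absurd (h4.trans (h3.trans (le_max_right 1 _))) (not_le.mpr hlt)

theorem aperture {n : ℕ} (hn : 1 ≤ n) (ψ f : Euc n → ℝ) (s : ℕ) (v : ℝ) :
    volume (apSet ψ f s v) ≤ ENNReal.ofReal ((5 * 2 ^ s) ^ n) * volume (apSet ψ f 0 v) := by
  by_cases hU : volume (apSet ψ f 0 v) = ∞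
  · rw [hU, ENNReal.mul_top]; · exact le_top
    simp only [ne_eq, ENNReal.ofReal_eq_zero, not_le]; positivity
  obtain ⟨R, hR0, hR⟩ := radius_bound hn _ hU
  let I : Set (Euc n × ℝ) := {z | 0 < z.2 ∧ v < |convAt ψ f z.2 z.1|}
  have hsub : ∀ z ∈ I, Metric.ball z.1 z.2 ⊆ apSet ψ f 0 v := by
    intro z hz x hx
    exact ⟨z.1, z.2, hz.1, by simpa using hx, hz.2⟩
  obtain ⟨u, huI, hdisj, hcov⟩ := Vitali.exists_disjoint_subfamily_covering_enlargement_closedBall I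
    (fun z => z.1) (fun z => 2 ^ s * z.2) (2 ^ s * R)
    (fun z hz => by
      have := hR z.1 z.2 hz.1 (hsub z hz)
      gcongr) 5 (by norm_num)
  have hs1 : (1 : ℝ) ≤ 2 ^ s := one_le_pow₀ (by norm_num)
  have hdisj' : u.PairwiseDisjoint fun z => Metric.ball z.1 z.2 := by
    refine hdisj.mono_on fun z hz => ?_
    refine Metric.ball_subset_closedBall.trans (Metric.closedBall_subset_closedBall ?_)
    have := (huI hz).1
    nlinarith
  have hcount : u.Countable := hdisj'.countable_of_isOpen (fun z _ => Metric.isOpen_ball)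
    (fun z hz => ⟨z.1, Metric.mem_ball_self (huI hz).1⟩)
  calc volume (apSet ψ f s v) ≤ volume (⋃ z ∈ u, Metric.closedBall z.1 (5 * (2 ^ s * z.2))) := by
        apply measure_mono
        rintro x ⟨y, t, ht, hxy, hv⟩
        obtain ⟨b, hb, hsubb⟩ := hcov (y, t) ⟨ht, hv⟩
        simp only [mem_iUnion, exists_prop]
        exact ⟨b, hb, hsubb (by simpa using hxy.le)⟩
    _ ≤ ∑' z : u, volume (Metric.closedBall z.1.1 (5 * (2 ^ s * z.1.2))) :=
        measure_biUnion_le _ hcount _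
    _ = ∑' z : u, ENNReal.ofReal ((5 * 2 ^ s) ^ n) * volume (Metric.ball z.1.1 z.1.2) := by
        apply tsum_congr; intro z
        have hz := (huI z.2).1
        rw [vol_cball _ (by positivity), vol_ball _ hz, ← mul_assoc, ← mul_assoc,
          ← ENNReal.ofReal_mul (by positivity), ← mul_pow]
    _ = ENNReal.ofReal ((5 * 2 ^ s) ^ n) * volume (⋃ z ∈ u, Metric.ball z.1 z.2) := by
        rw [ENNReal.tsum_mul_left, measure_biUnion hcount hdisj' (fun z _ => measurableSet_ball)]
    _ ≤ _ := by
        gcongr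
        exact iUnion₂_subset fun z hz => hsub z (huI hz)

theorem distFn_ntMax {n : ℕ} (ψ f : Euc n → ℝ) (k : ℤ) :
    distFn (ntMax ψ f) ((2 : ℝ≥0∞) ^ k) = volume (apSet ψ f 0 ((2 : ℝ) ^ k)) := by
  unfold distFn
  congr 1
  ext x
  have h2 : (2 : ℝ≥0∞) ^ k = ENNReal.ofReal ((2 : ℝ) ^ k) := by
    rw [← ENNReal.rpow_intCast, ← Real.rpow_intCast, ← ENNReal.ofReal_rpow_of_pos (by norm_num)]; simp
  simp only [mem_ofPred_eq, ntMax, lt_iSup_iff, apSet, pow_zero, one_mul, h2]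
  constructor
  · rintro ⟨y, t, ht, hd, h⟩
    exact ⟨y, t, ht, hd, (ENNReal.ofReal_lt_ofReal_iff_of_nonneg (by positivity)).1 h⟩
  · rintro ⟨y, t, ht, hd, h⟩
    exact ⟨y, t, ht, hd, (ENNReal.ofReal_lt_ofReal_iff_of_nonneg (by positivity)).2 h⟩

/-- tangential exceptional set -/
def Vset {n : ℕ} (ψ f : Euc n → ℝ) (M : ℕ) (κ : ℤ) : Set (Euc n) :=
  ⋃ s : ℕ, apSet ψ f s ((2 : ℝ) ^ (κ + s * M : ℤ))

theorem Vset_open {n : ℕ} (ψ f : Euc n → ℝ) (M : ℕ) (κ : ℤ) : IsOpen (Vset ψ f M κ) :=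
  isOpen_iUnion fun _ => apSet_open _ _ _ _

theorem Vset_anti {n : ℕ} (ψ f : Euc n → ℝ) (M : ℕ) {κ κ' : ℤ} (h : κ ≤ κ') :
    Vset ψ f M κ' ⊆ Vset ψ f M κ := by
  refine iUnion_mono fun s => ?_
  rintro x ⟨y, t, ht, hd, hv⟩
  refine ⟨y, t, ht, hd, lt_of_le_of_lt ?_ hv⟩
  exact zpow_le_zpow_right₀ (by norm_num) (by omega)

theorem apSet_sub_Vset {n : ℕ} (ψ f : Euc n → ℝ) (M : ℕ) (κ : ℤ) :
    apSet ψ f 0 ((2 : ℝ) ^ κ) ⊆ Vset ψ f M κ := by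
  intro x hx
  exact mem_iUnion.2 ⟨0, by simpa using hx⟩

theorem Vset_compl {n : ℕ} {ψ f : Euc n → ℝ} {M : ℕ} {κ : ℤ} {x : Euc n} (hx : x ∉ Vset ψ f M κ)
    (s : ℕ) (y : Euc n) (t : ℝ) (ht : 0 < t) (hd : dist x y < 2 ^ s * t) :
    |convAt ψ f t y| ≤ (2 : ℝ) ^ κ * (2 ^ M) ^ s := by
  by_contra! h
  apply hx
  refine mem_iUnion.2 ⟨s, y, t, ht, hd, ?_⟩
  have e : (2 : ℝ) ^ (κ + s * M : ℤ) = (2 : ℝ) ^ κ * (2 ^ M) ^ s := by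
    rw [zpow_add₀ (by norm_num), ← pow_mul, mul_comm M s]
    norm_cast
  rw [e]; exact h

/-- the Lorentz norm bounds for the tangential sets -/
theorem Vset_norm {n : ℕ} (hn : 1 ≤ n) (p : ℝ) (hp0 : 0 < p) (q : ℝ≥0∞) (hq : 0 < q)
    (M : ℕ) (hM : (n : ℝ) + 2 ≤ M * p) (s0 : ℕ) (C : ℝ≥0∞) (hC : C ≠ ∞) :
    ∃ D : ℝ≥0∞, D ≠ ∞ ∧ ∀ ψ f : Euc n → ℝ,
      ellq q (fun k => (C * (((2 : ℝ≥0∞) ^ k) ^ p * volume (Vset ψ f M (k - s0)))) ^ (1 / p)) ≤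
        D * lorentzNorm p q (ntMax ψ f) := by
  set θ : ℝ≥0∞ := (2⁻¹ : ℝ≥0∞) ^ (1 / p) with hθdef
  have hθ : θ < 1 := ENNReal.rpow_lt_one (by simp) (by positivity)
  obtain ⟨D, hD, hDb⟩ := seq_bound q hq θ hθ
  set C' : ℝ≥0∞ := (C * ENNReal.ofReal (5 ^ n) * (((2 : ℝ≥0∞) ^ s0) ^ p) * 2) ^ (1 / p) with hC'
  refine ⟨C' * D, ?_, fun ψ f => ?_⟩
  · refine ENNReal.mul_ne_top (ENNReal.rpow_ne_top_of_nonneg (by positivity) ?_) hD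
    refine ENNReal.mul_ne_top (ENNReal.mul_ne_top (ENNReal.mul_ne_top hC (by simp)) ?_) (by simp)
    exact ENNReal.rpow_ne_top_of_nonneg hp0.le (by simp)
  set u : ℤ → ℝ≥0∞ := fun k => volume (apSet ψ f 0 ((2 : ℝ) ^ k)) with hu
  set a : ℤ → ℝ≥0∞ := fun k => (2 : ℝ≥0∞) ^ k * u k ^ (1 / p) with ha
  have hL : lorentzNorm p q (ntMax ψ f) = ellq q a := by
    simp only [lorentzNorm, ellq, ha, hu, distFn_ntMax]
  rw [hL]
  apply hDb C' a _ (fun s => -(s0 : ℤ) + s * M)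
  intro k
  have h20 : (2 : ℝ≥0∞) ≠ 0 := by norm_num
  have h2t : (2 : ℝ≥0∞) ≠ ∞ := by norm_num
  have hap : ∀ k, a k ^ p = ((2 : ℝ≥0∞) ^ k) ^ p * u k := by
    intro k
    simp only [ha]
    rw [ENNReal.mul_rpow_of_nonneg _ _ hp0.le, ← ENNReal.rpow_mul, one_div_mul_cancel hp0.ne',
      ENNReal.rpow_one]
  set Z : ℝ≥0∞ := ⨆ s : ℕ, θ ^ s * a (k + (-(s0 : ℤ) + s * M)) with hZ
  have hterm : ∀ s : ℕ, ((2 : ℝ≥0∞) ^ k) ^ p * volume (apSet ψ f s ((2 : ℝ) ^ ((k - s0) + s * M : ℤ)))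
      ≤ ENNReal.ofReal (5 ^ n) * (((2 : ℝ≥0∞) ^ s0) ^ p) * (2⁻¹ ^ s * Z ^ p) := by
    intro s
    have e1 : k + (-(s0 : ℤ) + s * M) = (k - s0) + s * M := by ring
    set k' : ℤ := (k - s0) + s * M with hk'
    have hz : θ ^ s * a k' ≤ Z := by
      rw [← e1]; exact le_iSup (fun s : ℕ => θ ^ s * a (k + (-(s0 : ℤ) + s * M))) s
    have hz' : 2⁻¹ ^ s * a k' ^ p ≤ Z ^ p := by
      calc 2⁻¹ ^ s * a k' ^ p = (θ ^ s * a k') ^ p := by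
            rw [ENNReal.mul_rpow_of_nonneg (θ ^ s) _ hp0.le, hθdef, ← ENNReal.rpow_natCast,
              ← ENNReal.rpow_natCast, ← ENNReal.rpow_mul, ← ENNReal.rpow_mul]
            congr 2
            field_simp
        _ ≤ _ := ENNReal.rpow_le_rpow hz hp0.le
    have hpow : ((2 : ℝ≥0∞) ^ k) ^ p * ENNReal.ofReal ((2 ^ s) ^ n) ≤
        (((2 : ℝ≥0∞) ^ s0) ^ p) * (2⁻¹ ^ s * 2⁻¹ ^ s) * ((2 : ℝ≥0∞) ^ k') ^ p := by
      have f1 : ENNReal.ofReal ((2 ^ s) ^ n) = (2 : ℝ≥0∞) ^ ((s : ℝ) * n) := by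
        rw [ENNReal.ofReal_pow (by positivity), ENNReal.ofReal_pow (by positivity), ← pow_mul]
        rw [← ENNReal.rpow_natCast]; simp
      have f2 : ∀ m : ℤ, ((2 : ℝ≥0∞) ^ m) ^ p = (2 : ℝ≥0∞) ^ ((m : ℝ) * p) := by
        intro m; rw [← ENNReal.rpow_intCast, ← ENNReal.rpow_mul]
      have f3 : (2⁻¹ : ℝ≥0∞) ^ s = (2 : ℝ≥0∞) ^ (-(s : ℝ)) := by
        rw [ENNReal.rpow_neg, ENNReal.rpow_natCast, ENNReal.inv_pow]
      have f4 : ((2 : ℝ≥0∞) ^ s0) ^ p = (2 : ℝ≥0∞) ^ ((s0 : ℝ) * p) := by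
        rw [← ENNReal.rpow_natCast, ← ENNReal.rpow_mul]
      rw [f1, f2, f2, f3, f4]
      simp only [← ENNReal.rpow_add _ _ h20 h2t]
      apply ENNReal.rpow_le_rpow_of_exponent_le (by norm_num)
      rw [hk']; push_cast
      have : (s : ℝ) * (n + 2) ≤ s * (M * p) := by gcongr
      nlinarith
    calc ((2 : ℝ≥0∞) ^ k) ^ p * volume (apSet ψ f s ((2 : ℝ) ^ k'))
        ≤ ((2 : ℝ≥0∞) ^ k) ^ p * (ENNReal.ofReal ((5 * 2 ^ s) ^ n) * u k') := by
          gcongr; exact aperture hn ψ f s _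
      _ = ENNReal.ofReal (5 ^ n) * (((2 : ℝ≥0∞) ^ k) ^ p * ENNReal.ofReal ((2 ^ s) ^ n)) * u k' := by
          rw [mul_pow, ENNReal.ofReal_mul (by positivity)]; ring
      _ ≤ ENNReal.ofReal (5 ^ n) * ((((2 : ℝ≥0∞) ^ s0) ^ p) * (2⁻¹ ^ s * 2⁻¹ ^ s) *
            ((2 : ℝ≥0∞) ^ k') ^ p) * u k' := by gcongr
      _ = ENNReal.ofReal (5 ^ n) * (((2 : ℝ≥0∞) ^ s0) ^ p) * (2⁻¹ ^ s * (2⁻¹ ^ s * a k' ^ p)) := by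
          rw [hap]; ring
      _ ≤ _ := by gcongr
  have hsum : C * (((2 : ℝ≥0∞) ^ k) ^ p * volume (Vset ψ f M (k - s0))) ≤ (C' * Z) ^ p := by
    have hC'p : C' ^ p = C * ENNReal.ofReal (5 ^ n) * (((2 : ℝ≥0∞) ^ s0) ^ p) * 2 := by
      rw [hC', ← ENNReal.rpow_mul, one_div_mul_cancel hp0.ne', ENNReal.rpow_one]
    rw [ENNReal.mul_rpow_of_nonneg _ _ hp0.le, hC'p]
    calc C * (((2 : ℝ≥0∞) ^ k) ^ p * volume (Vset ψ f M (k - s0)))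
        ≤ C * (((2 : ℝ≥0∞) ^ k) ^ p * ∑' s : ℕ,
            volume (apSet ψ f s ((2 : ℝ) ^ ((k - s0) + s * M : ℤ)))) := by
          gcongr; exact measure_iUnion_le _
      _ = C * ∑' s : ℕ, ((2 : ℝ≥0∞) ^ k) ^ p *
            volume (apSet ψ f s ((2 : ℝ) ^ ((k - s0) + s * M : ℤ))) := by
          rw [ENNReal.tsum_mul_left]
      _ ≤ C * ∑' s : ℕ, ENNReal.ofReal (5 ^ n) * (((2 : ℝ≥0∞) ^ s0) ^ p) * (2⁻¹ ^ s * Z ^ p) := by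
          exact mul_le_mul_right (ENNReal.tsum_le_tsum hterm) C
      _ = _ := by
          rw [ENNReal.tsum_mul_left, ENNReal.tsum_mul_right, ENNReal.tsum_geometric]
          simp only [ENNReal.one_sub_inv_two, inv_inv]
          ring
  calc _ ≤ ((C' * Z) ^ p) ^ (1 / p) := ENNReal.rpow_le_rpow hsum (by positivity)
    _ = _ := by rw [← ENNReal.rpow_mul, mul_one_div_cancel hp0.ne', ENNReal.rpow_one]


/-! ### Smoothness classes via iterated differences -/

def Sm {n : ℕ} : ℕ → ℝ → (Euc n → ℝ) → Prop
  | 0, K, g => ∀ x, |g x| ≤ K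
  | m + 1, K, g => ∀ w, Sm m (K * ‖w‖) (fun x => g x - g (x + w))

theorem Sm.mono {n : ℕ} {m : ℕ} : ∀ {K K' : ℝ} {g : Euc n → ℝ}, Sm m K g → K ≤ K' → Sm m K' g := by
  induction m with
  | zero => intro K K' g h hK x; exact (h x).trans hK
  | succ m ih => intro K K' g h hK w; exact ih (h w) (by gcongr)

theorem Sm.sub {n : ℕ} {m : ℕ} : ∀ {K K' : ℝ} {g h : Euc n → ℝ}, Sm m K g → Sm m K' h →
    Sm m (K + K') (fun x => g x - h x) := by
  induction m with
  | zero => intro K K' g h h1 h2 x; exact (abs_sub _ _).trans (add_le_add (h1 x) (h2 x))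
  | succ m ih =>
    intro K K' g h h1 h2 w
    have := ih (h1 w) (h2 w)
    rw [← add_mul] at this
    convert this using 2
    ring

theorem Sm.translate {n : ℕ} {m : ℕ} : ∀ {K : ℝ} {g : Euc n → ℝ}, Sm m K g → ∀ v,
    Sm m K (fun x => g (x + v)) := by
  induction m with
  | zero => intro K g h v x; exact h _
  | succ m ih =>
    intro K g h v w
    have := ih (h w) v
    convert this using 4
    abel

theorem Sm.average {n : ℕ} {m : ℕ} (ρ : Euc n → ℝ) : ∀ (k : Euc n → ℝ) (G : Euc n → Euc n → ℝ),
    (∀ w, Sm m (k w) (G w)) → Integrable (fun w => |ρ w| * k w) →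
    (∀ x, Integrable (fun w => ρ w * G w x)) →
    Sm m (∫ w, |ρ w| * k w) (fun x => ∫ w, ρ w * G w x) := by
  induction m with
  | zero =>
    intro k G h hk hG x
    calc |∫ w, ρ w * G w x| ≤ ∫ w, |ρ w * G w x| := abs_integral_le_integral_abs
      _ ≤ _ := by
        refine integral_mono (hG x).abs hk fun w => ?_
        simp only [abs_mul]
        exact mul_le_mul_of_nonneg_left (h w x) (abs_nonneg _)
  | succ m ih =>
    intro k G h hk hG v
    have := ih (fun w => k w * ‖v‖) (fun w x => G w x - G w (x + v)) (fun w => h w v)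
      (by simpa only [mul_assoc] using hk.mul_const ‖v‖)
      (fun x => by
        have h5 : Integrable (fun w => ρ w * G w x - ρ w * G w (x + v)) := (hG x).sub (hG (x + v))
        simpa only [mul_sub] using h5)
    convert this using 1
    · simp only [← mul_assoc]; rw [integral_mul_const]
    · ext x
      rw [← integral_sub (hG x) (hG (x + v))]
      simp only [mul_sub]

/-- derivative bounds imply difference bounds -/
theorem Sm_of_deriv {n : ℕ} (m : ℕ) : ∀ (K : ℝ) (g : Euc n → ℝ), ContDiff ℝ (⊤ : ℕ∞) g →
    (∀ x, ‖iteratedFDeriv ℝ m g x‖ ≤ K) → Sm m K g := by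
  induction m with
  | zero => intro K g hg h x; simpa using h x
  | succ m ih =>
    intro K g hg h w
    have hcd : ContDiff ℝ (⊤ : ℕ∞) (fun x => g (x + w)) := hg.comp (contDiff_id.add contDiff_const)
    apply ih _ _ (hg.sub hcd)
    intro x
    have e : iteratedFDeriv ℝ m (fun x => g x - g (x + w)) x =
        iteratedFDeriv ℝ m g x - iteratedFDeriv ℝ m g (x + w) := by
      have := iteratedFDeriv_sub_apply (𝕜 := ℝ) (i := m) (x := x) (f := g) (g := fun x => g (x + w))
        (hg.of_le (by exact_mod_cast le_top)).contDiffAt (hcd.of_le (by exact_mod_cast le_top)).contDiffAt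
      rw [iteratedFDeriv_comp_add_right] at this
      exact this
    rw [e]
    have hd : Differentiable ℝ (iteratedFDeriv ℝ m g) :=
      hg.differentiable_iteratedFDeriv (by exact_mod_cast WithTop.coe_lt_top _)
    have := Convex.norm_image_sub_le_of_norm_fderiv_le (𝕜 := ℝ) (f := iteratedFDeriv ℝ m g) (C := K)
      (s := univ) (x := x + w) (y := x) (fun z _ => hd z)
      (fun z _ => by rw [norm_fderiv_iteratedFDeriv]; exact h z) convex_univ (mem_univ _) (mem_univ _)
    simpa using this

/-! ### The averaging operators -/

def dil {n : ℕ} (ψ : Euc n → ℝ) (t : ℝ) (w : Euc n) : ℝ := (t ^ n)⁻¹ * ψ (t⁻¹ • w)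

def Et {n : ℕ} (ψ : Euc n → ℝ) (t : ℝ) (g : Euc n → ℝ) (z : Euc n) : ℝ :=
  ∫ w, dil ψ t w * g (z + w)

def At {n : ℕ} (ψ : Euc n → ℝ) (t : ℝ) (g : Euc n → ℝ) (z : Euc n) : ℝ :=
  ∫ w, dil ψ t w * (g z - g (z + w))

theorem integral_dil {n : ℕ} (F : Euc n → ℝ) {t : ℝ} (ht : 0 < t) :
    ∫ w : Euc n, (t ^ n)⁻¹ * F (t⁻¹ • w) = ∫ u, F u := by
  rw [integral_const_mul, Measure.integral_comp_inv_smul_of_nonneg volume F ht.le]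
  simp only [finrank_euclideanSpace, Fintype.card_fin, smul_eq_mul]
  rw [inv_mul_cancel_left₀ (by positivity)]

theorem dil_cont {n : ℕ} {ψ : Euc n → ℝ} (hψ : Continuous ψ) (t : ℝ) : Continuous (dil ψ t) := by
  unfold dil; fun_prop

theorem dil_integrable {n : ℕ} {ψ : Euc n → ℝ} (hψ : Integrable ψ) {t : ℝ} (ht : 0 < t) :
    Integrable (dil ψ t) := by
  unfold dil
  exact (hψ.comp_smul (inv_ne_zero ht.ne')).const_mul _

theorem dil_zero {n : ℕ} {ψ : Euc n → ℝ} {R : ℝ} (hR : ∀ x, R < ‖x‖ → ψ x = 0) {t : ℝ} (ht : 0 < t)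
    {w : Euc n} (hw : t * R < ‖w‖) : dil ψ t w = 0 := by
  unfold dil
  rw [hR, mul_zero]
  rw [norm_smul, norm_inv, Real.norm_of_nonneg ht.le]
  rw [inv_mul_eq_div, lt_div_iff₀ ht]; linarith

/-- class of test functions used in the iteration -/
structure CB {n : ℕ} (x0 : Euc n) (a : ℝ) (g : Euc n → ℝ) : Prop where
  cont : Continuous g
  supp : ∀ x, a < dist x x0 → g x = 0

theorem CB.hcs {n : ℕ} {x0 : Euc n} {a : ℝ} {g : Euc n → ℝ} (h : CB x0 a g) : HasCompactSupport g :=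
  HasCompactSupport.intro (isCompact_closedBall x0 a) (fun x hx => h.supp x (by simpa using hx))

theorem CB.bdd {n : ℕ} {x0 : Euc n} {a : ℝ} {g : Euc n → ℝ} (h : CB x0 a g) :
    ∃ C, ∀ x, |g x| ≤ C := by
  obtain ⟨C, hC⟩ := h.hcs.exists_bound_of_continuous h.cont
  exact ⟨C, fun x => by simpa using hC x⟩

theorem dil_mul_integrable {n : ℕ} {ψ : Euc n → ℝ} (hψ : Continuous ψ) (hψi : Integrable ψ)
    {t : ℝ} (ht : 0 < t) {g : Euc n → ℝ} (hg : Continuous g) {C : ℝ}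
    (hC : ∀ x, |g x| ≤ C) : Integrable (fun w => dil ψ t w * g w) := by
  refine (dil_integrable hψi ht).mul_bdd (c := C) hg.aestronglyMeasurable ?_
  exact Filter.Eventually.of_forall fun x => by simpa using hC x

theorem At_eq {n : ℕ} {ψ : Euc n → ℝ} (hψ : Continuous ψ) (hψi : Integrable ψ) (h1 : ∫ x, ψ x = 1)
    {t : ℝ} (ht : 0 < t) {g : Euc n → ℝ} (hg : Continuous g) {C : ℝ}
    (hC : ∀ x, |g x| ≤ C) (z : Euc n) : At ψ t g z = g z - Et ψ t g z := by
  unfold At Et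
  simp only [mul_sub]
  rw [integral_sub ((dil_integrable hψi ht).mul_const _)
    (dil_mul_integrable hψ hψi ht (g := fun w => g (z + w)) (by fun_prop) (fun x => hC _))]
  rw [integral_mul_const]
  have : ∫ w, dil ψ t w = 1 := by unfold dil; rw [integral_dil _ ht, h1]
  rw [this, one_mul]

theorem Et_cont {n : ℕ} {ψ : Euc n → ℝ} (hψ : Continuous ψ) (hψi : Integrable ψ)
    {t : ℝ} (ht : 0 < t) {g : Euc n → ℝ} (hg : Continuous g) {C : ℝ}
    (hC : ∀ x, |g x| ≤ C) : Continuous (Et ψ t g) := by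
  unfold Et
  refine continuous_of_dominated (bound := fun w => |dil ψ t w| * C) ?_ ?_ ?_ ?_
  · intro z; exact ((dil_cont hψ t).mul (by fun_prop)).aestronglyMeasurable
  · intro z; refine Filter.Eventually.of_forall fun w => ?_
    rw [norm_mul, Real.norm_eq_abs, Real.norm_eq_abs]
    exact mul_le_mul_of_nonneg_left (hC _) (abs_nonneg _)
  · exact (dil_integrable hψi ht).abs.mul_const _
  · refine Filter.Eventually.of_forall fun w => ?_
    fun_prop

theorem At_CB {n : ℕ} {ψ : Euc n → ℝ} (hψ : Continuous ψ) (hψi : Integrable ψ) (h1 : ∫ x, ψ x = 1)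
    {R : ℝ} (hR : ∀ x, R < ‖x‖ → ψ x = 0)
    {t : ℝ} (ht : 0 < t) {x0 : Euc n} {a : ℝ} {g : Euc n → ℝ} (hg : CB x0 a g)
    (hR0 : 0 ≤ R) : CB x0 (a + t * R) (At ψ t g) := by
  obtain ⟨C, hC⟩ := hg.bdd
  constructor
  · have : At ψ t g = fun z => g z - Et ψ t g z := funext (At_eq hψ hψi h1 ht hg.cont hC)
    rw [this]
    exact hg.cont.sub (Et_cont hψ hψi ht hg.cont hC)
  · intro x hx
    unfold At
    have : ∀ w, dil ψ t w * (g x - g (x + w)) = 0 := by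
      intro w
      by_cases hw : t * R < ‖w‖
      · rw [dil_zero hR ht hw, zero_mul]
      · push Not at hw
        have hgx : g x = 0 := hg.supp x (by nlinarith [mul_nonneg ht.le hR0])
        have : g (x + w) = 0 := by
          apply hg.supp
          have h3 := dist_triangle x (x + w) x0
          have h4 : dist x (x + w) = ‖w‖ := by simp [dist_eq_norm]
          linarith
        rw [hgx, this]; simp
    simp [this]

theorem At_Sm {n : ℕ} {ψ : Euc n → ℝ} (hψ : Continuous ψ) (hψi : Integrable ψ)
    {t : ℝ} (ht : 0 < t) {g : Euc n → ℝ} (hg : Continuous g) {C : ℝ}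
    (hC : ∀ x, |g x| ≤ C) {m : ℕ} {K : ℝ} (h : Sm m K g) :
    Sm m ((2 * ∫ u, |ψ u|) * K) (At ψ t g) := by
  have := Sm.average (m := m) (dil ψ t) (fun _ => K + K) (fun w x => g x - g (x + w))
    (fun w => h.sub (h.translate w)) ((dil_integrable hψi ht).abs.mul_const _)
    (fun x => dil_mul_integrable hψ hψi ht (g := fun w => g x - g (x + w)) (by fun_prop)
      (C := C + C) (fun w => (abs_sub _ _).trans (add_le_add (hC _) (hC _))))
  refine Sm.mono this (le_of_eq ?_)
  rw [integral_mul_const]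
  have : ∫ w, |dil ψ t w| = ∫ u, |ψ u| := by
    rw [← integral_dil (fun u => |ψ u|) ht]
    congr 1; ext w; unfold dil
    rw [abs_mul, abs_of_pos (a := (t ^ n)⁻¹) (by positivity)]
  rw [this]; ring

theorem At_Sm_gain {n : ℕ} {ψ : Euc n → ℝ} (hψ : Continuous ψ) (hψi : Integrable ψ)
    {R : ℝ} (hR : ∀ x, R < ‖x‖ → ψ x = 0)
    {t : ℝ} (ht : 0 < t) {g : Euc n → ℝ} (hg : Continuous g) {C : ℝ}
    (hC : ∀ x, |g x| ≤ C) {m : ℕ} {K : ℝ} (h : Sm (m + 1) K g) :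
    Sm m (((∫ u, |ψ u| * ‖u‖) * t) * K) (At ψ t g) := by
  have hi : Integrable (fun u => |ψ u| * ‖u‖) := by
    apply Continuous.integrable_of_hasCompactSupport (by fun_prop)
    refine HasCompactSupport.intro (isCompact_closedBall 0 R) (fun x hx => ?_)
    rw [hR x (by simpa using hx)]; simp
  have e : ∀ w, |dil ψ t w| * (K * ‖w‖) = (K * t) * ((t ^ n)⁻¹ * (|ψ (t⁻¹ • w)| * ‖t⁻¹ • w‖)) := by
    intro w
    unfold dil
    rw [abs_mul, abs_of_pos (a := (t ^ n)⁻¹) (by positivity), norm_smul, norm_inv,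
      Real.norm_of_nonneg ht.le]
    field_simp
  have hi2 : Integrable (fun w => |dil ψ t w| * (K * ‖w‖)) := by
    simp only [e]
    exact ((hi.comp_smul (inv_ne_zero ht.ne')).const_mul _).const_mul _
  have := Sm.average (m := m) (dil ψ t) (fun w => K * ‖w‖) (fun w x => g x - g (x + w))
    (fun w => h w) hi2
    (fun x => dil_mul_integrable hψ hψi ht (g := fun w => g x - g (x + w)) (by fun_prop)
      (C := C + C) (fun w => (abs_sub _ _).trans (add_le_add (hC _) (hC _))))
  refine Sm.mono this (le_of_eq ?_)
  simp only [e]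
  rw [integral_const_mul, integral_dil (fun u => |ψ u| * ‖u‖) ht]
  ring

/-- duality between `Et` and `convAt` -/
theorem Et_dual {n : ℕ} {ψ : Euc n → ℝ} (hψ : Continuous ψ) (hψi : Integrable ψ)
    {t : ℝ} (ht : 0 < t) {R : ℝ} (hR : ∀ x, R < ‖x‖ → ψ x = 0)
    {f : Euc n → ℝ} (hf : LocallyIntegrable f volume) {x0 : Euc n} {a : ℝ} {g : Euc n → ℝ}
    (hg : CB x0 a g) : ∫ z, f z * Et ψ t g z = ∫ y, g y * convAt ψ f t y := by
  obtain ⟨C, hC⟩ := hg.bdd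
  have hcsψ : HasCompactSupport ψ := HasCompactSupport.intro (isCompact_closedBall 0 R)
    (fun x hx => hR x (by simpa using hx))
  obtain ⟨P, hP⟩ := hcsψ.exists_bound_of_continuous hψ
  set b := a + t * R
  set B := Metric.closedBall x0 b
  have hfB : Integrable (B.indicator f) :=
    (hf.integrableOn_isCompact (isCompact_closedBall x0 b)).integrable_indicator measurableSet_closedBall
  have hgi : Integrable g := hg.cont.integrable_of_hasCompactSupport hg.hcs
  have hprod : Integrable (fun z : Euc n × Euc n => f z.1 * (dil ψ t (z.2 - z.1) * g z.2))
      (volume.prod volume) := by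
    have h0 : Integrable (fun z : Euc n × Euc n => B.indicator f z.1 * g z.2)
        (volume.prod volume) := hfB.mul_prod hgi
    have hc : Continuous (fun z : Euc n × Euc n => dil ψ t (z.2 - z.1)) :=
      (dil_cont hψ t).comp (continuous_snd.sub continuous_fst)
    have h2 := h0.mul_bdd (c := (t ^ n)⁻¹ * P) (g := fun z : Euc n × Euc n => dil ψ t (z.2 - z.1))
      hc.aestronglyMeasurable
      (Filter.Eventually.of_forall fun z => by
        unfold dil
        rw [norm_mul, Real.norm_of_nonneg (r := (t ^ n)⁻¹) (by positivity)]
        gcongr; exact hP _)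
    refine h2.congr (Filter.Eventually.of_forall fun z => ?_)
    simp only
    by_cases hz : z.1 ∈ B
    · rw [indicator_of_mem hz]; ring
    · rw [indicator_of_notMem hz]
      by_cases hw : t * R < ‖z.2 - z.1‖
      · rw [dil_zero hR ht hw]; ring
      · have : g z.2 = 0 := by
          apply hg.supp
          push Not at hw
          have h3 := dist_triangle z.1 z.2 x0
          have h4 : dist z.1 z.2 = ‖z.2 - z.1‖ := by rw [dist_comm, dist_eq_norm]
          have h5 : b < dist z.1 x0 := by simpa [B] using hz
          linarith
        rw [this]; ring
  calc ∫ z, f z * Et ψ t g z = ∫ z, ∫ y, f z * (dil ψ t (y - z) * g y) := by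
        congr 1; ext z
        rw [integral_const_mul]
        congr 1
        unfold Et
        rw [← integral_sub_right_eq_self _ z]
        congr 1; ext w; congr 2; abel
    _ = ∫ y, ∫ z, f z * (dil ψ t (y - z) * g y) := integral_integral_swap hprod
    _ = _ := by
        congr 1; ext y
        unfold convAt
        rw [← integral_const_mul]
        congr 1; ext z
        unfold dil; ring



/-- the iterates -/
def phiIt {n : ℕ} (ψ : Euc n → ℝ) (r : ℝ) (φ : Euc n → ℝ) : ℕ → Euc n → ℝ
  | 0 => φ
  | s + 1 => At ψ (r * (1 / 2) ^ s) (phiIt ψ r φ s)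

theorem exists_grand {n : ℕ} (ψ : Euc n → ℝ) (hψ : Continuous ψ) (hψc : HasCompactSupport ψ)
    (h1 : ∫ x, ψ x = 1) (M : ℕ) :
    ∃ L : ℕ, ∀ a : ℝ, 0 ≤ a → ∃ C : ℝ, 0 ≤ C ∧ ∀ (f : Euc n → ℝ), LocallyIntegrable f volume →
      ∀ (x0 : Euc n) (r V K : ℝ), 0 < r → 0 ≤ V → 0 ≤ K →
      (∀ (s : ℕ) (y : Euc n) (t : ℝ), 0 < t → dist x0 y < 2 ^ s * t →
        |convAt ψ f t y| ≤ V * (2 ^ M) ^ s) →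
      ∀ φ : Euc n → ℝ, CB x0 (a * r) φ → Sm 0 K φ → Sm L (K * (r⁻¹) ^ L) φ →
        |∫ z, f z * φ z| ≤ C * K * V * r ^ n := by
  have hψi : Integrable ψ := hψ.integrable_of_hasCompactSupport hψc
  obtain ⟨R, hR0, hR⟩ : ∃ R : ℝ, 0 ≤ R ∧ ∀ x, R < ‖x‖ → ψ x = 0 := by
    obtain ⟨R, hR⟩ := hψc.isCompact.isBounded.subset_closedBall (0 : Euc n)
    refine ⟨max R 0, le_max_right _ _, fun x hx => ?_⟩
    by_contra hne
    have := hR (subset_tsupport ψ hne)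
    simp only [Metric.mem_closedBall, dist_zero_right] at this
    exact absurd (lt_of_le_of_lt (le_max_left _ _) hx) (not_lt.mpr this)
  set B : ℝ := 1 + 2 * ∫ u, |ψ u| with hB
  have hint0 : 0 ≤ ∫ u, |ψ u| := integral_nonneg fun _ => abs_nonneg _
  have hB1 : 1 ≤ B := by linarith
  set C1 : ℝ := 1 + ∫ u, |ψ u| * ‖u‖ with hC1
  have hint1 : 0 ≤ ∫ u, |ψ u| * ‖u‖ := integral_nonneg fun _ => by positivity
  have hC11 : 1 ≤ C1 := by linarith
  obtain ⟨L, hL⟩ : ∃ L : ℕ, 2 * B * 2 ^ M ≤ (2 : ℝ) ^ L := by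
    obtain ⟨L, hL⟩ := pow_unbounded_of_one_lt (2 * B * 2 ^ M) (one_lt_two (α := ℝ))
    exact ⟨L, hL.le⟩
  refine ⟨L, fun a ha => ?_⟩
  set a' := a + 2 * R with ha'
  have ha'0 : 0 ≤ a' := by positivity
  obtain ⟨c, hc⟩ : ∃ c : ℕ, a' < (2 : ℝ) ^ c := pow_unbounded_of_one_lt _ one_lt_two
  set D : ℝ := 2 ^ (L * L) * C1 ^ L with hD
  set ω := (volume (Metric.ball (0 : Euc n) 1)).toReal with hω
  refine ⟨2 * (D * (2 ^ M) ^ c * (a' ^ n * ω)), by positivity, ?_⟩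
  intro f hf x0 r V K hr hV hK hconv φ hφ hφ0 hφL
  set φs := phiIt ψ r φ with hφs
  have ht : ∀ s : ℕ, 0 < r * (1 / 2 : ℝ) ^ s := fun s => by positivity
  -- supports
  have hCB' : ∀ s, CB x0 (a * r + r * R * (2 - 2 * (1 / 2) ^ s)) (φs s) := by
    intro s
    induction s with
    | zero => simpa [hφs, phiIt] using hφ
    | succ s ih =>
      have := At_CB hψ hψi h1 hR (ht s) ih hR0
      have e : a * r + r * R * (2 - 2 * (1 / 2) ^ s) + r * (1 / 2) ^ s * R
        = a * r + r * R * (2 - 2 * (1 / 2) ^ (s + 1)) := by rw [pow_succ]; ring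
      rw [e] at this
      exact this
  have hCB : ∀ s, CB x0 (a' * r) (φs s) := by
    intro s
    refine ⟨(hCB' s).cont, fun x hx => (hCB' s).supp x (lt_of_le_of_lt ?_ hx)⟩
    have : 0 ≤ r * R * (1 / 2) ^ s := by positivity
    rw [ha']; nlinarith
  -- no gain
  have hng : ∀ (m : ℕ) (K' : ℝ), 0 ≤ K' → Sm m K' φ → ∀ s, Sm m (B ^ s * K') (φs s) := by
    intro m K' hK' h s
    induction s with
    | zero => simpa [hφs, phiIt] using h
    | succ s ih =>
      obtain ⟨C, hC⟩ := (hCB s).bdd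
      refine (At_Sm hψ hψi (ht s) (hCB s).cont hC ih).mono ?_
      rw [pow_succ]
      have : 0 ≤ B ^ s * K' := by positivity
      nlinarith
  -- gain
  have hgain : ∀ (s i : ℕ), i ≤ L → Sm (L - i) ((C1 * (r * (1 / 2) ^ s)) ^ i *
      (B ^ s * (K * (r⁻¹) ^ L))) (φs (s + i)) := by
    intro s i
    induction i with
    | zero => intro _; simpa using hng L _ (by positivity) hφL s
    | succ i ih =>
      intro hi
      have h2 := ih (by omega)
      obtain ⟨C, hC⟩ := (hCB (s + i)).bdd
      have e : L - i = (L - (i + 1)) + 1 := by omega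
      rw [e] at h2
      have h3 := At_Sm_gain hψ hψi hR (ht (s + i)) (hCB (s + i)).cont hC h2
      refine Sm.mono (K' := _) h3 ?_
      rw [pow_succ (C1 * (r * (1 / 2) ^ s)) i]
      have : (∫ u, |ψ u| * ‖u‖) * (r * (1 / 2) ^ (s + i)) ≤ C1 * (r * (1 / 2) ^ s) := by
        have h5 : (1 / 2 : ℝ) ^ (s + i) ≤ (1 / 2) ^ s :=
          pow_le_pow_of_le_one (by norm_num) (by norm_num) (by omega)
        have h6 : (∫ u, |ψ u| * ‖u‖) ≤ C1 := by linarith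
        gcongr
      calc (∫ u, |ψ u| * ‖u‖) * (r * (1 / 2) ^ (s + i)) *
            ((C1 * (r * (1 / 2) ^ s)) ^ i * (B ^ s * (K * r⁻¹ ^ L)))
          ≤ (C1 * (r * (1 / 2) ^ s)) *
            ((C1 * (r * (1 / 2) ^ s)) ^ i * (B ^ s * (K * r⁻¹ ^ L))) := by gcongr
        _ = _ := by ring
  have hsup : ∀ s x, |φs s x| ≤ K * D * (B * (1 / 2) ^ L) ^ s := by
    intro s x
    by_cases hs : s ≤ L
    · have h2 := hng 0 K hK hφ0 s x
      refine h2.trans ?_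
      have h3 : (1 : ℝ) ≤ 2 ^ (L * L) * ((1 / 2) ^ L) ^ s := by
        rw [← pow_mul, one_div, inv_pow, ← div_eq_mul_inv, one_le_div (by positivity)]
        exact pow_le_pow_right₀ (by norm_num) (Nat.mul_le_mul_left _ hs)
      have h4 : (1 : ℝ) ≤ C1 ^ L := one_le_pow₀ hC11
      calc B ^ s * K = B ^ s * K * (1 * 1) := by ring
        _ ≤ B ^ s * K * ((2 ^ (L * L) * ((1 / 2) ^ L) ^ s) * C1 ^ L) := by gcongr
        _ = _ := by rw [hD, mul_pow]; ring
    · obtain ⟨s', rfl⟩ : ∃ s', s = s' + L := ⟨s - L, by omega⟩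
      have h2 := hgain s' L le_rfl
      rw [Nat.sub_self] at h2
      refine (h2 x).trans ?_
      have e : (C1 * (r * (1 / 2) ^ s')) ^ L * (B ^ s' * (K * r⁻¹ ^ L)) =
          K * C1 ^ L * B ^ s' * ((1 / 2) ^ s') ^ L * 1 := by
        rw [mul_pow, mul_pow, inv_pow]
        field_simp
      have h5 : (1 : ℝ) ≤ B ^ L := one_le_pow₀ hB1
      have e2 : K * D * (B * (1 / 2) ^ L) ^ (s' + L) =
          K * C1 ^ L * B ^ s' * ((1 / 2) ^ s') ^ L * B ^ L := by
        rw [hD, pow_add, mul_pow, mul_pow, ← pow_mul, ← pow_mul, ← pow_mul, mul_comm L s']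
        have : (2 : ℝ) ^ (L * L) * (1 / 2) ^ (L * L) = 1 := by rw [← mul_pow]; norm_num
        calc _ = K * C1 ^ L * B ^ s' * (1 / 2) ^ (s' * L) * B ^ L *
              ((2 : ℝ) ^ (L * L) * (1 / 2) ^ (L * L)) := by ring
          _ = _ := by rw [this, mul_one]
      rw [e, e2]
      gcongr
  -- integrability of f against CB
  have hfI : ∀ g : Euc n → ℝ, CB x0 (a' * r) g → Integrable (fun z => f z * g z) := by
    intro g hg
    have := hf.integrable_smul_right_of_hasCompactSupport hg.cont hg.hcs
    simpa [smul_eq_mul] using this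
  -- decomposition
  have hdec : ∀ S : ℕ, ∫ z, f z * φ z = (∑ s ∈ Finset.range S, ∫ y, φs s y * convAt ψ f (r * (1 / 2) ^ s) y)
      + ∫ z, f z * φs S z := by
    intro S
    induction S with
    | zero => simp [hφs, phiIt]
    | succ S ih =>
      rw [ih, Finset.sum_range_succ, add_assoc]
      congr 1
      obtain ⟨C, hC⟩ := (hCB S).bdd
      rw [← Et_dual hψ hψi (ht S) hR hf (hCB S)]
      have e : ∀ z, f z * φs (S + 1) z = f z * φs S z - f z * Et ψ (r * (1 / 2) ^ S) (φs S) z := by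
        intro z
        have : φs (S + 1) z = φs S z - Et ψ (r * (1 / 2) ^ S) (φs S) z :=
          At_eq hψ hψi h1 (ht S) (hCB S).cont hC z
        rw [this]; ring
      have hi := hfI _ (hCB S)
      have hi2 : Integrable (fun z => f z * Et ψ (r * (1 / 2) ^ S) (φs S) z) := by
        have := hi.sub (hfI _ (hCB (S + 1)))
        refine this.congr (Filter.Eventually.of_forall fun z => ?_)
        simp only [Pi.sub_apply]; rw [e]; ring
      simp only [e]
      rw [integral_sub hi hi2]; ring
  -- bounds on terms
  have hvol : volume.real (Metric.closedBall x0 (a' * r)) = a' ^ n * ω * r ^ n := by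
    rw [measureReal_def, vol_cball _ (by positivity), ENNReal.toReal_mul, ENNReal.toReal_ofReal (by positivity),
      mul_pow]; ring
  have hterm : ∀ s : ℕ, |∫ y, φs s y * convAt ψ f (r * (1 / 2) ^ s) y| ≤
      (D * (2 ^ M) ^ c * (a' ^ n * ω)) * K * V * r ^ n * (1 / 2) ^ s := by
    intro s
    have hzero : ∀ y, y ∉ Metric.closedBall x0 (a' * r) → φs s y * convAt ψ f (r * (1 / 2) ^ s) y = 0 := by
      intro y hy
      rw [(hCB s).supp y (by simpa using hy), zero_mul]
    rw [← setIntegral_eq_integral_of_forall_compl_eq_zero hzero]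
    have hb : ∀ y ∈ Metric.closedBall x0 (a' * r), ‖φs s y * convAt ψ f (r * (1 / 2) ^ s) y‖ ≤
        K * D * (B * (1 / 2) ^ L) ^ s * (V * (2 ^ M) ^ (c + s)) := by
      intro y hy
      rw [norm_mul, Real.norm_eq_abs, Real.norm_eq_abs]
      gcongr
      · exact hsup s y
      · apply hconv (c + s) y _ (ht s)
        rw [Metric.mem_closedBall, dist_comm] at hy
        refine lt_of_le_of_lt hy ?_
        rw [pow_add]
        have : (2 : ℝ) ^ s * (1 / 2) ^ s = 1 := by rw [← mul_pow]; norm_num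
        calc a' * r < 2 ^ c * r := by gcongr
          _ = 2 ^ c * r * ((2 : ℝ) ^ s * (1 / 2) ^ s) := by rw [this, mul_one]
          _ = _ := by ring
    have := norm_setIntegral_le_of_norm_le_const (μ := volume) (measure_closedBall_lt_top) hb
    rw [Real.norm_eq_abs, hvol] at this
    refine this.trans ?_
    have hgeo : (B * (1 / 2) ^ L) * 2 ^ M ≤ 1 / 2 := by
      rw [one_div, inv_pow]
      have h2L : (0 : ℝ) < 2 ^ L := by positivity
      rw [← div_eq_mul_inv, div_mul_eq_mul_div, div_le_iff₀ h2L]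
      linarith
    have hgeo2 : (B * (1 / 2) ^ L) ^ s * (2 ^ M) ^ s ≤ (1 / 2) ^ s := by
      rw [← mul_pow]
      exact pow_le_pow_left₀ (by positivity) hgeo s
    calc K * D * (B * (1 / 2) ^ L) ^ s * (V * (2 ^ M) ^ (c + s)) * (a' ^ n * ω * r ^ n)
        = (D * (2 ^ M) ^ c * (a' ^ n * ω)) * K * V * r ^ n * ((B * (1 / 2) ^ L) ^ s * (2 ^ M) ^ s) := by
          rw [pow_add]; ring
      _ ≤ _ := by gcongr
  -- remainder
  have hrem : Filter.Tendsto (fun S => ∫ z, f z * φs S z) Filter.atTop (nhds 0) := by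
    set Q := ∫ z in Metric.closedBall x0 (a' * r), |f z| with hQ
    have hb : ∀ S, ‖∫ z, f z * φs S z‖ ≤ (K * D * Q) * (1 / 2) ^ S := by
      intro S
      have hzero : ∀ y, y ∉ Metric.closedBall x0 (a' * r) → f y * φs S y = 0 := by
        intro y hy
        rw [(hCB S).supp y (by simpa using hy), mul_zero]
      rw [← setIntegral_eq_integral_of_forall_compl_eq_zero hzero]
      have hfi := (hf.integrableOn_isCompact (isCompact_closedBall x0 (a' * r)))
      have : (B * (1 / 2) ^ L) ≤ 1 / 2 := by
        rw [one_div, inv_pow]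
        have h2L : (0 : ℝ) < 2 ^ L := by positivity
        rw [← div_eq_mul_inv, div_le_iff₀ h2L]
        have : (1 : ℝ) ≤ 2 ^ M := one_le_pow₀ (by norm_num)
        nlinarith
      calc ‖∫ z in Metric.closedBall x0 (a' * r), f z * φs S z‖
          ≤ ∫ z in Metric.closedBall x0 (a' * r), |f z| * (K * D * (1 / 2) ^ S) := by
            refine norm_integral_le_of_norm_le (hfi.abs.mul_const _) (Filter.Eventually.of_forall fun z => ?_)
            rw [norm_mul, Real.norm_eq_abs, Real.norm_eq_abs]
            gcongr
            refine (hsup S z).trans ?_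
            gcongr
        _ = _ := by rw [integral_mul_const]; ring
    refine squeeze_zero_norm hb ?_
    have := (tendsto_pow_atTop_nhds_zero_of_lt_one (r := (1 / 2 : ℝ)) (by norm_num) (by norm_num)).const_mul (K * D * Q)
    simpa using this
  have hfin : ∀ S : ℕ, |∫ z, f z * φ z| ≤
      2 * (D * (2 ^ M) ^ c * (a' ^ n * ω)) * K * V * r ^ n + |∫ z, f z * φs S z| := by
    intro S
    rw [hdec S]
    refine (abs_add_le _ _).trans ?_
    gcongr
    refine (Finset.abs_sum_le_sum_abs _ _).trans ?_
    refine (Finset.sum_le_sum fun s _ => hterm s).trans ?_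
    rw [← Finset.mul_sum]
    have : ∑ s ∈ Finset.range S, (1 / 2 : ℝ) ^ s ≤ 2 := by
      have := Summable.sum_le_tsum (Finset.range S) (fun s _ => by positivity) (summable_geometric_two)
      rwa [tsum_geometric_two] at this
    calc _ ≤ (D * (2 ^ M) ^ c * (a' ^ n * ω)) * K * V * r ^ n * 2 := by gcongr
      _ = _ := by ring
  have hlim := (hrem.abs.const_add (2 * (D * (2 ^ M) ^ c * (a' ^ n * ω)) * K * V * r ^ n))
  simp only [abs_zero, add_zero] at hlim
  exact ge_of_tendsto' hlim hfin


/-! ### Normalised bump classes -/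

structure Bd {n : ℕ} (L : ℕ) (K r : ℝ) (φ : Euc n → ℝ) : Prop where
  cd : ContDiff ℝ (⊤ : ℕ∞) φ
  bd : ∀ j ≤ L, ∀ x, ‖iteratedFDeriv ℝ j φ x‖ ≤ K * (r⁻¹) ^ j

theorem Bd.mono {n L : ℕ} {K K' r : ℝ} (hr : 0 < r) {φ : Euc n → ℝ} (h : Bd L K r φ) (hK : K ≤ K') :
    Bd L K' r φ :=
  ⟨h.cd, fun j hj x => (h.bd j hj x).trans (by gcongr)⟩

theorem Bd.K_nonneg {n L : ℕ} {K r : ℝ} {φ : Euc n → ℝ} (h : Bd L K r φ) : 0 ≤ K := by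
  have := (norm_nonneg _).trans (h.bd 0 (Nat.zero_le _) 0)
  simpa using this

theorem Bd.mul {n L : ℕ} {K K' r : ℝ} (hr : 0 < r) {φ χ : Euc n → ℝ} (h : Bd L K r φ)
    (h' : Bd L K' r χ) : Bd L (2 ^ L * K * K') r (fun x => φ x * χ x) := by
  have hK := h.K_nonneg
  have hK' := h'.K_nonneg
  refine ⟨h.cd.mul h'.cd, fun j hj x => ?_⟩
  have := norm_iteratedFDeriv_mul_le (𝕜 := ℝ) h.cd h'.cd x (n := j) (by exact_mod_cast le_top)
  refine this.trans ?_
  calc ∑ i ∈ Finset.range (j + 1), (j.choose i : ℝ) * ‖iteratedFDeriv ℝ i φ x‖ *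
        ‖iteratedFDeriv ℝ (j - i) χ x‖
      ≤ ∑ i ∈ Finset.range (j + 1), (j.choose i : ℝ) * (K * K' * (r⁻¹) ^ j) := by
        refine Finset.sum_le_sum fun i hi => ?_
        have hi' : i ≤ j := by simpa [Nat.lt_succ_iff] using hi
        have e : (r⁻¹) ^ j = (r⁻¹) ^ i * (r⁻¹) ^ (j - i) := by rw [← pow_add]; congr 1; omega
        calc (j.choose i : ℝ) * ‖iteratedFDeriv ℝ i φ x‖ * ‖iteratedFDeriv ℝ (j - i) χ x‖
            ≤ (j.choose i : ℝ) * (K * (r⁻¹) ^ i) * (K' * (r⁻¹) ^ (j - i)) := by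
              gcongr
              · exact h.bd i (by omega) x
              · exact h'.bd (j - i) (by omega) x
          _ = _ := by rw [e]; ring
    _ = 2 ^ j * (K * K' * (r⁻¹) ^ j) := by
        rw [← Finset.sum_mul]; congr 1
        exact_mod_cast Nat.sum_range_choose j
    _ ≤ 2 ^ L * (K * K' * (r⁻¹) ^ j) := by
        gcongr
        norm_num
    _ = _ := by ring

theorem Bd.const {n L : ℕ} (a r : ℝ) (hr : 0 < r) : Bd L |a| r (fun _ : Euc n => a) := by
  refine ⟨contDiff_const, fun j hj x => ?_⟩
  rcases j with _ | j
  · simp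
  · rw [iteratedFDeriv_const_of_ne (by omega)]
    simp only [Pi.zero_apply, norm_zero]; positivity

theorem Bd.sub {n L : ℕ} {K K' r : ℝ} {φ χ : Euc n → ℝ} (h : Bd L K r φ)
    (h' : Bd L K' r χ) : Bd L (K + K') r (fun x => φ x - χ x) := by
  refine ⟨h.cd.sub h'.cd, fun j hj x => ?_⟩
  have := iteratedFDeriv_sub_apply (𝕜 := ℝ) (i := j) (x := x) (f := φ) (g := χ)
        (h.cd.of_le (by exact_mod_cast le_top)).contDiffAt (h'.cd.of_le (by exact_mod_cast le_top)).contDiffAt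
  have e : iteratedFDeriv ℝ j (fun x => φ x - χ x) x = iteratedFDeriv ℝ j φ x - iteratedFDeriv ℝ j χ x := this
  rw [e, add_mul]
  exact (norm_sub_le _ _).trans (add_le_add (h.bd j hj x) (h'.bd j hj x))

theorem Bd.radius {n L : ℕ} {K r r' : ℝ} (hr : 0 < r) (hr' : 0 < r') (hrr : r' ≤ 2 * r) {φ : Euc n → ℝ}
    (h : Bd L K r φ) : Bd L (2 ^ L * K) r' φ := by
  have hK := h.K_nonneg
  refine ⟨h.cd, fun j hj x => (h.bd j hj x).trans ?_⟩
  have h1 : r⁻¹ ≤ 2 * r'⁻¹ := by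
    rw [inv_eq_one_div, inv_eq_one_div, mul_one_div, div_le_div_iff₀ hr hr']; linarith
  calc K * (r⁻¹) ^ j ≤ K * (2 * r'⁻¹) ^ j := by gcongr
    _ = 2 ^ j * K * (r'⁻¹) ^ j := by rw [mul_pow]; ring
    _ ≤ _ := by gcongr; norm_num

theorem Bd.prod {n L : ℕ} {K r : ℝ} (hr : 0 < r) {ι : Type*} (F : Finset ι) (φ : ι → Euc n → ℝ)
    (h : ∀ i ∈ F, Bd L K r (φ i)) :
    Bd L ((2 ^ L * K) ^ F.card) r (fun x => ∏ i ∈ F, φ i x) := by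
  classical
  induction F using Finset.induction_on with
  | empty => simpa using Bd.const (n := n) (L := L) 1 r hr
  | insert a F ha ih =>
    have h1 := ih (fun i hi => h i (Finset.mem_insert_of_mem hi))
    have h2 := (h a (Finset.mem_insert_self _ _)).mul hr h1
    rw [Finset.card_insert_of_notMem ha, pow_succ']
    simpa only [Finset.prod_insert ha] using h2

theorem Bd.scale {n : ℕ} (L : ℕ) (Φ : Euc n → ℝ) (hΦ : ContDiff ℝ (⊤ : ℕ∞) Φ) (hc : HasCompactSupport Φ) :
    ∃ K : ℝ, 1 ≤ K ∧ ∀ (c : Euc n) (r : ℝ), 0 < r → Bd L K r (fun x => Φ (r⁻¹ • (x - c))) := by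
  have hb : ∀ j : ℕ, ∃ K, ∀ x, ‖iteratedFDeriv ℝ j Φ x‖ ≤ K := fun j =>
    (hc.iteratedFDeriv j).exists_bound_of_continuous
      (hΦ.continuous_iteratedFDeriv (by exact_mod_cast le_top))
  choose Kj hKj using hb
  refine ⟨1 + ∑ j ∈ Finset.range (L + 1), |Kj j|, ?_, fun c r hr => ⟨?_, ?_⟩⟩
  · have : 0 ≤ ∑ j ∈ Finset.range (L + 1), |Kj j| := Finset.sum_nonneg fun _ _ => abs_nonneg _
    linarith
  · exact hΦ.comp (by fun_prop)
  · intro j hj x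
    have e := iteratedFDeriv_comp_sub (𝕜 := ℝ) (f := fun x => Φ (r⁻¹ • x)) j c x
    rw [e, congrFun (iteratedFDeriv_comp_const_smul (𝕜 := ℝ) (i := j) (f := Φ) r⁻¹
      (hΦ.of_le (by exact_mod_cast le_top))) (x - c)]
    rw [norm_smul, norm_pow, norm_inv, Real.norm_of_nonneg hr.le, mul_comm]
    gcongr
    refine (hKj j _).trans ((le_abs_self _).trans ?_)
    have := Finset.single_le_sum (f := fun j => |Kj j|) (fun _ _ => abs_nonneg _)
      (Finset.mem_range.2 (Nat.lt_succ_of_le hj))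
    linarith

theorem Bd.toSm {n L : ℕ} {K r : ℝ} {φ : Euc n → ℝ} (h : Bd L K r φ) :
    Sm 0 K φ ∧ Sm L (K * (r⁻¹) ^ L) φ := by
  refine ⟨fun x => ?_, Sm_of_deriv L _ _ h.cd (h.bd L le_rfl)⟩
  simpa using h.bd 0 (Nat.zero_le _) x

/-! ### Whitney families -/

structure Whit {n : ℕ} (ε : ℝ) (Ω : Set (Euc n)) (J : Set ℕ) (c : ℕ → Euc n) (r : ℕ → ℝ) : Prop where
  ne : (Ωᶜ).Nonempty
  opn : IsOpen Ω
  eps : 0 < ε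
  eps' : ε ≤ 1 / 100
  mem : ∀ j ∈ J, c j ∈ Ω
  rad : ∀ j ∈ J, r j = ε * Metric.infDist (c j) Ωᶜ
  pos : ∀ j ∈ J, 0 < r j
  disj : J.PairwiseDisjoint fun j => Metric.closedBall (c j) (r j)
  cov : ∀ x ∈ Ω, ∃ j ∈ J, dist x (c j) ≤ 5 * r j

theorem exists_whit {n : ℕ} (hn : 1 ≤ n) (ε : ℝ) (hε : 0 < ε) (hε' : ε ≤ 1 / 100) (Ω : Set (Euc n)) (hΩ : IsOpen Ω)
    (hv : volume Ω ≠ ∞) : ∃ J c r, Whit ε Ω J c r := by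
  obtain ⟨R, hR0, hR⟩ := radius_bound hn Ω hv
  have hne : (Ωᶜ).Nonempty := by
    rw [nonempty_compl]
    rintro rfl
    have := hR 0 (R + 1) (by linarith) (subset_univ _)
    linarith
  have hpos : ∀ x ∈ Ω, 0 < Metric.infDist x Ωᶜ := by
    intro x hx
    exact (hΩ.isClosed_compl.notMem_iff_infDist_pos hne).1 (by simpa using hx)
  have hsub : ∀ x, Metric.ball x (Metric.infDist x Ωᶜ) ⊆ Ω := by
    intro x y hy
    by_contra hy'
    have := Metric.infDist_le_dist_of_mem (x := x) (show y ∈ Ωᶜ from hy')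
    rw [Metric.mem_ball, dist_comm] at hy
    linarith
  obtain ⟨u, hu, hdisj, hcov⟩ := Vitali.exists_disjoint_subfamily_covering_enlargement_closedBall Ω
    (fun x => x) (fun x => ε * Metric.infDist x Ωᶜ) (ε * R)
    (fun x hx => by
      have := hR x _ (hpos x hx) (hsub x)
      gcongr) 5 (by norm_num)
  have hcount : u.Countable := by
    refine Set.PairwiseDisjoint.countable_of_isOpen (s := fun x => Metric.ball x (ε * Metric.infDist x Ωᶜ))
      (hdisj.mono_on fun z hz => Metric.ball_subset_closedBall) (fun z _ => Metric.isOpen_ball)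
      (fun z hz => ⟨z, Metric.mem_ball_self (mul_pos hε (hpos z (hu hz)))⟩)
  obtain ⟨e, he⟩ := countable_iff_exists_injOn.1 hcount
  refine ⟨e '' u, Function.invFunOn e u, fun j => ε * Metric.infDist (Function.invFunOn e u j) Ωᶜ,
    hne, hΩ, hε, hε', ?_, ?_, ?_, ?_, ?_⟩
  · rintro _ ⟨x, hx, rfl⟩; exact hu (Function.invFunOn_mem ⟨x, hx, rfl⟩)
  · intro _ _; rfl
  · rintro _ ⟨x, hx, rfl⟩
    exact mul_pos hε (hpos _ (hu (Function.invFunOn_mem ⟨x, hx, rfl⟩)))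
  · rintro _ ⟨x, hx, rfl⟩ _ ⟨y, hy, rfl⟩ hxy
    simp only [Function.onFun]
    rw [he.leftInvOn_invFunOn hx, he.leftInvOn_invFunOn hy]
    exact hdisj hx hy (fun h => hxy (by rw [h]))
  · intro x hx
    obtain ⟨b, hb, hsb⟩ := hcov x hx
    refine ⟨e b, ⟨b, hb, rfl⟩, ?_⟩
    rw [he.leftInvOn_invFunOn hb]
    have := hsb (Metric.mem_closedBall_self (mul_nonneg hε.le Metric.infDist_nonneg))
    simpa using this

theorem Whit.sub {n : ℕ} {ε : ℝ} {Ω : Set (Euc n)} {J c r} (h : Whit ε Ω J c r) {j} (hj : j ∈ J) {x : Euc n}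
    (hx : dist x (c j) < 100 * r j) : x ∈ Ω := by
  by_contra hx'
  have h1 := Metric.infDist_le_dist_of_mem (x := c j) (show x ∈ Ωᶜ from hx')
  rw [dist_comm] at h1
  have h2 := h.rad j hj
  have h3 := h.eps'
  have h4 : r j ≤ 1 / 100 * Metric.infDist (c j) Ωᶜ := by
    rw [h2]; gcongr; exact Metric.infDist_nonneg
  linarith

theorem Whit.compar {n : ℕ} {ε : ℝ} {Ω Ω' : Set (Euc n)} {J c r J' c' r'} (h : Whit ε Ω J c r)
    (h' : Whit ε Ω' J' c' r') (hsub : Ω ⊆ Ω') {i j} (hi : i ∈ J) (hj : j ∈ J')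
    (hd : dist (c i) (c' j) ≤ 6 * r i + 6 * r' j) : r i ≤ 2 * r' j := by
  have h1 := h.rad i hi
  have h2 := h'.rad j hj
  have h3 : Metric.infDist (c i) Ωᶜ ≤ Metric.infDist (c i) Ω'ᶜ :=
    Metric.infDist_le_infDist_of_subset (compl_subset_compl.2 hsub) h'.ne
  have h4 : Metric.infDist (c i) Ω'ᶜ ≤ Metric.infDist (c' j) Ω'ᶜ + dist (c i) (c' j) :=
    Metric.infDist_le_infDist_add_dist
  have h5 : r i ≤ r' j + ε * (6 * r i + 6 * r' j) := by
    rw [h1, h2, ← mul_add]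
    have := h.eps
    gcongr
    rw [← h1, ← h2]; linarith
  have h6 := h.eps'
  have p1 := h.pos i hi
  have p2 := h'.pos j hj
  nlinarith

theorem Whit.count {n : ℕ} {ε : ℝ} {Ω : Set (Euc n)} {J c r} (h : Whit ε Ω J c r) (Λ : ℝ) (hΛ : 0 ≤ Λ)
    (hΛε : Λ * ε ≤ 1 / 2) (x : Euc n) (F : Finset ℕ) (hF : ∀ j ∈ F, j ∈ J ∧ dist x (c j) ≤ Λ * r j) :
    (F.card : ℝ) ≤ (3 * (Λ + 1)) ^ n := by
  rcases F.eq_empty_or_nonempty with rfl | ⟨j0, hj0⟩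
  · simp; positivity
  have hε := h.eps
  set d := Metric.infDist x Ωᶜ with hd
  have key : ∀ j ∈ F, r j ≤ 2 * (ε * d) ∧ 2 / 3 * (ε * d) ≤ r j := by
    intro j hj
    obtain ⟨hJ, hdist⟩ := hF j hj
    have h1 := h.rad j hJ
    have h2 : Metric.infDist (c j) Ωᶜ ≤ d + dist (c j) x := Metric.infDist_le_infDist_add_dist
    have h3 : d ≤ Metric.infDist (c j) Ωᶜ + dist x (c j) := Metric.infDist_le_infDist_add_dist
    rw [dist_comm] at h2
    have h4 : dist x (c j) ≤ 1 / 2 * Metric.infDist (c j) Ωᶜ := by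
      refine hdist.trans ?_
      rw [h1, ← mul_assoc]; gcongr; exact Metric.infDist_nonneg
    rw [h1]
    constructor
    · nlinarith
    · nlinarith
  have hd0 : 0 < ε * d := by
    have := (key j0 hj0).1; have := h.pos j0 (hF j0 hj0).1; linarith
  set ω := volume (Metric.ball (0 : Euc n) 1)
  have hω : 0 < ω := Metric.measure_ball_pos _ _ one_pos
  have hω' : ω ≠ ∞ := measure_ball_lt_top.ne
  have hvol : (F.card : ℝ≥0∞) * (ENNReal.ofReal ((2 / 3 * (ε * d)) ^ n) * ω) ≤
      ENNReal.ofReal (((Λ + 1) * (2 * (ε * d))) ^ n) * ω := by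
    calc (F.card : ℝ≥0∞) * (ENNReal.ofReal ((2 / 3 * (ε * d)) ^ n) * ω)
        = ∑ j ∈ F, ENNReal.ofReal ((2 / 3 * (ε * d)) ^ n) * ω := by
          rw [Finset.sum_const, nsmul_eq_mul]
      _ ≤ ∑ j ∈ F, volume (Metric.closedBall (c j) (r j)) := by
          refine Finset.sum_le_sum fun j hj => ?_
          rw [vol_cball _ (h.pos j (hF j hj).1).le]
          gcongr
          exact (key j hj).2
      _ = volume (⋃ j ∈ F, Metric.closedBall (c j) (r j)) := by
          rw [measure_biUnion_finset (fun i hi j hj hij => h.disj (hF i hi).1 (hF j hj).1 hij)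
            (fun j _ => measurableSet_closedBall)]
      _ ≤ volume (Metric.closedBall x ((Λ + 1) * (2 * (ε * d)))) := by
          apply measure_mono
          refine iUnion₂_subset fun j hj y hy => ?_
          rw [Metric.mem_closedBall] at hy ⊢
          have h1 := dist_triangle y (c j) x
          rw [dist_comm (c j) x] at h1
          have h2 := (hF j hj).2
          have h3 := (key j hj).1
          nlinarith
      _ = _ := vol_cball _ (by positivity)
  rw [← mul_assoc, ENNReal.mul_le_mul_iff_left hω.ne' hω'] at hvol
  have h2 := ENNReal.toReal_mono (by simp) hvol
  rw [ENNReal.toReal_mul, ENNReal.toReal_ofReal (by positivity), ENNReal.toReal_ofReal (by positivity)] at h2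
  simp only [ENNReal.toReal_natCast] at h2
  have e : ((Λ + 1) * (2 * (ε * d))) ^ n = (3 * (Λ + 1)) ^ n * (2 / 3 * (ε * d)) ^ n := by
    rw [← mul_pow]; congr 1; ring
  rw [e] at h2
  exact le_of_mul_le_mul_right h2 (by positivity)

theorem Whit.fin {n : ℕ} {ε : ℝ} {Ω : Set (Euc n)} {J c r} (h : Whit ε Ω J c r) (Λ : ℝ) (hΛ : 0 ≤ Λ)
    (hΛε : Λ * ε ≤ 1 / 2) (x : Euc n) : {j | j ∈ J ∧ dist x (c j) ≤ Λ * r j}.Finite := by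
  by_contra hinf
  obtain ⟨m, hm⟩ := exists_nat_gt ((3 * (Λ + 1)) ^ n)
  obtain ⟨F, hF, hcard⟩ := Set.Infinite.exists_subset_card_eq hinf m
  have := h.count Λ hΛ hΛε x F (fun j hj => hF hj)
  rw [hcard] at this
  linarith

/-! ### Partition of unity -/

theorem exists_pou (n L : ℕ) : ∃ K : ℝ, 1 ≤ K ∧ ∀ (ε : ℝ) (Ω : Set (Euc n)) (J : Set ℕ) (c : ℕ → Euc n)
    (r : ℕ → ℝ), Whit ε Ω J c r → ∃ η : ℕ → Euc n → ℝ,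
      (∀ j x, 0 ≤ η j x) ∧ (∀ j x, η j x ≠ 0 → j ∈ J ∧ dist x (c j) ≤ 6 * r j) ∧
      (∀ x ∈ Ω, HasSum (fun j => η j x) 1) ∧ (∀ j ∈ J, Bd L K (r j) (η j)) := by
  classical
  let Φ : ContDiffBump (0 : Euc n) := ⟨5, 6, by norm_num, by norm_num⟩
  obtain ⟨K0, hK0, hK⟩ := Bd.scale L (Φ : Euc n → ℝ) Φ.contDiff Φ.hasCompactSupport
  obtain ⟨m, hm⟩ := exists_nat_ge (((3 : ℝ) * (18 + 1)) ^ n)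
  set K1 : ℝ := 2 ^ L * (2 ^ L * (1 + K0)) with hK1
  have h2L : (1 : ℝ) ≤ 2 ^ L := one_le_pow₀ (by norm_num)
  have hK11 : 1 ≤ K1 := by
    have : 1 ≤ 2 ^ L * (1 + K0) := by nlinarith
    nlinarith
  refine ⟨2 ^ L * K0 * K1 ^ m, ?_, fun ε Ω J c r h => ?_⟩
  · have := one_le_pow₀ hK11 (n := m)
    have h3 : 1 ≤ 2 ^ L * K0 := by nlinarith
    nlinarith
  set φ : ℕ → Euc n → ℝ := fun j x => if j ∈ J then Φ ((r j)⁻¹ • (x - c j)) else 0 with hφ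
  have hφ0 : ∀ j x, 0 ≤ φ j x := by
    intro j x; simp only [hφ]; split_ifs; · exact Φ.nonneg
    · exact le_rfl
  have hφ1 : ∀ j x, φ j x ≤ 1 := by
    intro j x; simp only [hφ]; split_ifs; · exact Φ.le_one
    · exact zero_le_one
  have hφs : ∀ j x, φ j x ≠ 0 → j ∈ J ∧ dist x (c j) ≤ 6 * r j := by
    intro j x hne
    simp only [hφ] at hne
    split_ifs at hne with hj
    · refine ⟨hj, ?_⟩
      by_contra! hlt
      apply hne
      apply Φ.zero_of_le_dist
      have hp := h.pos j hj
      rw [dist_zero_right, norm_smul, norm_inv, Real.norm_of_nonneg hp.le, ← dist_eq_norm,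
        inv_mul_eq_div, le_div_iff₀ hp]
      exact hlt.le
    · exact absurd rfl hne
  have hφone : ∀ x ∈ Ω, ∃ j, φ j x = 1 := by
    intro x hx
    obtain ⟨j, hj, hd⟩ := h.cov x hx
    refine ⟨j, ?_⟩
    simp only [hφ, if_pos hj]
    apply Φ.one_of_mem_closedBall
    have hp := h.pos j hj
    rw [Metric.mem_closedBall, dist_zero_right, norm_smul, norm_inv, Real.norm_of_nonneg hp.le, ← dist_eq_norm,
        inv_mul_eq_div, div_le_iff₀ hp]
    exact hd
  set nb : ℕ → Finset ℕ := fun j => (Finset.range j).filter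
    (fun i => i ∈ J ∧ dist (c j) (c i) ≤ 6 * r i + 6 * r j) with hnb
  set η : ℕ → Euc n → ℝ := fun j x => φ j x * ∏ i ∈ nb j, (1 - φ i x) with hη
  have hη' : ∀ j x, η j x = φ j x * ∏ i ∈ Finset.range j, (1 - φ i x) := by
    intro j x
    simp only [hη]
    by_cases hj : φ j x = 0
    · rw [hj]; simp
    congr 1
    apply Finset.prod_subset (Finset.filter_subset _ _)
    intro i hi hni
    by_contra hne
    have hi0 : φ i x ≠ 0 := by
      intro h0; apply hne; rw [h0]; simp
    apply hni
    obtain ⟨hiJ, hid⟩ := hφs i x hi0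
    obtain ⟨hjJ, hjd⟩ := hφs j x hj
    refine Finset.mem_filter.2 ⟨hi, hiJ, ?_⟩
    have := dist_triangle (c j) x (c i)
    rw [dist_comm (c j) x] at this
    linarith
  have htel : ∀ x N, ∑ j ∈ Finset.range N, η j x = 1 - ∏ i ∈ Finset.range N, (1 - φ i x) := by
    intro x N
    induction N with
    | zero => simp
    | succ N ih => rw [Finset.sum_range_succ, Finset.prod_range_succ, ih, hη']; ring
  refine ⟨η, ?_, ?_, ?_, ?_⟩
  · intro j x
    exact mul_nonneg (hφ0 j x) (Finset.prod_nonneg fun i _ => by linarith [hφ1 i x])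
  · intro j x hne
    exact hφs j x (left_ne_zero_of_mul hne)
  · intro x hx
    obtain ⟨i, hi⟩ := hφone x hx
    have hz : ∀ j, j ∉ Finset.range (i + 1) → η j x = 0 := by
      intro j hj
      rw [hη']
      rw [Finset.prod_eq_zero (i := i), mul_zero]
      · simp at hj ⊢; omega
      · rw [hi]; ring
    have : HasSum (fun j => η j x) (∑ j ∈ Finset.range (i + 1), η j x) := hasSum_sum_of_ne_finset_zero hz
    rw [htel, Finset.prod_eq_zero (i := i) (by simp) (by rw [hi]; ring), sub_zero] at this
    exact this
  · intro j hj
    have hp := h.pos j hj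
    have hbφ : ∀ i ∈ J, Bd L K0 (r i) (φ i) := by
      intro i hi
      have := hK (c i) (r i) (h.pos i hi)
      simpa only [hφ, if_pos hi] using this
    have hbi : ∀ i ∈ nb j, Bd L (2 ^ L * (1 + K0)) (r j) (fun x => 1 - φ i x) := by
      intro i hi
      obtain ⟨_, hiJ, hid⟩ := Finset.mem_filter.1 hi
      have hcomp : r j ≤ 2 * r i := h.compar h Subset.rfl hj hiJ (by linarith)
      have h1 := (Bd.const (n := n) (L := L) 1 (r i) (h.pos i hiJ)).sub (hbφ i hiJ)
      rw [abs_one] at h1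
      exact h1.radius (h.pos i hiJ) hp hcomp
    have hprod := Bd.prod hp (nb j) (fun i x => 1 - φ i x) hbi
    have hcard : (nb j).card ≤ m := by
      have : ((nb j).card : ℝ) ≤ (3 * (18 + 1)) ^ n := by
        apply h.count 18 (by norm_num) (by linarith [h.eps']) (c j)
        intro i hi
        obtain ⟨_, hiJ, hid⟩ := Finset.mem_filter.1 hi
        have hcomp : r j ≤ 2 * r i := h.compar h Subset.rfl hj hiJ (by linarith)
        exact ⟨hiJ, by linarith⟩
      exact_mod_cast this.trans hm
    have hprod' : Bd L (K1 ^ m) (r j) (fun x => ∏ i ∈ nb j, (1 - φ i x)) :=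
      hprod.mono hp (pow_le_pow_right₀ hK11 hcard)
    exact (hbφ j hj).mul hp hprod'


/-! ### Dual functions for monomials -/

theorem exists_dual1 (N : ℕ) : ∃ ϑ : Fin (N + 1) → ℝ → ℝ, (∀ m, Measurable (ϑ m)) ∧
    (∃ B, 0 ≤ B ∧ ∀ m u, |ϑ m u| ≤ B) ∧ (∀ m u, 1 < |u| → ϑ m u = 0) ∧
    ∀ m m' : Fin (N + 1), ∫ u, ϑ m u * u ^ (m' : ℕ) = if m = m' then 1 else 0 := by
  classical
  let H : Matrix (Fin (N + 1)) (Fin (N + 1)) ℝ := fun i j => ∫ u in (0 : ℝ)..1, u ^ ((i : ℕ) + (j : ℕ))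
  have hH : ∀ (c : Fin (N + 1) → ℝ) (j : Fin (N + 1)), ∫ u in (0 : ℝ)..1, (∑ i, c i * u ^ (i : ℕ)) * u ^ (j : ℕ) = H.mulVec c j := by
    intro c j
    simp only [Matrix.mulVec, dotProduct, H]
    simp_rw [Finset.sum_mul]
    rw [intervalIntegral.integral_finsetSum]
    · refine Finset.sum_congr rfl fun i _ => ?_
      rw [mul_comm, ← intervalIntegral.integral_const_mul]
      congr 1; ext u; ring
    · intro i _
      exact (by fun_prop : Continuous _).intervalIntegrable _ _
  have hinj : Function.Injective H.mulVec := by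
    have : ∀ c, H.mulVec c = 0 → c = 0 := by
      intro c hc
      let P : Polynomial ℝ := ∑ i : Fin (N + 1), Polynomial.monomial (i : ℕ) (c i)
      have hP : ∀ u, P.eval u = ∑ i, c i * u ^ (i : ℕ) := by
        intro u
        simp [P, Polynomial.eval_finsetSum]
      have h0 : ∫ u in (0 : ℝ)..1, (P.eval u) ^ 2 = 0 := by
        have : ∀ u, (P.eval u) ^ 2 = ∑ j, c j * ((∑ i, c i * u ^ (i : ℕ)) * u ^ (j : ℕ)) := by
          intro u
          rw [sq, hP, Finset.mul_sum]
          refine Finset.sum_congr rfl fun j _ => by ring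
        simp_rw [this]
        rw [intervalIntegral.integral_finsetSum]
        · refine Finset.sum_eq_zero fun j _ => ?_
          rw [intervalIntegral.integral_const_mul, hH, hc]; simp
        · intro i _
          exact (by fun_prop : Continuous _).intervalIntegrable _ _
      have hz : ∀ u ∈ Ioo (0 : ℝ) 1, P.eval u = 0 := by
        intro u hu
        by_contra hne
        have : 0 < ∫ u in (0 : ℝ)..1, (P.eval u) ^ 2 :=
          intervalIntegral.integral_pos (by norm_num) ((P.continuous.pow 2).continuousOn)
            (fun x _ => sq_nonneg _) ⟨u, ⟨hu.1.le, hu.2.le⟩, by positivity⟩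
        linarith
      have hP0 : P = 0 := Polynomial.eq_zero_of_infinite_isRoot P
        ((Ioo_infinite (show (0 : ℝ) < 1 by norm_num)).mono fun u hu => hz u hu)
      ext i
      have := congrArg (fun Q => Polynomial.coeff Q (i : ℕ)) hP0
      simp only [P, Polynomial.finsetSum_coeff, Polynomial.coeff_monomial, Polynomial.coeff_zero] at this
      simpa [Fin.val_inj] using this
    intro c c' hcc
    have := this (c - c') (by rw [Matrix.mulVec_sub, hcc, sub_self])
    exact sub_eq_zero.1 this
  have hu := Matrix.mulVec_injective_iff_isUnit.1 hinj
  have hsurj := Matrix.mulVec_surjective_iff_isUnit.2 hu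
  choose c hc using fun m : Fin (N + 1) => hsurj (Pi.single m 1)
  let Q : Fin (N + 1) → ℝ → ℝ := fun m u => ∑ i, c m i * u ^ (i : ℕ)
  have hQc : ∀ m, Continuous (Q m) := fun m => by simp only [Q]; fun_prop
  refine ⟨fun m => (Ioc (0 : ℝ) 1).indicator (Q m), fun m => (hQc m).measurable.indicator measurableSet_Ioc, ?_, ?_, ?_⟩
  · refine ⟨∑ m, ∑ i, |c m i|, by positivity, fun m u => ?_⟩
    beta_reduce
    by_cases hu : u ∈ Ioc (0 : ℝ) 1
    · rw [indicator_of_mem hu]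
      calc |Q m u| ≤ ∑ i, |c m i * u ^ (i : ℕ)| := Finset.abs_sum_le_sum_abs _ _
        _ ≤ ∑ i, |c m i| := by
            refine Finset.sum_le_sum fun i _ => ?_
            rw [abs_mul, abs_of_nonneg (pow_nonneg hu.1.le _)]
            exact mul_le_of_le_one_right (abs_nonneg _) (pow_le_one₀ hu.1.le hu.2)
        _ ≤ _ := Finset.single_le_sum (f := fun m => ∑ i, |c m i|) (fun _ _ => by positivity) (Finset.mem_univ m)
    · rw [indicator_of_notMem hu]; simp; positivity
  · intro m u hu
    apply indicator_of_notMem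
    rintro ⟨h1, h2⟩
    rw [abs_of_pos h1] at hu; linarith
  · intro m m'
    have : ∀ u, (Ioc (0 : ℝ) 1).indicator (Q m) u * u ^ (m' : ℕ) =
        (Ioc (0 : ℝ) 1).indicator (fun u => Q m u * u ^ (m' : ℕ)) u := by
      intro u
      by_cases hu : u ∈ Ioc (0 : ℝ) 1
      · simp [hu]
      · simp [hu]
    simp_rw [this]
    rw [integral_indicator measurableSet_Ioc, ← intervalIntegral.integral_of_le (by norm_num), hH, hc]
    simp [Pi.single_apply, eq_comm]

/-- Multi-indices. -/
abbrev MI (n N : ℕ) := Fin n → Fin (N + 1)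

def mono {n N : ℕ} (α : MI n N) (u : Euc n) : ℝ := ∏ i, u i ^ (α i : ℕ)

theorem mono_cd {n N : ℕ} (α : MI n N) : ContDiff ℝ (⊤ : ℕ∞) (mono (n := n) α) := by
  unfold mono; fun_prop

structure Dual {n N : ℕ} (B : ℝ) (θ : MI n N → Euc n → ℝ) : Prop where
  meas : ∀ α, Measurable (θ α)
  bdd : ∀ α u, |θ α u| ≤ B
  supp : ∀ α u, u ∉ cube 0 1 → θ α u = 0
  dual : ∀ α β, ∫ u, θ α u * mono β u = if α = β then 1 else 0

theorem exists_dual (n N : ℕ) : ∃ B, ∃ θ : MI n N → Euc n → ℝ, 0 ≤ B ∧ Dual B θ := by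
  classical
  obtain ⟨ϑ, hm, ⟨B, hB0, hB⟩, hs, hd⟩ := exists_dual1 N
  refine ⟨B ^ n, fun α u => ∏ i, ϑ (α i) (u i), by positivity, ?_, ?_, ?_, ?_⟩
  · intro α
    refine Finset.measurable_prod _ fun i _ => (hm _).comp ?_
    exact (by fun_prop : Continuous fun u : Euc n => u i).measurable
  · intro α u
    rw [Finset.abs_prod]
    calc ∏ i, |ϑ (α i) (u i)| ≤ ∏ i : Fin n, B := Finset.prod_le_prod (fun _ _ => abs_nonneg _) fun i _ => hB _ _
      _ = B ^ n := by simp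
  · intro α u hu
    simp only [cube, mem_ofPred_eq, not_forall, not_le] at hu
    obtain ⟨i, hi⟩ := hu
    exact Finset.prod_eq_zero (Finset.mem_univ i) (hs _ _ (by simpa using hi))
  · intro α β
    have h1 := (PiLp.volume_preserving_ofLp (Fin n)).integral_comp (MeasurableEquiv.toLp 2 (Fin n → ℝ)).symm.measurableEmbedding
      (fun v : Fin n → ℝ => ∏ i, (ϑ (α i) (v i) * v i ^ (β i : ℕ)))
    simp only [mono, ← Finset.prod_mul_distrib]
    refine h1.trans ?_
    rw [integral_fintype_prod_volume_eq_prod (fun i u => ϑ (α i) u * u ^ (β i : ℕ))]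
    simp_rw [hd]
    by_cases h : α = β
    · simp [h]
    · rw [if_neg h]
      obtain ⟨i, hi⟩ := Function.ne_iff.1 h
      exact Finset.prod_eq_zero (Finset.mem_univ i) (if_neg hi)


theorem loc_mul_int {n : ℕ} {f k : Euc n → ℝ} (hf : LocallyIntegrable f volume) (hk : AEStronglyMeasurable k volume)
    {B : ℝ} (hB : ∀ x, |k x| ≤ B) (c : Euc n) (R : ℝ) (hs : ∀ x, R < dist x c → k x = 0) :
    Integrable (fun x => f x * k x) := by
  have h1 : Integrable ((Metric.closedBall c R).indicator f) :=
    (integrable_indicator_iff Metric.isClosed_closedBall.measurableSet).2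
      (hf.integrableOn_isCompact (isCompact_closedBall c R))
  have h2 := h1.mul_bdd (c := B) hk (Filter.Eventually.of_forall hB)
  refine h2.congr (Filter.Eventually.of_forall fun x => ?_)
  by_cases hx : x ∈ Metric.closedBall c R
  · simp [hx]
  · rw [Metric.mem_closedBall, not_le] at hx
    simp [hs x hx]

theorem cube_norm {n : ℕ} {c : Euc n} {r : ℝ} (hr : 0 ≤ r) {x : Euc n} (hx : x ∈ cube c r) : dist x c ≤ n * r := by
  rw [EuclideanSpace.dist_eq]
  refine Real.sqrt_le_iff.2 ⟨by positivity, ?_⟩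
  calc ∑ i, dist (x i) (c i) ^ 2 ≤ ∑ i : Fin n, r ^ 2 := by
        refine Finset.sum_le_sum fun i _ => ?_
        rw [Real.dist_eq]
        exact pow_le_pow_left₀ (abs_nonneg _) (hx i) 2
    _ = n * r ^ 2 := by simp
    _ ≤ (n * r) ^ 2 := by
        rw [mul_pow]
        gcongr
        rcases Nat.eq_zero_or_pos n with rfl | hn
        · simp
        · have : (1 : ℝ) ≤ n := by exact_mod_cast hn
          nlinarith

theorem cv {n : ℕ} (F : Euc n → ℝ) (c : Euc n) {r : ℝ} (hr : 0 < r) :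
    (r ^ n)⁻¹ * ∫ x, F (r⁻¹ • (x - c)) = ∫ u, F u := by
  rw [integral_sub_right_eq_self (fun x => F (r⁻¹ • x)) c, Measure.integral_comp_inv_smul]
  simp only [finrank_euclideanSpace, Fintype.card_fin, smul_eq_mul]
  rw [abs_of_pos (by positivity)]
  field_simp

theorem mem_cube_scale {n : ℕ} {c x : Euc n} {r : ℝ} (hr : 0 < r) : r⁻¹ • (x - c) ∈ cube 0 1 ↔ x ∈ cube c r := by
  simp only [cube, mem_ofPred_eq]
  refine forall_congr' fun i => ?_
  simp only [PiLp.smul_apply, PiLp.sub_apply, smul_eq_mul, PiLp.zero_apply, sub_zero, abs_mul, abs_inv, abs_of_pos hr]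
  rw [inv_mul_le_iff₀ hr, mul_one]

/-! ### The moment-correcting operator -/

def mom {n N : ℕ} (c : Euc n) (r : ℝ) (h : Euc n → ℝ) (α : MI n N) : ℝ :=
  (r ^ n)⁻¹ * ∫ y, h y * mono α (r⁻¹ • (y - c))

def TT {n N : ℕ} (θ : MI n N → Euc n → ℝ) (c : Euc n) (r : ℝ) (h : Euc n → ℝ) (x : Euc n) : ℝ :=
  ∑ α, mom c r h α * θ α (r⁻¹ • (x - c))

def cof {n N : ℕ} (θ : MI n N → Euc n → ℝ) (c : Euc n) (r : ℝ) (g : Euc n → ℝ) (α : MI n N) : ℝ :=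
  (r ^ n)⁻¹ * ∫ x, θ α (r⁻¹ • (x - c)) * g x

def GG {n N : ℕ} (θ : MI n N → Euc n → ℝ) (c : Euc n) (r : ℝ) (g : Euc n → ℝ) (y : Euc n) : ℝ :=
  g y - ∑ α, mono α (r⁻¹ • (y - c)) * cof θ c r g α

theorem mono_le {n N : ℕ} (α : MI n N) {u : Euc n} {R : ℝ} (hR : 1 ≤ R) (hu : ‖u‖ ≤ R) : |mono α u| ≤ R ^ (N * n) := by
  unfold mono
  rw [Finset.abs_prod]
  calc ∏ i, |u i ^ (α i : ℕ)| ≤ ∏ i : Fin n, R ^ N := by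
        refine Finset.prod_le_prod (fun _ _ => abs_nonneg _) fun i _ => ?_
        rw [abs_pow]
        calc |u i| ^ (α i : ℕ) ≤ R ^ (α i : ℕ) := by
              gcongr
              exact (PiLp.norm_apply_le u i).trans hu
          _ ≤ R ^ N := pow_le_pow_right₀ hR (by omega)
    _ = _ := by simp [pow_mul]

theorem TT_meas {n N : ℕ} {B : ℝ} {θ : MI n N → Euc n → ℝ} (hθ : Dual B θ) (c : Euc n) (r : ℝ) (h : Euc n → ℝ) :
    Measurable (TT θ c r h) := by
  unfold TT
  refine Finset.measurable_sum _ fun α _ => Measurable.const_mul ((hθ.meas α).comp ?_) _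
  fun_prop

theorem TT_supp {n N : ℕ} {B : ℝ} {θ : MI n N → Euc n → ℝ} (hθ : Dual B θ) {c : Euc n} {r : ℝ} (hr : 0 < r) (h : Euc n → ℝ)
    {x : Euc n} (hx : x ∉ cube c r) : TT θ c r h x = 0 := by
  refine Finset.sum_eq_zero fun α _ => ?_
  rw [hθ.supp, mul_zero]
  rwa [mem_cube_scale hr]

theorem TT_bdd {n N : ℕ} {B : ℝ} {θ : MI n N → Euc n → ℝ} (hθ : Dual B θ) (c : Euc n) (r : ℝ) (h : Euc n → ℝ) {m : ℝ}
    (hm : ∀ α : MI n N, |mom c r h α| ≤ m) (x : Euc n) : |TT θ c r h x| ≤ Fintype.card (MI n N) * (m * B) := by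
  calc |TT θ c r h x| ≤ ∑ α, |mom c r h α * θ α (r⁻¹ • (x - c))| := Finset.abs_sum_le_sum_abs _ _
    _ ≤ ∑ α : MI n N, m * B := by
        refine Finset.sum_le_sum fun α _ => ?_
        rw [abs_mul]
        exact mul_le_mul (hm α) (hθ.bdd _ _) (abs_nonneg _) ((abs_nonneg _).trans (hm α))
    _ = _ := by simp

theorem theta_int {n N : ℕ} {B : ℝ} {θ : MI n N → Euc n → ℝ} (hθ : Dual B θ) {c : Euc n} {r : ℝ} (hr : 0 < r)
    {g : Euc n → ℝ} (hg : Continuous g) (α : MI n N) : Integrable (fun x => θ α (r⁻¹ • (x - c)) * g x) := by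
  have := loc_mul_int (f := g) (k := fun x => θ α (r⁻¹ • (x - c))) hg.locallyIntegrable
    ((hθ.meas α).comp (by fun_prop)).aestronglyMeasurable (fun x => hθ.bdd α _) c (n * r) (fun x hx => by
      apply hθ.supp
      rw [mem_cube_scale hr]
      intro h; linarith [cube_norm hr.le h])
  simpa only [mul_comm] using this

theorem mono_int {n N : ℕ} {c : Euc n} {r : ℝ} (hr : 0 < r) {h : Euc n → ℝ} (hh : Integrable h) {R : ℝ}
    (hs : ∀ x, R < dist x c → h x = 0) (α : MI n N) : Integrable (fun y => h y * mono α (r⁻¹ • (y - c))) := by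
  have hc : Continuous fun y => mono α (r⁻¹ • (y - c)) := (mono_cd α).continuous.comp (by fun_prop)
  obtain ⟨D, hD⟩ := (isCompact_closedBall c R).exists_bound_of_continuousOn hc.continuousOn
  have h2 := hh.mul_bdd (c := |D|) (g := (Metric.closedBall c R).indicator fun y => mono α (r⁻¹ • (y - c)))
    (hc.aestronglyMeasurable.indicator Metric.isClosed_closedBall.measurableSet) (Filter.Eventually.of_forall fun x => by
      by_cases hx : x ∈ Metric.closedBall c R
      · rw [indicator_of_mem hx]; exact (hD x hx).trans (le_abs_self _)
      · rw [indicator_of_notMem hx]; simp)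
  refine h2.congr (Filter.Eventually.of_forall fun x => ?_)
  by_cases hx : x ∈ Metric.closedBall c R
  · simp [hx]
  · rw [Metric.mem_closedBall, not_le] at hx
    simp [hs x hx]

theorem TT_int {n N : ℕ} {B : ℝ} {θ : MI n N → Euc n → ℝ} (hθ : Dual B θ) {c : Euc n} {r : ℝ} (hr : 0 < r)
    {g : Euc n → ℝ} (hg : Continuous g) (h : Euc n → ℝ) : Integrable (fun x => TT θ c r h x * g x) := by
  simp only [TT, Finset.sum_mul, mul_assoc]
  exact integrable_finset_sum _ fun α _ => (theta_int hθ hr hg α).const_mul _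

theorem pairing {n N : ℕ} {B : ℝ} {θ : MI n N → Euc n → ℝ} (hθ : Dual B θ) {c : Euc n} {r : ℝ} (hr : 0 < r)
    {g : Euc n → ℝ} (hg : Continuous g) {h : Euc n → ℝ} (hh : Integrable h) {R : ℝ}
    (hs : ∀ x, R < dist x c → h x = 0) (hhg : Integrable fun x => h x * g x) :
    ∫ y, h y * GG θ c r g y = (∫ x, h x * g x) - ∫ x, TT θ c r h x * g x := by
  have e1 : ∫ x, TT θ c r h x * g x = ∑ α, mom c r h α * ∫ x, θ α (r⁻¹ • (x - c)) * g x := by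
    simp only [TT, Finset.sum_mul, mul_assoc]
    rw [integral_finsetSum _ fun α _ => (theta_int hθ hr hg α).const_mul _]
    simp_rw [integral_const_mul]
  have e2 : ∀ y, h y * GG θ c r g y = h y * g y - ∑ α, (h y * mono α (r⁻¹ • (y - c))) * cof θ c r g α := by
    intro y
    rw [GG, mul_sub, Finset.mul_sum]
    simp only [mul_assoc]
  simp_rw [e2]
  rw [integral_sub hhg (integrable_finset_sum _ fun α _ => (mono_int hr hh hs α).mul_const _),
    integral_finsetSum _ fun α _ => (mono_int hr hh hs α).mul_const _, e1]
  congr 1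
  refine Finset.sum_congr rfl fun α _ => ?_
  rw [integral_mul_const, cof, mom]
  ring

theorem cof_eq {n N : ℕ} (θ : MI n N → Euc n → ℝ) (c : Euc n) {r : ℝ} (hr : 0 < r) (g : Euc n → ℝ) (α : MI n N) :
    cof θ c r g α = ∫ u, θ α u * g (c + r • u) := by
  rw [cof, ← cv (fun u => θ α u * g (c + r • u)) c hr]
  congr 2
  ext x
  rw [smul_smul, mul_inv_cancel₀ hr.ne', one_smul, add_sub_cancel]

def GC (n N : ℕ) (B : ℝ) : ℝ :=
  1 + Fintype.card (MI n N) * (6 ^ (N * n) * (B * (volume (Metric.closedBall (0 : Euc n) n)).toReal))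

theorem GG_bdd {n N : ℕ} {B : ℝ} (hB : 0 ≤ B) {θ : MI n N → Euc n → ℝ} (hθ : Dual B θ) {c : Euc n} {r : ℝ} (hr : 0 < r)
    {g : Euc n → ℝ} {S : ℝ} (hg : ∀ x, dist x c ≤ (6 + n) * r → |g x| ≤ S) {y : Euc n} (hy : dist y c ≤ 6 * r) :
    |GG θ c r g y| ≤ GC n N B * S := by
  have hS : 0 ≤ S := (abs_nonneg _).trans (hg c (by simp; positivity))
  have hcof : ∀ α, |cof θ c r g α| ≤ B * (volume (Metric.closedBall (0 : Euc n) n)).toReal * S := by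
    intro α
    rw [cof_eq θ c hr]
    have h0 : ∀ u, ‖θ α u * g (c + r • u)‖ ≤ (Metric.closedBall (0 : Euc n) n).indicator (fun _ => B * S) u := by
      intro u
      by_cases hu : u ∈ cube (0 : Euc n) 1
      · have h1 := cube_norm zero_le_one hu
        rw [indicator_of_mem (by simpa using h1), norm_mul]
        refine mul_le_mul (hθ.bdd α u) (hg _ ?_) (abs_nonneg _) hB
        rw [dist_zero_right, mul_one] at h1
        rw [dist_eq_norm, add_sub_cancel_left, norm_smul, Real.norm_of_nonneg hr.le]
        nlinarith
      · rw [hθ.supp α u hu, zero_mul, norm_zero]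
        exact indicator_nonneg (fun _ _ => by positivity) _
    refine (norm_integral_le_of_norm_le (g := (Metric.closedBall (0 : Euc n) n).indicator (fun _ => B * S)) ?_
      (Filter.Eventually.of_forall h0)).trans ?_
    · exact (integrable_indicator_iff Metric.isClosed_closedBall.measurableSet).2
        (integrableOn_const (isCompact_closedBall _ _).measure_ne_top)
    · rw [integral_indicator Metric.isClosed_closedBall.measurableSet, setIntegral_const, smul_eq_mul]
      rw [Measure.real]
      exact le_of_eq (by ring)
  have hm : ∀ α : MI n N, |mono α (r⁻¹ • (y - c))| ≤ 6 ^ (N * n) := by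
    intro α
    refine mono_le α (by norm_num) ?_
    rw [norm_smul, norm_inv, Real.norm_of_nonneg hr.le, ← dist_eq_norm, inv_mul_le_iff₀ hr]
    linarith
  calc |GG θ c r g y| ≤ |g y| + |∑ α, mono α (r⁻¹ • (y - c)) * cof θ c r g α| := abs_sub _ _
    _ ≤ S + ∑ α : MI n N, 6 ^ (N * n) * (B * (volume (Metric.closedBall (0 : Euc n) n)).toReal * S) := by
        refine add_le_add (hg y ?_) ((Finset.abs_sum_le_sum_abs _ _).trans (Finset.sum_le_sum fun α _ => ?_))
        · refine hy.trans ?_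
          gcongr
          simp
        · rw [abs_mul]
          exact mul_le_mul (hm α) (hcof α) (abs_nonneg _) (by positivity)
    _ = GC n N B * S := by
        simp only [GC, Finset.sum_const, Finset.card_univ, nsmul_eq_mul]; ring

theorem GG_cont {n N : ℕ} (θ : MI n N → Euc n → ℝ) (c : Euc n) (r : ℝ) {g : Euc n → ℝ} (hg : Continuous g) :
    Continuous (GG θ c r g) := by
  unfold GG
  refine hg.sub (continuous_finset_sum _ fun α _ => Continuous.mul ((mono_cd α).continuous.comp (by fun_prop)) continuous_const)

theorem GG_mono {n N : ℕ} {B : ℝ} {θ : MI n N → Euc n → ℝ} (hθ : Dual B θ) (c : Euc n) {r : ℝ} (hr : 0 < r)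
    (β : Fin n → ℕ) (hβ : ∀ i, β i ≤ N) (y : Euc n) : GG θ c r (fun y => ∏ i, y i ^ β i) y = 0 := by
  classical
  have hex : ∃ a : MI n N → ℝ, ∀ u : Euc n, ∏ i, (c + r • u) i ^ β i = ∑ γ, a γ * mono γ u := by
    refine ⟨fun γ => ∏ i, ((β i).choose (γ i) * r ^ (γ i : ℕ) * c i ^ (β i - γ i)), fun u => ?_⟩
    have h1 : ∀ i, (c + r • u) i ^ β i = ∑ m : Fin (N + 1), ((β i).choose m * r ^ (m : ℕ) * c i ^ (β i - m)) * u i ^ (m : ℕ) := by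
      intro i
      rw [Fin.sum_univ_eq_sum_range (fun m => ((β i).choose m * r ^ (m : ℕ) * c i ^ (β i - m)) * u i ^ (m : ℕ)) (N + 1)]
      rw [← Finset.sum_subset (Finset.range_mono (Nat.succ_le_succ (hβ i)))]
      · simp only [PiLp.add_apply, PiLp.smul_apply, smul_eq_mul]
        rw [add_comm, add_pow]
        refine Finset.sum_congr rfl fun m _ => ?_
        rw [mul_pow]; ring
      · intro m _ hm
        rw [Nat.choose_eq_zero_of_lt (by simpa using hm)]
        simp
    simp_rw [h1]
    rw [Finset.prod_univ_sum, Fintype.piFinset_univ]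
    refine Finset.sum_congr rfl fun γ _ => ?_
    rw [mono, ← Finset.prod_mul_distrib]
  obtain ⟨a, ha⟩ := hex
  have hcof : ∀ α, cof θ c r (fun y => ∏ i, y i ^ β i) α = a α := by
    intro α
    rw [cof_eq θ c hr]
    simp_rw [ha, Finset.mul_sum]
    have hi : ∀ γ : MI n N, Integrable fun u : Euc n => θ α u * (a γ * mono γ u) := by
      intro γ
      have := theta_int hθ (c := 0) (r := 1) one_pos (g := fun u => a γ * mono γ u)
        (continuous_const.mul (mono_cd γ).continuous) α
      simpa using this
    rw [integral_finsetSum _ fun γ _ => hi γ]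
    have : ∀ γ : MI n N, ∫ u, θ α u * (a γ * mono γ u) = a γ * if α = γ then 1 else 0 := by
      intro γ
      rw [← hθ.dual α γ, ← integral_const_mul]
      congr 1; ext u; ring
    simp_rw [this]
    simp
  rw [GG]
  simp_rw [hcof]
  have := ha (r⁻¹ • (y - c))
  rw [smul_smul, mul_inv_cancel₀ hr.ne', one_smul, add_sub_cancel] at this
  rw [this, sub_eq_zero]
  exact Finset.sum_congr rfl fun _ _ => mul_comm _ _


/-! ### Almost everywhere bound off the level sets -/

theorem conv_tendsto {n : ℕ} {ψ f : Euc n → ℝ} (hψ : Continuous ψ) (hψc : HasCompactSupport ψ)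
    (hf : LocallyIntegrable f volume) : ∀ᵐ x ∂(volume : Measure (Euc n)),
      Filter.Tendsto (fun t => convAt ψ f t x) (nhdsWithin 0 (Ioi 0)) (nhds (f x * ∫ y, ψ y)) := by
  obtain ⟨S, hS⟩ := hψc.exists_bound_of_continuous hψ
  obtain ⟨R0, hR0⟩ := hψc.isBounded.subset_closedBall (0 : Euc n)
  set R := max R0 1 with hR
  have hRpos : 0 < R := lt_of_lt_of_le one_pos (le_max_right _ _)
  have hRs : ∀ x, R < ‖x‖ → ψ x = 0 := by
    intro x hx
    by_contra hne
    have := hR0 (subset_tsupport ψ (Function.mem_support.2 hne))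
    rw [mem_closedBall_zero_iff] at this
    have := le_max_left R0 1
    linarith
  have hS0 : 0 ≤ S := (norm_nonneg _).trans (hS 0)
  filter_upwards [IsUnifLocDoublingMeasure.ae_tendsto_average_norm_sub (volume : Measure (Euc n)) hf 1] with x hx
  have hlim := hx (l := nhdsWithin (0 : ℝ) (Ioi 0)) (fun _ => x) (fun t => R * t) (by
    refine tendsto_nhdsWithin_iff.2 ⟨?_, ?_⟩
    · have : Filter.Tendsto (fun t : ℝ => R * t) (nhds 0) (nhds (R * 0)) := (continuous_const.mul continuous_id).tendsto 0
      rw [mul_zero] at this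
      exact this.mono_left nhdsWithin_le_nhds
    · filter_upwards [self_mem_nhdsWithin] with t ht
      exact mul_pos hRpos ht) (by
    filter_upwards [self_mem_nhdsWithin] with t ht
    rw [Metric.mem_closedBall, dist_self]
    have : (0 : ℝ) < t := ht
    positivity)
  rw [tendsto_iff_norm_sub_tendsto_zero]
  set v := (volume (Metric.ball (0 : Euc n) 1)).toReal with hv
  have hlim2 := hlim.const_mul (S * (R ^ n * v))
  rw [mul_zero] at hlim2
  refine squeeze_zero' (Filter.Eventually.of_forall fun t => norm_nonneg _) ?_ hlim2
  filter_upwards [self_mem_nhdsWithin] with t ht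
  have ht : (0 : ℝ) < t := ht
  have hki : ∀ (F : Euc n → ℝ), LocallyIntegrable F volume → Integrable fun z => F z * ((t ^ n)⁻¹ * ψ (t⁻¹ • (x - z))) := by
    intro F hF
    refine loc_mul_int hF (B := (t ^ n)⁻¹ * S) ?_ ?_ x (R * t) ?_
    · exact (by fun_prop : Continuous _).aestronglyMeasurable
    · intro z
      rw [abs_mul, abs_of_pos (by positivity : 0 < (t ^ n)⁻¹)]
      gcongr
      exact hS _
    · intro z hz
      rw [hRs, mul_zero]
      rw [norm_smul, norm_inv, Real.norm_of_nonneg ht.le, ← dist_eq_norm, dist_comm, lt_inv_mul_iff₀ ht]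
      linarith
  have hone : ∫ z : Euc n, ((t ^ n)⁻¹ * ψ (t⁻¹ • (x - z))) = ∫ y, ψ y := by
    rw [integral_sub_left_eq_self (fun w => (t ^ n)⁻¹ * ψ (t⁻¹ • w)) volume x]
    exact integral_dil ψ ht
  have e1 : convAt ψ f t x - f x * ∫ y, ψ y = ∫ z, (f z - f x) * ((t ^ n)⁻¹ * ψ (t⁻¹ • (x - z))) := by
    rw [convAt, ← hone, ← integral_const_mul, ← integral_sub (hki f hf) (hki (fun _ => f x) (locallyIntegrable_const _))]
    congr 1; ext z; ring
  rw [e1]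
  have hI : IntegrableOn (fun z => ‖f z - f x‖) (Metric.closedBall x (R * t)) volume :=
    ((hf.sub (locallyIntegrable_const (f x))).integrableOn_isCompact (isCompact_closedBall _ _)).norm
  refine (norm_integral_le_of_norm_le (g := (Metric.closedBall x (R * t)).indicator
    (fun z => ‖f z - f x‖ * ((t ^ n)⁻¹ * S))) ((integrable_indicator_iff Metric.isClosed_closedBall.measurableSet).2
      (hI.mul_const _)) (Filter.Eventually.of_forall fun z => ?_)).trans ?_
  · by_cases hz : z ∈ Metric.closedBall x (R * t)
    · rw [indicator_of_mem hz, norm_mul]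
      gcongr
      rw [norm_mul, Real.norm_of_nonneg (by positivity : 0 ≤ (t ^ n)⁻¹)]
      gcongr
      exact hS _
    · rw [indicator_of_notMem hz, hRs, mul_zero, mul_zero, norm_zero]
      rw [Metric.mem_closedBall, not_le] at hz
      rw [norm_smul, norm_inv, Real.norm_of_nonneg ht.le, ← dist_eq_norm, dist_comm, lt_inv_mul_iff₀ ht]
      linarith
  · rw [integral_indicator Metric.isClosed_closedBall.measurableSet, integral_mul_const, setAverage_eq, smul_eq_mul]
    have hvol : volume.real (Metric.closedBall x (R * t)) = (R * t) ^ n * v := by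
      rw [Measure.real, vol_cball x (by positivity), ENNReal.toReal_mul, ENNReal.toReal_ofReal (by positivity)]
    have hvpos : 0 < v := ENNReal.toReal_pos (Metric.measure_ball_pos _ _ one_pos).ne' Metric.isBounded_ball.measure_lt_top.ne
    rw [hvol, mul_pow]
    apply le_of_eq
    field_simp

theorem ae_bound {n : ℕ} {ψ f : Euc n → ℝ} (hψ : Continuous ψ) (hψc : HasCompactSupport ψ)
    (hf : LocallyIntegrable f volume) (M : ℕ) : ∀ᵐ x ∂(volume : Measure (Euc n)), ∀ κ : ℤ,
      x ∉ Vset ψ f M κ → |f x| * |∫ y, ψ y| ≤ (2 : ℝ) ^ κ := by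
  filter_upwards [conv_tendsto hψ hψc hf] with x hx κ hκ
  rw [← abs_mul]
  refine le_of_tendsto hx.abs ?_
  filter_upwards [self_mem_nhdsWithin] with t ht
  have ht : (0 : ℝ) < t := ht
  simpa using Vset_compl hκ 0 x t ht (by simpa using ht)


/-! ### One level of the decomposition -/

structure Lv (n : ℕ) (ε : ℝ) (L : ℕ) (K : ℝ) where
  Ω : Set (Euc n)
  J : Set ℕ
  c : ℕ → Euc n
  r : ℕ → ℝ
  η : ℕ → Euc n → ℝ
  W : Whit ε Ω J c r
  nn : ∀ j x, 0 ≤ η j x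
  sp : ∀ j x, η j x ≠ 0 → j ∈ J ∧ dist x (c j) ≤ 6 * r j
  sm : ∀ x ∈ Ω, HasSum (fun j => η j x) 1
  bd : ∀ j ∈ J, Bd L K (r j) (η j)

namespace Lv

variable {n : ℕ} {ε : ℝ} {L : ℕ} {K : ℝ} (D : Lv n ε L K)

theorem sub {j : ℕ} {x : Euc n} (h : D.η j x ≠ 0) : x ∈ D.Ω := by
  obtain ⟨hj, hd⟩ := D.sp j x h
  exact D.W.sub hj (by linarith [D.W.pos j hj])

theorem off {j : ℕ} (hj : j ∉ D.J) (x : Euc n) : D.η j x = 0 := by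
  by_contra h
  exact hj (D.sp j x h).1

theorem off2 {x : Euc n} (hx : x ∉ D.Ω) (j : ℕ) : D.η j x = 0 := by
  by_contra h
  exact hx (D.sub h)

theorem hasSum (x : Euc n) : HasSum (fun j => D.η j x) (D.Ω.indicator (fun _ => (1 : ℝ)) x) := by
  by_cases hx : x ∈ D.Ω
  · rw [indicator_of_mem hx]; exact D.sm x hx
  · rw [indicator_of_notMem hx]
    simp only [D.off2 hx]
    exact hasSum_zero

theorem sum_le (x : Euc n) (F : Finset ℕ) : ∑ j ∈ F, D.η j x ≤ D.Ω.indicator (fun _ => (1 : ℝ)) x :=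
  sum_le_hasSum F (fun j _ => D.nn j x) (D.hasSum x)

theorem sum_le_one (x : Euc n) (F : Finset ℕ) : ∑ j ∈ F, D.η j x ≤ 1 :=
  (D.sum_le x F).trans (indicator_le_self' (fun _ _ => zero_le_one) x)

theorem le_one (j : ℕ) (x : Euc n) : D.η j x ≤ 1 := by
  simpa using D.sum_le_one x {j}

theorem abs_le (j : ℕ) (x : Euc n) : |D.η j x| ≤ 1 := by
  rw [abs_of_nonneg (D.nn j x)]; exact D.le_one j x

theorem cont (j : ℕ) : Continuous (D.η j) := by
  by_cases hj : j ∈ D.J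
  · exact (D.bd j hj).cd.continuous
  · have : D.η j = fun _ => 0 := funext (D.off hj)
    rw [this]; exact continuous_const

theorem far {j : ℕ} {x : Euc n} (hx : 6 * D.r j < dist x (D.c j)) : D.η j x = 0 := by
  by_contra h
  linarith [(D.sp j x h).2]

/-- Uniform moment bounds at height `V`. -/
def GBd (N : ℕ) (f : Euc n → ℝ) (A V : ℝ) : Prop := ∀ j ∈ D.J, ∀ (χ : Euc n → ℝ) (K' : ℝ), Bd L K' (D.r j) χ →
  ∀ α : MI n N, |mom (D.c j) (D.r j) (fun x => f x * (D.η j x * χ x)) α| ≤ A * K' * V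

end Lv

theorem grand_mom {n : ℕ} (N : ℕ) (ψ : Euc n → ℝ) (hψ : Continuous ψ) (hψc : HasCompactSupport ψ)
    (hψi : ∫ x, ψ x ≠ 0) (M : ℕ) (ε : ℝ) (hε : 0 < ε) : ∃ L, ∀ K : ℝ, 0 ≤ K → ∃ A : ℝ, 0 ≤ A ∧
      ∀ f : Euc n → ℝ, LocallyIntegrable f volume → ∀ (κ : ℤ) (D : Lv n ε L K), D.Ω = Vset ψ f M κ →
        D.GBd N f A ((2 : ℝ) ^ κ) := by
  classical
  set I := ∫ x, ψ x with hI
  have hψ1 : ∫ x, I⁻¹ * ψ x = 1 := by rw [integral_const_mul, ← hI, inv_mul_cancel₀ hψi]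
  obtain ⟨L, hL⟩ := exists_grand (fun x => I⁻¹ * ψ x) (continuous_const.mul hψ) hψc.mul_left hψ1 M
  refine ⟨L, fun K hK => ?_⟩
  obtain ⟨C, hC0, hC⟩ := hL (1 / ε + 6) (by positivity)
  let Φ : ContDiffBump (0 : Euc n) := ⟨6, 7, by norm_num, by norm_num⟩
  have hsc : ∀ α : MI n N, ∃ K1 : ℝ, 1 ≤ K1 ∧ ∀ (c : Euc n) (r : ℝ), 0 < r →
      Bd L K1 r (fun x => (fun u => Φ u * mono α u) (r⁻¹ • (x - c))) := fun α =>
    Bd.scale L (fun u => Φ u * mono α u) (Φ.contDiff.mul (mono_cd α)) Φ.hasCompactSupport.mul_right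
  choose K1 hK1 hsc using hsc
  have hK1' : ∀ α, K1 α ≤ ∑ β, K1 β := fun α =>
    Finset.single_le_sum (f := K1) (fun β _ => by linarith [hK1 β]) (Finset.mem_univ α)
  set Ks := ∑ β, K1 β with hKs
  have hKs0 : 0 ≤ Ks := Finset.sum_nonneg fun β _ => by linarith [hK1 β]
  refine ⟨C * (2 ^ L * (2 ^ L * K) * Ks) * |I|⁻¹, by positivity, ?_⟩
  intro f hf κ D hD j hj χ K' hχ α
  have hr := D.W.pos j hj
  have hK' := hχ.K_nonneg
  set φ : Euc n → ℝ := fun x => (D.η j x * χ x) * (fun u => Φ u * mono α u) ((D.r j)⁻¹ • (x - D.c j)) with hφ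
  have hb : Bd L (2 ^ L * (2 ^ L * K * K') * Ks) (D.r j) φ :=
    (((D.bd j hj).mul hr hχ).mul hr (hsc α (D.c j) (D.r j) hr)).mono hr (by gcongr; exact hK1' α)
  obtain ⟨x0, hx0, hdx⟩ := D.W.opn.isClosed_compl.exists_infDist_eq_dist D.W.ne (D.c j)
  have hrad := D.W.rad j hj
  rw [hdx] at hrad
  have hcb : CB x0 ((1 / ε + 6) * D.r j) φ := by
    refine ⟨hb.cd.continuous, fun x hx => ?_⟩
    simp only [hφ]
    rw [D.far, zero_mul, zero_mul]
    have e : 1 / ε * D.r j = dist (D.c j) x0 := by rw [hrad]; field_simp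
    have := dist_triangle x (D.c j) x0
    rw [add_mul, e] at hx
    linarith
  have key := hC f hf x0 (D.r j) ((2 : ℝ) ^ κ * |I|⁻¹) _ hr (by positivity) hb.K_nonneg (by
    intro s y t ht hd
    have e : convAt (fun x => I⁻¹ * ψ x) f t y = I⁻¹ * convAt ψ f t y := by
      simp only [convAt]
      rw [← integral_const_mul]
      congr 1; ext z; ring
    rw [e, abs_mul, abs_inv]
    have := Vset_compl (x := x0) (by rw [← hD]; exact hx0) s y t ht hd
    calc |I|⁻¹ * |convAt ψ f t y| ≤ |I|⁻¹ * ((2 : ℝ) ^ κ * (2 ^ M) ^ s) := by gcongr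
      _ = _ := by ring) φ hcb hb.toSm.1 hb.toSm.2
  have e : (fun y => f y * (D.η j y * χ y) * mono α ((D.r j)⁻¹ • (y - D.c j))) = fun y => f y * φ y := by
    ext y
    simp only [hφ]
    by_cases hy : D.η j y = 0
    · simp [hy]
    · have h1 : Φ ((D.r j)⁻¹ • (y - D.c j)) = 1 := by
        apply Φ.one_of_mem_closedBall
        rw [mem_closedBall_zero_iff, norm_smul, norm_inv, Real.norm_of_nonneg hr.le, ← dist_eq_norm, inv_mul_le_iff₀ hr]
        have := (D.sp j y hy).2
        show _ ≤ D.r j * 6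
        linarith
      rw [h1]; ring
  rw [mom, e, abs_mul, abs_of_pos (by positivity), inv_mul_le_iff₀ (by positivity)]
  refine key.trans (le_of_eq ?_)
  ring

/-! ### Interchanging sums and integrals -/

theorem swap_sum {n : ℕ} {ι : Type*} [Countable ι] {F : ι → Euc n → ℝ} (hF : ∀ i, Integrable (F i)) {H : Euc n → ℝ}
    (hH : Integrable H) (hb : ∀ (s : Finset ι) x, ∑ i ∈ s, |F i x| ≤ H x) :
    HasSum (fun i => ∫ x, F i x) (∫ x, ∑' i, F i x) ∧ (∀ s : Finset ι, ∑ i ∈ s, |∫ x, F i x| ≤ ∫ x, H x) ∧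
      Integrable (fun x => ∑' i, F i x) ∧ ∀ x, |∑' i, F i x| ≤ H x := by
  have hsx : ∀ x, Summable fun i => |F i x| := fun x =>
    summable_of_sum_le (fun _ => abs_nonneg _) fun s => hb s x
  have hle : ∀ x, |∑' i, F i x| ≤ H x := by
    intro x
    have h1 := norm_tsum_le_tsum_norm (f := fun i => F i x) (hsx x)
    exact h1.trans ((hsx x).tsum_le_of_sum_le fun s => hb s x)
  have hs : ∀ s : Finset ι, ∑ i ∈ s, ∫ x, |F i x| ≤ ∫ x, H x := by
    intro s
    rw [← integral_finsetSum _ fun i _ => (hF i).abs]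
    exact integral_mono (integrable_finsetSum _ fun i _ => (hF i).abs) hH fun x => hb s x
  refine ⟨hasSum_integral_of_summable_integral_norm hF (summable_of_sum_le (fun i => integral_nonneg fun _ => norm_nonneg _) hs),
    fun s => (Finset.sum_le_sum fun i _ => abs_integral_le_integral_abs).trans (hs s), ?_, hle⟩
  refine hH.mono' ?_ (Filter.Eventually.of_forall hle)
  have : AEMeasurable (fun x => ∑' i, F i x) volume := by
    have h := aemeasurable_of_tendsto_metrizable_ae (u := (Filter.atTop : Filter (Finset ι)))
      (f := fun s x => ∑ i ∈ s, F i x) (g := fun x => ∑' i, F i x) (μ := volume)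
      (fun s => Finset.aemeasurable_fun_sum _ fun i _ => (hF i).aemeasurable)
      (Filter.Eventually.of_forall fun x => (Summable.of_abs (hsx x)).hasSum)
    exact h
  exact this.aestronglyMeasurable


theorem loc_cont_int {n : ℕ} {f k : Euc n → ℝ} (hf : LocallyIntegrable f volume) (hk : Continuous k)
    (c : Euc n) (R : ℝ) (hs : ∀ x, R < dist x c → k x = 0) : Integrable (fun x => f x * k x) := by
  obtain ⟨B, hB⟩ := CB.bdd (x0 := c) (a := R) ⟨hk, hs⟩
  exact loc_mul_int hf hk.aestronglyMeasurable hB c R hs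

theorem TT_zero {n N : ℕ} (θ : MI n N → Euc n → ℝ) (c : Euc n) (r : ℝ) {h : Euc n → ℝ} (hh : ∀ x, h x = 0) (x : Euc n) :
    TT θ c r h x = 0 := by
  refine Finset.sum_eq_zero fun α _ => ?_
  simp [mom, hh]

theorem cube_of_dist {n : ℕ} {c x : Euc n} {r : ℝ} (h : dist x c ≤ r) : x ∈ cube c r := by
  intro i
  have := PiLp.norm_apply_le (x - c) i
  rw [← dist_eq_norm] at this
  exact this.trans h

namespace Lv

variable {n : ℕ} {ε : ℝ} {L : ℕ} {K : ℝ} (D : Lv n ε L K)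

theorem overlap {Λ : ℝ} (hΛ : 0 ≤ Λ) (hΛε : Λ * ε ≤ 1 / 2) {t : ℕ → ℝ} {x : Euc n} {Q : ℝ} (hQ0 : 0 ≤ Q)
    (ht : ∀ j, t j ≠ 0 → j ∈ D.J ∧ dist x (D.c j) ≤ Λ * D.r j) (hQ : ∀ j, |t j| ≤ Q) (F : Finset ℕ) :
    ∑ j ∈ F, |t j| ≤ (3 * (Λ + 1)) ^ n * Q := by
  classical
  rw [← Finset.sum_filter_ne_zero]
  have hc := D.W.count Λ hΛ hΛε x (F.filter fun j => |t j| ≠ 0) (by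
    intro j hj
    exact ht j (by simpa using (Finset.mem_filter.1 hj).2))
  calc _ ≤ ∑ j ∈ F.filter (fun j => |t j| ≠ 0), Q := Finset.sum_le_sum fun j _ => hQ j
    _ = (F.filter fun j => |t j| ≠ 0).card * Q := by simp
    _ ≤ _ := by gcongr

variable {N : ℕ} {B : ℝ} {θ : MI n N → Euc n → ℝ}

/-- single level correction -/
def T1 (θ : MI n N → Euc n → ℝ) (f : Euc n → ℝ) (j : ℕ) (x : Euc n) : ℝ :=
  TT θ (D.c j) (D.r j) (fun x => f x * D.η j x) x

/-- double level correction -/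
def T2 (D' : Lv n ε L K) (θ : MI n N → Euc n → ℝ) (f : Euc n → ℝ) (j l : ℕ) (x : Euc n) : ℝ :=
  TT θ (D'.c l) (D'.r l) (fun x => f x * (D'.η l x * D.η j x)) x

theorem T1_ne (hθ : Dual B θ) {f : Euc n → ℝ} {j : ℕ} {x : Euc n} (h : D.T1 θ f j x ≠ 0) :
    j ∈ D.J ∧ x ∈ cube (D.c j) (D.r j) := by
  have hj : j ∈ D.J := by
    by_contra hj
    exact h (TT_zero _ _ _ (fun x => by rw [D.off hj, mul_zero]) x)
  refine ⟨hj, ?_⟩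
  by_contra hx
  exact h (TT_supp hθ (D.W.pos j hj) _ hx)

theorem T1_bdd (hθ : Dual B θ) (hB : 0 ≤ B) {f : Euc n → ℝ} {A V : ℝ} (hA : 0 ≤ A) (hV : 0 ≤ V) (hG : D.GBd N f A V) (j : ℕ) (x : Euc n) :
    |D.T1 θ f j x| ≤ Fintype.card (MI n N) * (A * 1 * V * B) := by
  by_cases h : D.T1 θ f j x = 0
  · rw [h, abs_zero]; positivity
  · obtain ⟨hj, -⟩ := D.T1_ne hθ h
    have := hG j hj (fun _ => 1) 1 (by simpa using Bd.const (n := n) (L := L) 1 (D.r j) (D.W.pos j hj))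
    simp only [mul_one] at this ⊢
    have h2 := TT_bdd hθ (D.c j) (D.r j) _ this x
    exact h2

theorem T1_sum (hθ : Dual B θ) (hB : 0 ≤ B) (hnε : n * ε ≤ 1 / 2) {f : Euc n → ℝ} {A V : ℝ} (hA : 0 ≤ A) (hV : 0 ≤ V) (hG : D.GBd N f A V)
    (F : Finset ℕ) (x : Euc n) :
    ∑ j ∈ F, |D.T1 θ f j x| ≤ (3 * ((n : ℝ) + 1)) ^ n * (Fintype.card (MI n N) * (A * 1 * V * B)) :=
  D.overlap (Λ := n) (by positivity) hnε (by positivity) (fun j hj => by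
    obtain ⟨h1, h2⟩ := D.T1_ne hθ hj
    exact ⟨h1, cube_norm (D.W.pos j h1).le h2⟩) (fun j => D.T1_bdd hθ hB hA hV hG j x) F

theorem near {D' : Lv n ε L K} (hsub : D'.Ω ⊆ D.Ω) {j l : ℕ} {z : Euc n} (hz : D'.η l z * D.η j z ≠ 0) :
    l ∈ D'.J ∧ j ∈ D.J ∧ D'.r l ≤ 2 * D.r j ∧ dist (D'.c l) (D.c j) ≤ 6 * D'.r l + 6 * D.r j := by
  obtain ⟨h1, h2⟩ := D'.sp l z (left_ne_zero_of_mul hz)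
  obtain ⟨h3, h4⟩ := D.sp j z (right_ne_zero_of_mul hz)
  have hd : dist (D'.c l) (D.c j) ≤ 6 * D'.r l + 6 * D.r j := by
    have := dist_triangle (D'.c l) z (D.c j)
    rw [dist_comm (D'.c l) z] at this
    linarith
  exact ⟨h1, h3, D'.W.compar D.W hsub h1 h3 hd, hd⟩

theorem T2_ne {D' : Lv n ε L K} (hsub : D'.Ω ⊆ D.Ω) (hθ : Dual B θ) {f : Euc n → ℝ} {j l : ℕ} {x : Euc n} (h : D.T2 D' θ f j l x ≠ 0) :
    l ∈ D'.J ∧ j ∈ D.J ∧ D'.r l ≤ 2 * D.r j ∧ x ∈ cube (D'.c l) (D'.r l) ∧ x ∈ cube (D.c j) (20 * D.r j) := by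
  have hz : ∃ z, D'.η l z * D.η j z ≠ 0 := by
    by_contra! hz
    exact h (TT_zero _ _ _ (fun x => by rw [hz, mul_zero]) x)
  obtain ⟨z, hz⟩ := hz
  obtain ⟨hl, hj, hr, hd⟩ := D.near hsub hz
  have hx : x ∈ cube (D'.c l) (D'.r l) := by
    by_contra hx
    exact h (TT_supp hθ (D'.W.pos l hl) _ hx)
  refine ⟨hl, hj, hr, hx, fun i => ?_⟩
  have h1 := cube_of_dist hd i
  have h2 := hx i
  have h3 := abs_add_le (x i - D'.c l i) (D'.c l i - D.c j i)
  rw [sub_add_sub_cancel] at h3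
  linarith

theorem T2_bdd {D' : Lv n ε L K} (hsub : D'.Ω ⊆ D.Ω) (hθ : Dual B θ) (hB : 0 ≤ B) (hK : 0 ≤ K) {f : Euc n → ℝ} {A V : ℝ} (hA : 0 ≤ A)
    (hV : 0 ≤ V) (hG : D'.GBd N f A V) (j l : ℕ) (x : Euc n) :
    |D.T2 D' θ f j l x| ≤ Fintype.card (MI n N) * (A * (2 ^ L * K) * V * B) := by
  by_cases h : D.T2 D' θ f j l x = 0
  · rw [h, abs_zero]; positivity
  · obtain ⟨hl, hj, hr, -⟩ := D.T2_ne hsub hθ h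
    have := hG l hl (D.η j) (2 ^ L * K) ((D.bd j hj).radius (D.W.pos j hj) (D'.W.pos l hl) hr)
    exact TT_bdd hθ (D'.c l) (D'.r l) _ this x

theorem T2_sum {D' : Lv n ε L K} (hsub : D'.Ω ⊆ D.Ω) (hθ : Dual B θ) (hB : 0 ≤ B) (hK : 0 ≤ K) (hnε : n * ε ≤ 1 / 2)
    {f : Euc n → ℝ} {A V : ℝ} (hA : 0 ≤ A) (hV : 0 ≤ V) (hG : D'.GBd N f A V) (j : ℕ) (F : Finset ℕ) (x : Euc n) :
    ∑ l ∈ F, |D.T2 D' θ f j l x| ≤ (cube (D.c j) (20 * D.r j)).indicator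
      (fun _ => (3 * ((n : ℝ) + 1)) ^ n * (Fintype.card (MI n N) * (A * (2 ^ L * K) * V * B))) x := by
  by_cases hx : x ∈ cube (D.c j) (20 * D.r j)
  · rw [indicator_of_mem hx]
    exact D'.overlap (Λ := n) (by positivity) hnε (by positivity) (fun l hl => by
      obtain ⟨h1, -, -, h2, -⟩ := D.T2_ne hsub hθ hl
      exact ⟨h1, cube_norm (D'.W.pos l h1).le h2⟩) (fun l => D.T2_bdd hsub hθ hB hK hA hV hG j l x) F
  · rw [indicator_of_notMem hx]
    refine (Finset.sum_eq_zero fun l _ => ?_).le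
    by_contra h
    exact hx (D.T2_ne hsub hθ (abs_ne_zero.1 h)).2.2.2.2

/-- The (unnormalised) atoms. -/
def Aj (D' : Lv n ε L K) (θ : MI n N → Euc n → ℝ) (f : Euc n → ℝ) (j : ℕ) (x : Euc n) : ℝ :=
  (D'.Ωᶜ).indicator (fun x => f x * D.η j x) x - D.T1 θ f j x + ∑' l, D.T2 D' θ f j l x

theorem T2_summable {D' : Lv n ε L K} (hsub : D'.Ω ⊆ D.Ω) (hθ : Dual B θ) (hB : 0 ≤ B) (hK : 0 ≤ K) (hnε : n * ε ≤ 1 / 2)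
    {f : Euc n → ℝ} {A V : ℝ} (hA : 0 ≤ A) (hV : 0 ≤ V) (hG : D'.GBd N f A V) (j : ℕ) (x : Euc n) :
    Summable fun l => |D.T2 D' θ f j l x| :=
  summable_of_sum_le (fun _ => abs_nonneg _) fun F => D.T2_sum hsub hθ hB hK hnε hA hV hG j F x

theorem Aj_meas {D' : Lv n ε L K} (hsub : D'.Ω ⊆ D.Ω) (hθ : Dual B θ) (hB : 0 ≤ B) (hK : 0 ≤ K) (hnε : n * ε ≤ 1 / 2)
    {f : Euc n → ℝ} (hfm : Measurable f) {A V : ℝ} (hA : 0 ≤ A) (hV : 0 ≤ V) (hG : D'.GBd N f A V) (j : ℕ) :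
    Measurable (D.Aj D' θ f j) := by
  refine Measurable.add (Measurable.sub ?_ (TT_meas hθ _ _ _)) ?_
  · exact (hfm.mul (D.cont j).measurable).indicator D'.W.opn.measurableSet.compl
  · exact measurable_of_tendsto_metrizable' (Filter.atTop : Filter (Finset ℕ))
      (f := fun s x => ∑ l ∈ s, D.T2 D' θ f j l x)
      (fun s => Finset.measurable_sum _ fun l _ => TT_meas hθ _ _ _)
      (tendsto_pi_nhds.2 fun x => (Summable.of_abs (D.T2_summable hsub hθ hB hK hnε hA hV hG j x)).hasSum)

theorem Aj_supp {D' : Lv n ε L K} (hsub : D'.Ω ⊆ D.Ω) (hθ : Dual B θ) {f : Euc n → ℝ} {j : ℕ} (hj : j ∈ D.J) {x : Euc n}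
    (hx : x ∉ cube (D.c j) (20 * D.r j)) : D.Aj D' θ f j x = 0 := by
  have hr := D.W.pos j hj
  have h1 : D.η j x = 0 := by
    apply D.far
    by_contra! h
    exact hx (cube_of_dist (by linarith))
  have h2 : D.T1 θ f j x = 0 := by
    by_contra h
    apply hx
    intro i
    have := (D.T1_ne hθ h).2 i
    linarith
  have h3 : ∀ l, D.T2 D' θ f j l x = 0 := by
    intro l
    by_contra h
    exact hx (D.T2_ne hsub hθ h).2.2.2.2
  have h4 : (D'.Ωᶜ).indicator (fun x => f x * D.η j x) x = 0 := by
    rw [indicator_apply_eq_zero]; intro _; rw [h1, mul_zero]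
  simp [Aj, h2, h3, h4]

theorem Aj_bdd {D' : Lv n ε L K} (hsub : D'.Ω ⊆ D.Ω) (hθ : Dual B θ) (hB : 0 ≤ B) (hK : 0 ≤ K) (hnε : n * ε ≤ 1 / 2)
    {f : Euc n → ℝ} {A V V' : ℝ} (hA : 0 ≤ A) (hV : 0 ≤ V) (hV' : 0 ≤ V') (hG : D.GBd N f A V) (hG' : D'.GBd N f A V')
    {Z : ℝ} (hZ : 0 ≤ Z) (j : ℕ) (x : Euc n) (hx : x ∉ D'.Ω → |f x| ≤ Z) :
    |D.Aj D' θ f j x| ≤ Z + Fintype.card (MI n N) * (A * 1 * V * B) +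
      (3 * ((n : ℝ) + 1)) ^ n * (Fintype.card (MI n N) * (A * (2 ^ L * K) * V' * B)) := by
  have hs := D.T2_summable hsub hθ hB hK hnε hA hV' hG' j x
  refine (abs_add_le _ _).trans (add_le_add ((abs_sub _ _).trans (add_le_add ?_ (D.T1_bdd hθ hB hA hV hG j x))) ?_)
  · by_cases h : x ∈ (D'.Ω)ᶜ
    · rw [indicator_of_mem h, abs_mul]
      exact (mul_le_of_le_one_right (abs_nonneg _) (D.abs_le j x)).trans (hx h)
    · rw [indicator_of_notMem h, abs_zero]; exact hZ
  · refine (norm_tsum_le_tsum_norm (f := fun l => D.T2 D' θ f j l x) hs).trans (hs.tsum_le_of_sum_le fun F => ?_)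
    refine (D.T2_sum hsub hθ hB hK hnε hA hV' hG' j F x).trans ?_
    exact indicator_le_self' (fun _ _ => by positivity) x

theorem η_int {f : Euc n → ℝ} (hf : LocallyIntegrable f volume) (j : ℕ) {k : Euc n → ℝ} (hk : Continuous k) :
    Integrable fun x => f x * D.η j x * k x := by
  have := loc_cont_int hf ((D.cont j).mul hk) (D.c j) (6 * D.r j) (fun x hx => by simp [D.far hx])
  simpa only [mul_assoc, Pi.mul_apply] using this

theorem η2_int (D' : Lv n ε L K) {f : Euc n → ℝ} (hf : LocallyIntegrable f volume) (j l : ℕ) {k : Euc n → ℝ} (hk : Continuous k) :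
    Integrable fun x => f x * (D'.η l x * D.η j x) * k x := by
  have := D'.η_int hf l ((D.cont j).mul hk)
  simpa only [mul_assoc, Pi.mul_apply] using this

theorem Aj_pair {D' : Lv n ε L K} (hsub : D'.Ω ⊆ D.Ω) (hθ : Dual B θ) (hB : 0 ≤ B) (hK : 0 ≤ K) (hnε : n * ε ≤ 1 / 2)
    {f : Euc n → ℝ} (hf : LocallyIntegrable f volume) {A V : ℝ} (hA : 0 ≤ A) (hV : 0 ≤ V) (hG : D'.GBd N f A V) {j : ℕ} (hj : j ∈ D.J)
    {g : Euc n → ℝ} (hg : Continuous g) :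
    HasSum (fun l => ∫ x, f x * (D'.η l x * D.η j x) * GG θ (D'.c l) (D'.r l) g x)
      ((∫ x, f x * D.η j x * GG θ (D.c j) (D.r j) g x) - ∫ x, D.Aj D' θ f j x * g x) := by
  have hr := D.W.pos j hj
  have hcm : MeasurableSet (cube (D.c j) (20 * D.r j)) := by
    have : cube (D.c j) (20 * D.r j) = ⋂ i, {y : Euc n | |y i - D.c j i| ≤ 20 * D.r j} := by
      ext y; simp [cube]
    rw [this]
    exact MeasurableSet.iInter fun i => (isClosed_le (by fun_prop) continuous_const).measurableSet
  -- first interchange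
  set Q := (3 * ((n : ℝ) + 1)) ^ n * (Fintype.card (MI n N) * (A * (2 ^ L * K) * V * B)) with hQ
  have hHint : Integrable fun x => |g x| * (cube (D.c j) (20 * D.r j)).indicator (fun _ => Q) x := by
    refine loc_mul_int hg.abs.locallyIntegrable (aestronglyMeasurable_const.indicator hcm) (B := |Q|) ?_ (D.c j) (n * (20 * D.r j)) ?_
    · intro x
      by_cases hx : x ∈ cube (D.c j) (20 * D.r j)
      · rw [indicator_of_mem hx]
      · rw [indicator_of_notMem hx, abs_zero]; exact abs_nonneg _
    · intro x hx
      apply indicator_of_notMem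
      intro h
      linarith [cube_norm (by positivity) h]
  have hT2g : ∀ l, Integrable fun x => D.T2 D' θ f j l x * g x := by
    intro l
    by_cases hl : l ∈ D'.J
    · exact TT_int hθ (D'.W.pos l hl) hg _
    · have : ∀ x, D.T2 D' θ f j l x * g x = 0 := by
        intro x
        rw [T2, TT_zero, zero_mul]
        intro y; rw [D'.off hl]; simp
      simp only [this]; exact integrable_zero _ _ _
  obtain ⟨s1, -, i1, -⟩ := swap_sum (F := fun l x => D.T2 D' θ f j l x * g x) hT2g hHint (by
    intro s x
    simp only [abs_mul]
    rw [← Finset.sum_mul, mul_comm]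
    exact mul_le_mul_of_nonneg_left (D.T2_sum hsub hθ hB hK hnε hA hV hG j s x) (abs_nonneg _))
  simp only [tsum_mul_right] at s1 i1
  -- second interchange
  have hjg := D.η_int hf j hg
  obtain ⟨s2, -, i2, -⟩ := swap_sum (F := fun l x => f x * (D'.η l x * D.η j x) * g x) (fun l => D.η2_int D' hf j l hg) hjg.abs (by
    intro s x
    have e : ∀ l, |f x * (D'.η l x * D.η j x) * g x| = |f x * D.η j x * g x| * D'.η l x := by
      intro l
      rw [← abs_of_nonneg (D'.nn l x), ← abs_mul, abs_of_nonneg (D'.nn l x)]; congr 1; ring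
    simp only [e]
    rw [← Finset.mul_sum]
    exact mul_le_of_le_one_right (abs_nonneg _) (D'.sum_le_one x s))
  have e2 : ∀ x, ∑' l, f x * (D'.η l x * D.η j x) * g x = D'.Ω.indicator (fun x => f x * D.η j x * g x) x := by
    intro x
    have := ((D'.hasSum x).mul_left (f x * D.η j x * g x)).tsum_eq
    rw [show (fun l => f x * (D'.η l x * D.η j x) * g x) = fun l => f x * D.η j x * g x * D'.η l x by ext l; ring, this]
    by_cases hx : x ∈ D'.Ω <;> simp [hx]
  simp only [e2] at s2 i2
  have s3 := s2.sub s1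
  have hterm : ∀ l, ∫ x, f x * (D'.η l x * D.η j x) * GG θ (D'.c l) (D'.r l) g x =
      (∫ x, f x * (D'.η l x * D.η j x) * g x) - ∫ x, D.T2 D' θ f j l x * g x := by
    intro l
    by_cases hl : l ∈ D'.J
    · refine pairing hθ (D'.W.pos l hl) hg (R := 6 * D'.r l) ?_ ?_ (D.η2_int D' hf j l hg)
      · simpa using D.η2_int D' hf j l (k := fun _ => 1) continuous_const
      · intro x hx; rw [D'.far hx]; simp
    · have : ∀ x, D.T2 D' θ f j l x * g x = 0 := by
        intro x
        rw [T2, TT_zero, zero_mul]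
        intro y; rw [D'.off hl]; simp
      simp [this, D'.off hl]
  simp only [hterm]
  have e3 : ∫ x, f x * D.η j x * GG θ (D.c j) (D.r j) g x = (∫ x, f x * D.η j x * g x) - ∫ x, D.T1 θ f j x * g x := by
    refine pairing hθ hr hg (R := 6 * D.r j) ?_ ?_ hjg
    · simpa using D.η_int hf j (k := fun _ => 1) continuous_const
    · intro x hx; rw [D.far hx]; simp
  have hT1g : Integrable fun x => D.T1 θ f j x * g x := TT_int hθ hr hg _
  have e4 : ∫ x, D.Aj D' θ f j x * g x = (∫ x, (D'.Ωᶜ).indicator (fun x => f x * D.η j x * g x) x) - (∫ x, D.T1 θ f j x * g x)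
      + ∫ x, (∑' l, D.T2 D' θ f j l x) * g x := by
    have h6 : Integrable fun x => (D'.Ωᶜ).indicator (fun x => f x * D.η j x * g x) x - D.T1 θ f j x * g x :=
      (hjg.indicator D'.W.opn.measurableSet.compl).sub hT1g
    rw [← integral_sub (hjg.indicator D'.W.opn.measurableSet.compl) hT1g, ← integral_add h6 i1]
    congr 1; ext x
    simp only [Aj, Pi.sub_apply]
    by_cases hx : x ∈ D'.Ω
    · simp [hx]; ring
    · simp [hx]; ring
  have e5 : (∫ x, (D'.Ωᶜ).indicator (fun x => f x * D.η j x * g x) x) + ∫ x, D'.Ω.indicator (fun x => f x * D.η j x * g x) x =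
      ∫ x, f x * D.η j x * g x := by
    rw [← integral_add (hjg.indicator D'.W.opn.measurableSet.compl) i2]
    congr 1; ext x
    by_cases hx : x ∈ D'.Ω <;> simp [hx]
  have e6 : (∫ x, f x * D.η j x * GG θ (D.c j) (D.r j) g x) - ∫ x, D.Aj D' θ f j x * g x =
      (∫ x, D'.Ω.indicator (fun x => f x * D.η j x * g x) x) - ∫ x, (∑' l, D.T2 D' θ f j l x) * g x := by
    rw [e3, e4]; linarith
  rw [e6]
  exact s3

theorem Aj_mom {D' : Lv n ε L K} (hsub : D'.Ω ⊆ D.Ω) (hθ : Dual B θ) (hB : 0 ≤ B) (hK : 0 ≤ K) (hnε : n * ε ≤ 1 / 2)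
    {f : Euc n → ℝ} (hf : LocallyIntegrable f volume) {A V : ℝ} (hA : 0 ≤ A) (hV : 0 ≤ V) (hG : D'.GBd N f A V) {j : ℕ} (hj : j ∈ D.J)
    (β : Fin n → ℕ) (hβ : ∀ i, β i ≤ N) : ∫ x, D.Aj D' θ f j x * ∏ i, x i ^ β i = 0 := by
  have h := D.Aj_pair hsub hθ hB hK hnε hf hA hV hG hj (g := fun x => ∏ i, x i ^ β i) (by fun_prop)
  have h0 : ∀ l x, f x * (D'.η l x * D.η j x) * GG θ (D'.c l) (D'.r l) (fun x => ∏ i, x i ^ β i) x = 0 := by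
    intro l x
    by_cases hl : l ∈ D'.J
    · rw [GG_mono hθ _ (D'.W.pos l hl) β hβ, mul_zero]
    · rw [D'.off hl]; simp
  have h1 : ∀ x, f x * D.η j x * GG θ (D.c j) (D.r j) (fun x => ∏ i, x i ^ β i) x = 0 := by
    intro x
    rw [GG_mono hθ _ (D.W.pos j hj) β hβ, mul_zero]
  simp only [h0, h1, integral_zero, zero_sub] at h
  have := h.unique hasSum_zero
  linarith

end Lv

namespace Lv

variable {n : ℕ} {ε : ℝ} {L : ℕ} {K : ℝ} (D : Lv n ε L K) {N : ℕ} {B : ℝ} {θ : MI n N → Euc n → ℝ}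

theorem GG_loc (hθ : Dual B θ) (hB : 0 ≤ B) {Rb : ℝ} (hRb : ∀ j ∈ D.J, D.r j ≤ Rb) {g : Euc n → ℝ} {S R0 : ℝ}
    (hgS : ∀ x, |g x| ≤ S) (hg0 : ∀ x, R0 < ‖x‖ → g x = 0) {j : ℕ} (hj : j ∈ D.J) {x : Euc n} (hx : dist x (D.c j) ≤ 6 * D.r j) :
    |GG θ (D.c j) (D.r j) g x| ≤ (Metric.closedBall (0 : Euc n) (R0 + (12 + n) * Rb)).indicator (fun _ => GC n N B * S) x := by
  have hr := D.W.pos j hj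
  by_cases hxb : x ∈ Metric.closedBall (0 : Euc n) (R0 + (12 + n) * Rb)
  · rw [indicator_of_mem hxb]
    exact GG_bdd hB hθ hr (fun y _ => hgS y) hx
  · rw [indicator_of_notMem hxb]
    have := GG_bdd hB hθ hr (g := g) (S := 0) (fun y hy => by
      rw [hg0 y, abs_zero]
      rw [Metric.mem_closedBall, not_le, dist_zero_right] at hxb
      have h1 : ‖x‖ ≤ ‖y‖ + dist y x := by
        have := norm_add_le y (x - y)
        rw [add_sub_cancel, ← dist_eq_norm, dist_comm] at this
        exact this
      have h2 := dist_triangle y (D.c j) x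
      rw [dist_comm (D.c j) x] at h2
      have h3 : (12 + (n : ℝ)) * D.r j ≤ (12 + n) * Rb := by gcongr; exact hRb j hj
      nlinarith) hx
    simpa using this

/-- The majorant used for the tail functionals. -/
def maj (n N : ℕ) (B S R0 Rb : ℝ) (f : Euc n → ℝ) (x : Euc n) : ℝ :=
  (Metric.closedBall (0 : Euc n) (R0 + (12 + n) * Rb)).indicator (fun x => GC n N B * S * |f x|) x

theorem GC_nonneg (hB : 0 ≤ B) : 0 ≤ GC n N B := by
  unfold GC; positivity

theorem maj_nonneg (hB : 0 ≤ B) {S : ℝ} (hS : 0 ≤ S) (R0 Rb : ℝ) (f : Euc n → ℝ) (x : Euc n) : 0 ≤ maj n N B S R0 Rb f x :=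
  indicator_nonneg (fun x _ => mul_nonneg (mul_nonneg (GC_nonneg hB) hS) (abs_nonneg _)) x

theorem maj_int {f : Euc n → ℝ} (hf : LocallyIntegrable f volume) (S R0 Rb : ℝ) : Integrable (maj n N B S R0 Rb f) :=
  (integrable_indicator_iff Metric.isClosed_closedBall.measurableSet).2
    ((hf.integrableOn_isCompact (isCompact_closedBall _ _)).abs.const_mul _)

theorem maj_bd (hθ : Dual B θ) (hB : 0 ≤ B) {Rb : ℝ} (hRb : ∀ j ∈ D.J, D.r j ≤ Rb) {f g : Euc n → ℝ} {S R0 : ℝ}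
    (hgS : ∀ x, |g x| ≤ S) (hg0 : ∀ x, R0 < ‖x‖ → g x = 0) (j : ℕ) (x : Euc n) :
    |f x * D.η j x * GG θ (D.c j) (D.r j) g x| ≤ maj n N B S R0 Rb f x * D.η j x := by
  by_cases h : D.η j x = 0
  · simp [h]
  obtain ⟨hj, hd⟩ := D.sp j x h
  have h1 := D.GG_loc hθ hB hRb hgS hg0 hj hd
  rw [abs_mul, abs_mul, abs_of_nonneg (D.nn j x)]
  calc |f x| * D.η j x * |GG θ (D.c j) (D.r j) g x| ≤ |f x| * D.η j x *
        (Metric.closedBall (0 : Euc n) (R0 + (12 + n) * Rb)).indicator (fun _ => GC n N B * S) x := by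
          have := D.nn j x
          gcongr
    _ = _ := by
      rw [maj]
      by_cases hx : x ∈ Metric.closedBall (0 : Euc n) (R0 + (12 + n) * Rb)
      · rw [indicator_of_mem hx, indicator_of_mem hx]; ring
      · rw [indicator_of_notMem hx, indicator_of_notMem hx]; ring

/-- The tail functional. -/
def BB (θ : MI n N → Euc n → ℝ) (f g : Euc n → ℝ) : ℝ := ∑' j, ∫ x, f x * D.η j x * GG θ (D.c j) (D.r j) g x

theorem BB_hasSum (hθ : Dual B θ) (hB : 0 ≤ B) {Rb : ℝ} (hRb : ∀ j ∈ D.J, D.r j ≤ Rb) {f g : Euc n → ℝ}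
    (hf : LocallyIntegrable f volume) (hg : Continuous g) {S R0 : ℝ}
    (hgS : ∀ x, |g x| ≤ S) (hg0 : ∀ x, R0 < ‖x‖ → g x = 0) :
    HasSum (fun j => ∫ x, f x * D.η j x * GG θ (D.c j) (D.r j) g x) (D.BB θ f g) ∧
      |D.BB θ f g| ≤ ∫ x in D.Ω, maj n N B S R0 Rb f x := by
  have hS : 0 ≤ S := (abs_nonneg _).trans (hgS 0)
  obtain ⟨h1, h2, h3, h4⟩ := swap_sum (F := fun j x => f x * D.η j x * GG θ (D.c j) (D.r j) g x)
    (fun j => D.η_int hf j (GG_cont θ _ _ hg)) ((maj_int (N := N) (B := B) hf S R0 Rb).indicator D.W.opn.measurableSet) (by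
      intro s x
      refine (Finset.sum_le_sum fun j _ => D.maj_bd hθ hB hRb hgS hg0 j x).trans ?_
      rw [← Finset.mul_sum]
      have h5 := D.sum_le x s
      have h6 := maj_nonneg (N := N) hB hS R0 Rb f x
      by_cases hx : x ∈ D.Ω
      · rw [indicator_of_mem hx] at h5 ⊢
        exact mul_le_of_le_one_right h6 h5
      · rw [indicator_of_notMem hx] at h5 ⊢
        exact mul_nonpos_of_nonneg_of_nonpos h6 h5)
  refine ⟨h1.summable.hasSum, ?_⟩
  have hs : Summable fun j => |∫ x, f x * D.η j x * GG θ (D.c j) (D.r j) g x| := summable_of_sum_le (fun _ => abs_nonneg _) h2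
  refine (norm_tsum_le_tsum_norm (f := fun j => ∫ x, f x * D.η j x * GG θ (D.c j) (D.r j) g x) hs).trans ?_
  rw [← integral_indicator D.W.opn.measurableSet]
  exact hs.tsum_le_of_sum_le h2

theorem tele {D' : Lv n ε L K} (hsub : D'.Ω ⊆ D.Ω) (hθ : Dual B θ) (hB : 0 ≤ B) (hK : 0 ≤ K) (hnε : n * ε ≤ 1 / 2)
    {f : Euc n → ℝ} (hf : LocallyIntegrable f volume) {A V : ℝ} (hA : 0 ≤ A) (hV : 0 ≤ V) (hG : D'.GBd N f A V)
    {Rb : ℝ} (hRb : ∀ j ∈ D.J, D.r j ≤ Rb) (hRb' : ∀ j ∈ D'.J, D'.r j ≤ Rb)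
    {g : Euc n → ℝ} (hg : Continuous g) {S R0 : ℝ} (hgS : ∀ x, |g x| ≤ S) (hg0 : ∀ x, R0 < ‖x‖ → g x = 0) :
    HasSum (fun j : D.J => ∫ x, D.Aj D' θ f j x * g x) (D.BB θ f g - D'.BB θ f g) := by
  classical
  have hS : 0 ≤ S := (abs_nonneg _).trans (hgS 0)
  -- joint sum
  obtain ⟨h1, -, -, -⟩ := swap_sum (ι := ℕ × ℕ) (F := fun i x => f x * (D'.η i.2 x * D.η i.1 x) * GG θ (D'.c i.2) (D'.r i.2) g x)
    (fun i => D.η2_int D' hf i.1 i.2 (GG_cont θ _ _ hg)) (maj_int (N := N) (B := B) hf S R0 Rb) (by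
      intro s x
      have h6 := maj_nonneg (N := N) hB hS R0 Rb f x
      have hb : ∀ i : ℕ × ℕ, |f x * (D'.η i.2 x * D.η i.1 x) * GG θ (D'.c i.2) (D'.r i.2) g x| ≤
          maj n N B S R0 Rb f x * (D.η i.1 x * D'.η i.2 x) := by
        intro i
        have e : f x * (D'.η i.2 x * D.η i.1 x) * GG θ (D'.c i.2) (D'.r i.2) g x =
          D.η i.1 x * (f x * D'.η i.2 x * GG θ (D'.c i.2) (D'.r i.2) g x) := by ring
        rw [e, abs_mul, abs_of_nonneg (D.nn i.1 x)]
        calc _ ≤ D.η i.1 x * (maj n N B S R0 Rb f x * D'.η i.2 x) :=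
              mul_le_mul_of_nonneg_left (D'.maj_bd hθ hB hRb' hgS hg0 i.2 x) (D.nn i.1 x)
          _ = _ := by ring
      refine (Finset.sum_le_sum fun i _ => hb i).trans ?_
      rw [← Finset.mul_sum]
      refine mul_le_of_le_one_right h6 ?_
      calc ∑ i ∈ s, D.η i.1 x * D'.η i.2 x ≤ ∑ i ∈ s.image Prod.fst ×ˢ s.image Prod.snd, D.η i.1 x * D'.η i.2 x := by
            refine Finset.sum_le_sum_of_subset_of_nonneg Finset.subset_product (fun i _ _ => mul_nonneg (D.nn _ _) (D'.nn _ _))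
        _ = (∑ j ∈ s.image Prod.fst, D.η j x) * ∑ l ∈ s.image Prod.snd, D'.η l x := by
            rw [Finset.sum_product, Finset.sum_mul_sum]
        _ ≤ 1 := mul_le_one₀ (D.sum_le_one x _) (Finset.sum_nonneg fun l _ => D'.nn l x) (D'.sum_le_one x _))
  set tot := ∫ x, ∑' i : ℕ × ℕ, f x * (D'.η i.2 x * D.η i.1 x) * GG θ (D'.c i.2) (D'.r i.2) g x with htot
  obtain ⟨hB1, -⟩ := D.BB_hasSum hθ hB hRb hf hg hgS hg0
  obtain ⟨hB2, -⟩ := D'.BB_hasSum hθ hB hRb' hf hg hgS hg0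
  -- sum over `l` first
  have h2 : ∀ j, HasSum (fun l => ∫ x, f x * (D'.η l x * D.η j x) * GG θ (D'.c l) (D'.r l) g x)
      ((∫ x, f x * D.η j x * GG θ (D.c j) (D.r j) g x) - D.J.indicator (fun j => ∫ x, D.Aj D' θ f j x * g x) j) := by
    intro j
    by_cases hj : j ∈ D.J
    · rw [indicator_of_mem hj]
      exact D.Aj_pair hsub hθ hB hK hnε hf hA hV hG hj hg
    · rw [indicator_of_notMem hj]
      simp only [D.off hj, mul_zero, zero_mul, integral_zero, sub_zero]
      exact hasSum_zero
  have h3 := h1.prod_fiberwise h2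
  -- sum over `j` first
  have h4 : ∀ l, HasSum (fun j => ∫ x, f x * (D'.η l x * D.η j x) * GG θ (D'.c l) (D'.r l) g x)
      (∫ x, f x * D'.η l x * GG θ (D'.c l) (D'.r l) g x) := by
    intro l
    have hi := D'.η_int hf l (GG_cont θ (D'.c l) (D'.r l) hg)
    obtain ⟨h5, -, -, -⟩ := swap_sum (F := fun j x => f x * (D'.η l x * D.η j x) * GG θ (D'.c l) (D'.r l) g x)
      (fun j => D.η2_int D' hf j l (GG_cont θ _ _ hg)) hi.abs (by
        intro s x
        have e : ∀ j, |f x * (D'.η l x * D.η j x) * GG θ (D'.c l) (D'.r l) g x| =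
            |f x * D'.η l x * GG θ (D'.c l) (D'.r l) g x| * D.η j x := by
          intro j
          rw [← abs_of_nonneg (D.nn j x), ← abs_mul, abs_of_nonneg (D.nn j x)]; congr 1; ring
        simp only [e]
        rw [← Finset.mul_sum]
        exact mul_le_of_le_one_right (abs_nonneg _) (D.sum_le_one x s))
    have e2 : ∀ x, ∑' j, f x * (D'.η l x * D.η j x) * GG θ (D'.c l) (D'.r l) g x = f x * D'.η l x * GG θ (D'.c l) (D'.r l) g x := by
      intro x
      have := ((D.hasSum x).mul_left (f x * D'.η l x * GG θ (D'.c l) (D'.r l) g x)).tsum_eq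
      rw [show (fun j => f x * (D'.η l x * D.η j x) * GG θ (D'.c l) (D'.r l) g x) =
        fun j => f x * D'.η l x * GG θ (D'.c l) (D'.r l) g x * D.η j x by ext j; ring, this]
      by_cases hx : x ∈ D.Ω
      · simp [hx]
      · rw [D'.off2 fun h => hx (hsub h)]; simp
    simpa only [e2] using h5
  have h5 : HasSum (fun i : ℕ × ℕ => ∫ x, f x * (D'.η i.1 x * D.η i.2 x) * GG θ (D'.c i.1) (D'.r i.1) g x) tot :=
    (Equiv.prodComm ℕ ℕ).hasSum_iff.2 h1
  have h6 := h5.prod_fiberwise h4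
  have htB := h6.unique hB2
  rw [htB] at h3
  have h7 : HasSum (D.J.indicator fun j => ∫ x, D.Aj D' θ f j x * g x) (D.BB θ f g - D'.BB θ f g) := by
    have h8 := hB1.sub h3
    have e8 : (D.J.indicator fun j => ∫ x, D.Aj D' θ f j x * g x) = fun b =>
        (∫ x, f x * D.η b x * GG θ (D.c b) (D.r b) g x) - ((∫ x, f x * D.η b x * GG θ (D.c b) (D.r b) g x) -
          D.J.indicator (fun j => ∫ x, D.Aj D' θ f j x * g x) b) :=
      funext fun j => (_root_.sub_sub_cancel _ _).symm
    rw [e8]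
    exact h8
  exact (hasSum_subtype_iff_indicator (f := fun j => ∫ x, D.Aj D' θ f j x * g x)).2 h7

theorem BB_lim (hθ : Dual B θ) (hB : 0 ≤ B) (hnε : n * ε ≤ 1 / 2)
    {f : Euc n → ℝ} (hf : LocallyIntegrable f volume) {A V : ℝ} (hA : 0 ≤ A) (hV : 0 ≤ V) (hG : D.GBd N f A V)
    {Rb : ℝ} (hRb : ∀ j ∈ D.J, D.r j ≤ Rb) {Z : ℝ}
    (hZ : ∀ᵐ x ∂(volume : Measure (Euc n)), x ∉ D.Ω → |f x| ≤ Z)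
    {g : Euc n → ℝ} (hg : Continuous g) {S R0 : ℝ} (hgS : ∀ x, |g x| ≤ S) (hg0 : ∀ x, R0 < ‖x‖ → g x = 0) :
    |(∫ x, f x * g x) - D.BB θ f g| ≤
      (|Z| + (3 * ((n : ℝ) + 1)) ^ n * (Fintype.card (MI n N) * (A * 1 * V * B))) * ∫ x, |g x| := by
  set Q := (3 * ((n : ℝ) + 1)) ^ n * (Fintype.card (MI n N) * (A * 1 * V * B)) with hQ
  have hgi : Integrable g := by
    have := loc_cont_int (f := fun _ : Euc n => (1 : ℝ)) (locallyIntegrable_const _) hg 0 R0 (fun x hx => hg0 x (by simpa using hx))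
    simpa using this
  have hfg : Integrable fun x => f x * g x := loc_cont_int hf hg 0 R0 (fun x hx => hg0 x (by simpa using hx))
  obtain ⟨hB1, -⟩ := D.BB_hasSum hθ hB hRb hf hg hgS hg0
  have hT1g : ∀ j, Integrable fun x => D.T1 θ f j x * g x := by
    intro j
    by_cases hj : j ∈ D.J
    · exact TT_int hθ (D.W.pos j hj) hg _
    · have : ∀ x, D.T1 θ f j x * g x = 0 := by
        intro x
        rw [T1, TT_zero, zero_mul]
        intro y; rw [D.off hj]; simp
      simp only [this]; exact integrable_zero _ _ _
  obtain ⟨s1, -, i1, b1⟩ := swap_sum (F := fun j x => D.T1 θ f j x * g x) hT1g (hgi.abs.const_mul Q) (by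
    intro s x
    simp only [abs_mul]
    rw [← Finset.sum_mul]
    exact mul_le_mul_of_nonneg_right (D.T1_sum hθ hB hnε hA hV hG s x) (abs_nonneg _))
  obtain ⟨s2, -, i2, -⟩ := swap_sum (F := fun j x => f x * D.η j x * g x) (fun j => D.η_int hf j hg) hfg.abs (by
    intro s x
    have e : ∀ j, |f x * D.η j x * g x| = |f x * g x| * D.η j x := by
      intro j
      rw [← abs_of_nonneg (D.nn j x), ← abs_mul, abs_of_nonneg (D.nn j x)]; congr 1; ring
    simp only [e]
    rw [← Finset.mul_sum]
    exact mul_le_of_le_one_right (abs_nonneg _) (D.sum_le_one x s))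
  have e2 : ∀ x, ∑' j, f x * D.η j x * g x = D.Ω.indicator (fun x => f x * g x) x := by
    intro x
    have := ((D.hasSum x).mul_left (f x * g x)).tsum_eq
    rw [show (fun j => f x * D.η j x * g x) = fun j => f x * g x * D.η j x by ext l; ring, this]
    by_cases hx : x ∈ D.Ω <;> simp [hx]
  simp only [e2] at s2 i2
  have s3 := s2.sub s1
  have hterm : ∀ j, ∫ x, f x * D.η j x * GG θ (D.c j) (D.r j) g x =
      (∫ x, f x * D.η j x * g x) - ∫ x, D.T1 θ f j x * g x := by
    intro j
    by_cases hj : j ∈ D.J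
    · refine pairing hθ (D.W.pos j hj) hg (R := 6 * D.r j) ?_ ?_ (D.η_int hf j hg)
      · simpa using D.η_int hf j (k := fun _ => 1) continuous_const
      · intro x hx; rw [D.far hx]; simp
    · have : ∀ x, D.T1 θ f j x * g x = 0 := by
        intro x
        rw [T1, TT_zero, zero_mul]
        intro y; rw [D.off hj]; simp
      simp [this, D.off hj]
  simp only [hterm] at hB1
  have hBB := hB1.unique s3
  have e3 : (∫ x, f x * g x) - D.BB θ f g = ∫ x, ((D.Ωᶜ).indicator (fun x => f x * g x) x + ∑' j, D.T1 θ f j x * g x) := by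
    rw [hBB, integral_add (hfg.indicator D.W.opn.measurableSet.compl) i1, ← sub_add]
    congr 1
    rw [← integral_sub hfg i2]
    congr 1; ext x
    by_cases hx : x ∈ D.Ω <;> simp [hx]
  rw [e3, ← integral_const_mul]
  rw [← Real.norm_eq_abs]
  refine norm_integral_le_of_norm_le (g := fun x => (|Z| + Q) * |g x|) (hgi.abs.const_mul _) ?_
  filter_upwards [hZ] with x hx
  rw [add_mul]
  refine (norm_add_le _ _).trans (add_le_add ?_ (b1 x))
  by_cases h : x ∈ (D.Ω)ᶜ
  · rw [indicator_of_mem h, norm_mul]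
    exact mul_le_mul_of_nonneg_right ((hx h).trans (le_abs_self _)) (abs_nonneg _)
  · rw [indicator_of_notMem h, norm_zero]; positivity

end Lv

theorem vol_cube_le {n : ℕ} (c : Euc n) (r : ℝ) (hr : 0 ≤ r) : volume (cube c r) ≤ ENNReal.ofReal ((2 * r) ^ n) := by
  have h := (PiLp.volume_preserving_ofLp (Fin n))
  have e : cube c r = (@WithLp.ofLp 2 (Fin n → ℝ)) ⁻¹' (Icc (fun i => c i - r) (fun i => c i + r)) := by
    ext y
    simp only [cube, mem_ofPred_eq, mem_preimage, mem_Icc, Pi.le_def, abs_le]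
    constructor
    · intro h; exact ⟨fun i => by linarith [(h i).1], fun i => by linarith [(h i).2]⟩
    · intro h i; exact ⟨by linarith [h.1 i], by linarith [h.2 i]⟩
  rw [e, h.measure_preimage measurableSet_Icc.nullMeasurableSet, Real.volume_Icc_pi]
  refine le_of_eq ?_
  rw [Finset.prod_congr rfl (g := fun _ => ENNReal.ofReal (2 * r)) (fun i _ => by congr 1; ring)]
  simp [ENNReal.ofReal_pow (by positivity : 0 ≤ 2 * r)]

theorem coef_eq {n : ℕ} {p : ℝ} (hp0 : 0 < p) (k : ℤ) {ρ : ℝ} (hρ : 0 ≤ ρ) :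
    ENNReal.ofReal (((2:ℝ) ^ k * ((2 * ρ) ^ n) ^ (1/p)) ^ p) = ((2 : ℝ≥0∞) ^ k) ^ p * ENNReal.ofReal ((2 * ρ) ^ n) := by
  have h2 : (2 : ℝ≥0∞) ^ k = ENNReal.ofReal ((2 : ℝ) ^ k) := by
    rw [← ENNReal.rpow_intCast, ← Real.rpow_intCast, ← ENNReal.ofReal_rpow_of_pos (by norm_num)]; simp
  rw [Real.mul_rpow (by positivity) (by positivity), ENNReal.ofReal_mul (by positivity), ← Real.rpow_mul (by positivity),
    one_div_mul_cancel hp0.ne', Real.rpow_one, h2, ENNReal.ofReal_rpow_of_pos (by positivity)]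

namespace Lv

variable {n : ℕ} {ε : ℝ} {L : ℕ} {K : ℝ} (D : Lv n ε L K) {N : ℕ} {B : ℝ} {θ : MI n N → Euc n → ℝ}

theorem lower : volume D.Ω ≤ ∑' j : D.J, ENNReal.ofReal ((2 * (20 * D.r j)) ^ n) := by
  have h1 : D.Ω ⊆ ⋃ j : D.J, cube (D.c j) (20 * D.r j) := by
    intro x hx
    obtain ⟨j, hj, hd⟩ := D.W.cov x hx
    have := D.W.pos j hj
    exact mem_iUnion.2 ⟨⟨j, hj⟩, cube_of_dist (by simpa using by linarith)⟩
  refine (measure_mono h1).trans ((measure_iUnion_le _).trans (ENNReal.tsum_le_tsum fun j => vol_cube_le _ _ ?_))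
  have := D.W.pos j j.2
  positivity

theorem upper : ∑' j : D.J, ENNReal.ofReal ((2 * (20 * D.r j)) ^ n) ≤
    (ENNReal.ofReal (40 ^ n) / volume (Metric.ball (0 : Euc n) 1)) * volume D.Ω := by
  set ω := volume (Metric.ball (0 : Euc n) 1) with hωdef
  have hω : ω ≠ 0 := (Metric.measure_ball_pos _ _ one_pos).ne'
  have hω' : ω ≠ ∞ := measure_ball_lt_top.ne
  have h1 : ∀ j : D.J, ENNReal.ofReal ((2 * (20 * D.r j)) ^ n) =
      ENNReal.ofReal (40 ^ n) / ω * volume (Metric.closedBall (D.c j) (D.r j)) := by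
    intro j
    have hr := D.W.pos j j.2
    rw [vol_cball _ hr.le, ← hωdef, mul_comm _ ω, ← mul_assoc (ENNReal.ofReal (40 ^ n) / ω), ENNReal.div_mul_cancel hω hω',
      ← ENNReal.ofReal_mul (by positivity), ← mul_pow]
    congr 2; ring
  simp only [h1]
  rw [ENNReal.tsum_mul_left]
  gcongr
  rw [← measure_iUnion]
  · refine measure_mono (iUnion_subset fun j x hx => ?_)
    have hr := D.W.pos j j.2
    exact D.W.sub j.2 (lt_of_le_of_lt (Metric.mem_closedBall.1 hx) (by linarith))
  · intro i j hij
    exact D.W.disj i.2 j.2 (fun h => hij (Subtype.ext h))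
  · intro j; exact Metric.isClosed_closedBall.measurableSet

theorem cube_overlap (hnε : 20 * n * ε ≤ 1 / 2) (x : Euc n) :
    (∑' j : D.J, (cube (D.c j) (20 * D.r j)).indicator (fun _ => (1:ℝ≥0∞)) x) ≤
      ENNReal.ofReal ((3 * (20 * n + 1)) ^ n) := by
  classical
  rw [ENNReal.tsum_eq_iSup_sum]
  refine iSup_le fun s => ?_
  set F := (s.filter fun j : D.J => x ∈ cube (D.c j) (20 * D.r j)).image (fun j : D.J => (j : ℕ)) with hF
  have h1 : (F.card : ℝ) ≤ (3 * (20 * n + 1)) ^ n := by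
    refine D.W.count (20 * n) (by positivity) hnε x F ?_
    intro j hj
    rw [hF, Finset.mem_image] at hj
    obtain ⟨i, hi, rfl⟩ := hj
    have hr := D.W.pos i i.2
    refine ⟨i.2, (cube_norm (by positivity) (Finset.mem_filter.1 hi).2).trans (by linarith)⟩
  have h2 : ∑ j ∈ s, (cube (D.c j) (20 * D.r j)).indicator (fun _ => (1:ℝ≥0∞)) x = F.card := by
    rw [hF, Finset.card_image_of_injective _ Subtype.val_injective, Finset.card_filter]
    push_cast
    exact Finset.sum_congr rfl fun j _ => by by_cases h : x ∈ cube (D.c j) (20 * D.r j) <;> simp [h]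
  rw [h2, ← ENNReal.ofReal_natCast]
  exact ENNReal.ofReal_le_ofReal h1

theorem rad_le {U : Set (Euc n)} (hU : D.Ω ⊆ U) {R : ℝ} (hR : ∀ (y : Euc n) (t : ℝ), 0 < t → Metric.ball y t ⊆ U → t ≤ R) :
    ∀ j ∈ D.J, D.r j ≤ R := fun j hj => by
  have hr := D.W.pos j hj
  refine hR (D.c j) _ hr fun x hx => hU (D.W.sub hj ?_)
  exact lt_of_lt_of_le (Metric.mem_ball.1 hx) (by linarith)

end Lv

theorem sum_tele (u : ℤ → ℝ) (m : ℕ) : ∑ k ∈ Finset.Icc (-(m : ℤ)) (m : ℤ), (u k - u (k + 1)) = u (-m) - u (m + 1) := by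
  induction m with
  | zero => simp
  | succ m ih =>
    have e : Finset.Icc (-((m + 1 : ℕ) : ℤ)) ((m + 1 : ℕ) : ℤ) =
        insert (-((m : ℤ) + 1)) (insert ((m : ℤ) + 1) (Finset.Icc (-(m : ℤ)) (m : ℤ))) := by
      ext k; simp only [Finset.mem_Icc, Finset.mem_insert]; omega
    rw [e, Finset.sum_insert, Finset.sum_insert, ih]
    · have e2 : -((m : ℤ) + 1) + 1 = -m := by ring
      rw [e2]; push_cast; ring
    · simp only [Finset.mem_Icc]; omega
    · simp only [Finset.mem_insert, Finset.mem_Icc]; omega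

theorem Vset_fin {n : ℕ} (hn : 1 ≤ n) (p : ℝ) (hp0 : 0 < p) (q : ℝ≥0∞) (hq : 0 < q)
    (M : ℕ) (hM : (n : ℝ) + 2 ≤ M * p) (ψ f : Euc n → ℝ) (hl : lorentzNorm p q (ntMax ψ f) < ∞) :
    (∀ κ, volume (Vset ψ f M κ) ≠ ∞) ∧
      Filter.Tendsto (fun m : ℕ => volume (Vset ψ f M m)) Filter.atTop (nhds 0) := by
  obtain ⟨D, hD, h⟩ := Vset_norm hn p hp0 q hq M hM 0 1 one_ne_top
  have h := h ψ f
  set W := D * lorentzNorm p q (ntMax ψ f)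
  have hW : W ≠ ∞ := (ENNReal.mul_lt_top hD.lt_top hl).ne
  have h1 : ∀ κ : ℤ, ((2 : ℝ≥0∞) ^ κ) ^ p * volume (Vset ψ f M κ) ≤ W ^ p := by
    intro κ
    have := (le_ellq q hq _ κ).trans h
    simp only [one_mul, Nat.cast_zero, sub_zero, one_div] at this
    rwa [ENNReal.rpow_inv_le_iff hp0] at this
  have hWp : W ^ p ≠ ∞ := (ENNReal.rpow_lt_top_of_nonneg hp0.le hW).ne
  have h0 : ∀ κ : ℤ, ((2 : ℝ≥0∞) ^ κ) ^ p ≠ 0 := fun κ => by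
    have := ENNReal.zpow_pos (a := 2) (by norm_num) (by norm_num) κ
    exact (ENNReal.rpow_pos this (ENNReal.zpow_ne_top (by norm_num) (by norm_num) κ)).ne'
  have h0' : ∀ κ : ℤ, ((2 : ℝ≥0∞) ^ κ) ^ p ≠ ∞ := fun κ =>
    (ENNReal.rpow_lt_top_of_nonneg hp0.le (ENNReal.zpow_ne_top (by norm_num) (by norm_num) κ)).ne
  have h2 : ∀ κ : ℤ, volume (Vset ψ f M κ) ≤ W ^ p / ((2 : ℝ≥0∞) ^ κ) ^ p := fun κ => by
    rw [ENNReal.le_div_iff_mul_le (Or.inl (h0 κ)) (Or.inl (h0' κ)), mul_comm]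
    exact h1 κ
  refine ⟨fun κ => ((h2 κ).trans_lt (ENNReal.div_lt_top hWp (h0 κ))).ne, ?_⟩
  have h3 : ∀ m : ℕ, W ^ p / ((2 : ℝ≥0∞) ^ (m : ℤ)) ^ p = W ^ p * (((2 : ℝ≥0∞) ^ p)⁻¹) ^ m := by
    intro m
    rw [zpow_natCast, div_eq_mul_inv, ← ENNReal.inv_pow, ← ENNReal.rpow_natCast, ← ENNReal.rpow_natCast,
      ← ENNReal.rpow_mul, ← ENNReal.rpow_mul, mul_comm p]
  refine tendsto_of_tendsto_of_tendsto_of_le_of_le tendsto_const_nhds ?_ (fun _ => bot_le)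
    (fun m => (h2 m).trans (h3 m).le)
  have h4 : ((2 : ℝ≥0∞) ^ p)⁻¹ < 1 := by
    rw [ENNReal.inv_lt_one]
    exact ENNReal.one_lt_rpow (by norm_num) hp0
  have := ENNReal.Tendsto.const_mul (a := W ^ p) (ENNReal.tendsto_pow_atTop_nhds_zero_of_lt_one h4) (Or.inr hWp)
  simpa using this

theorem limit_main {n : ℕ} (hn : 1 ≤ n) {ψ : Euc n → ℝ} (hψ : Continuous ψ) (hψc : HasCompactSupport ψ)
    (hψi : (∫ x : Euc n, ψ x) ≠ 0) {M N L : ℕ} {ε K A B : ℝ} {θ : MI n N → Euc n → ℝ}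
    (hθ : Dual B θ) (hB : 0 ≤ B) (hK : 0 ≤ K) (hA : 0 ≤ A) (hnε : n * ε ≤ 1 / 2)
    {f : Euc n → ℝ} (hf : LocallyIntegrable f volume) (D : ℤ → Lv n ε L K) (hD : ∀ κ, (D κ).Ω = Vset ψ f M κ)
    (hG : ∀ κ, (D κ).GBd N f A ((2 : ℝ) ^ κ)) (hv : ∀ κ, volume (Vset ψ f M κ) ≠ ∞)
    (hv0 : Filter.Tendsto (fun m : ℕ => volume (Vset ψ f M m)) Filter.atTop (nhds 0)) (s0 : ℕ)
    {g : Euc n → ℝ} (hg : Continuous g) (hgc : HasCompactSupport g) :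
    Filter.Tendsto (fun m : ℕ => ∑ k ∈ Finset.Icc (-(m : ℤ)) (m : ℤ),
      ∑' j : (D (k - s0)).J, ∫ x, (D (k - s0)).Aj (D (k - s0 + 1)) θ f j x * g x) Filter.atTop (nhds (∫ x, f x * g x)) := by
  obtain ⟨S, hS⟩ := hg.bounded_above_of_compact_support hgc
  obtain ⟨R0, hR0⟩ := hgc.isCompact.isBounded.subset_closedBall (0 : Euc n)
  have hgS : ∀ x, |g x| ≤ S := hS
  have hg0 : ∀ x, R0 < ‖x‖ → g x = 0 := by
    intro x hx
    by_contra h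
    have := hR0 (subset_tsupport g h)
    rw [Metric.mem_closedBall, dist_zero_right] at this
    linarith
  set u : ℤ → ℝ := fun κ => (D κ).BB θ f g with hu
  have h1 : ∀ κ, ∑' j : (D κ).J, ∫ x, (D κ).Aj (D (κ + 1)) θ f j x * g x = u κ - u (κ + 1) := by
    intro κ
    obtain ⟨R, -, hR⟩ := radius_bound hn _ (hv κ)
    have hsub : (D (κ + 1)).Ω ⊆ (D κ).Ω := by
      rw [hD, hD]; exact Vset_anti ψ f M (by omega)
    exact ((D κ).tele hsub hθ hB hK hnε hf hA (by positivity) (hG (κ + 1))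
      ((D κ).rad_le (hD κ).le hR) ((D (κ + 1)).rad_le (hsub.trans (hD κ).le) hR) hg hgS hg0).tsum_eq
  have h2 : ∀ m : ℕ, ∑ k ∈ Finset.Icc (-(m : ℤ)) (m : ℤ),
      ∑' j : (D (k - s0)).J, ∫ x, (D (k - s0)).Aj (D (k - s0 + 1)) θ f j x * g x = u (-m - s0) - u (m + 1 - s0) := by
    intro m
    simp only [h1]
    have := sum_tele (fun k => u (k - s0)) m
    rw [← this]
    refine Finset.sum_congr rfl fun k _ => ?_
    congr 2; ring
  simp only [h2]
  rw [← sub_zero (∫ x, f x * g x)]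
  refine Filter.Tendsto.sub ?_ ?_
  · set Y := ∫ x, |g x|
    set I := ∫ y, ψ y
    have h3 : ∀ κ, |(∫ x, f x * g x) - u κ| ≤ (2 : ℝ) ^ κ * ((|I|⁻¹ + (3 * ((n : ℝ) + 1)) ^ n * (Fintype.card (MI n N) * (A * 1 * 1 * B))) * Y) := by
      intro κ
      obtain ⟨R, -, hR⟩ := radius_bound hn _ (hv κ)
      have hI : 0 < |I| := abs_pos.2 hψi
      have := (D κ).BB_lim hθ hB hnε hf hA (by positivity) (hG κ) ((D κ).rad_le (hD κ).le hR) (Z := (2 : ℝ) ^ κ * |I|⁻¹)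
        (by
          filter_upwards [ae_bound hψ hψc hf M] with x hx hxΩ
          rw [hD] at hxΩ
          rw [← div_eq_mul_inv, le_div_iff₀ hI]
          exact hx κ hxΩ) hg hgS hg0
      refine this.trans (le_of_eq ?_)
      rw [abs_of_nonneg (by positivity)]
      ring
    have h4 : Filter.Tendsto (fun m : ℕ => (2 : ℝ) ^ (-(m : ℤ) - s0) * ((|I|⁻¹ + (3 * ((n : ℝ) + 1)) ^ n * (Fintype.card (MI n N) * (A * 1 * 1 * B))) * Y))
        Filter.atTop (nhds 0) := by
      have e : ∀ m : ℕ, (2 : ℝ) ^ (-(m : ℤ) - s0) = (1 / 2 : ℝ) ^ m * (2 : ℝ) ^ (-(s0 : ℤ)) := by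
        intro m
        rw [sub_eq_add_neg, zpow_add₀ (by norm_num), zpow_neg, zpow_natCast]; simp
      simp only [e]
      have := ((tendsto_pow_atTop_nhds_zero_of_lt_one (r := (1 / 2 : ℝ)) (by norm_num) (by norm_num)).mul_const ((2 : ℝ) ^ (-(s0 : ℤ)))).mul_const
        ((|I|⁻¹ + (3 * ((n : ℝ) + 1)) ^ n * (Fintype.card (MI n N) * (A * 1 * 1 * B))) * Y)
      simpa using this
    rw [tendsto_iff_dist_tendsto_zero]
    refine squeeze_zero (fun _ => dist_nonneg) (fun m => ?_) h4
    rw [dist_comm]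
    exact h3 _
  · obtain ⟨R, -, hR⟩ := radius_bound hn _ (hv 0)
    have h5 : Filter.Tendsto (fun m : ℕ => u m) Filter.atTop (nhds 0) := by
      have h6 := (Lv.maj_int (N := N) (B := B) hf S R0 R).tendsto_setIntegral_nhds_zero hv0
      refine squeeze_zero_norm (fun m => ?_) h6
      have := ((D m).BB_hasSum hθ hB ((D m).rad_le (by rw [hD]; exact Vset_anti ψ f M (by omega)) hR) hf hg hgS hg0).2
      rw [hD] at this
      exact this
    have h7 : Filter.Tendsto (fun m : ℕ => m + 1 - s0) Filter.atTop Filter.atTop :=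
      (Filter.tendsto_sub_atTop_nat s0).comp (Filter.tendsto_add_atTop_nat 1)
    refine (h5.comp h7).congr' ?_
    filter_upwards [Filter.eventually_ge_atTop s0] with m hm
    simp only [Function.comp]
    congr 1; omega

/-- Theorem 2.1: atomic decomposition of `H^{p,q}`. -/
theorem stmt4 (n : ℕ) (hn : 1 ≤ n) (p : ℝ) (hp0 : 0 < p) (hp1 : p ≤ 1) (q : ℝ≥0∞) (hq : 0 < q)
    (ψ : Euc n → ℝ) (hψ : ContDiff ℝ (⊤ : ℕ∞) ψ) (hψc : HasCompactSupport ψ)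
    (hψi : (∫ x : Euc n, ψ x) ≠ 0) :
    ∃ C c₁ c₂ : ℝ, 0 < C ∧ 0 < c₁ ∧ 0 < c₂ ∧
      ∀ f : Euc n → ℝ, LocallyIntegrable f volume →
        lorentzNorm p q (ntMax ψ f) < ∞ →
        ∃ (J : ℤ → Set ℕ) (a : ℤ → ℕ → Euc n → ℝ) (ctr : ℤ → ℕ → Euc n) (ρ : ℤ → ℕ → ℝ),
          -- the `a_{j,k}`, `j ∈ J k`, are `H^p` atoms with defining cubes `I_{j,k}`,
          -- and coefficients `λ_{j,k} = 2^k |I_{j,k}|^{1/p}`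
          (∀ (k : ℤ), ∀ j ∈ J k, IsHpAtom p (a k j) (ctr k j) (ρ k j)) ∧
          -- (i) bounded overlap at each level, uniformly in `k`
          (∀ (k : ℤ) (x : Euc n),
            (∑' j : J k, (cube (ctr k j) (ρ k j)).indicator (fun _ => (1:ℝ≥0∞)) x) ≤
              ENNReal.ofReal C) ∧
          -- (ii) convergence to `f` in the sense of distributions
          (∀ g : Euc n → ℝ, ContDiff ℝ (⊤ : ℕ∞) g → HasCompactSupport g →
            Filter.Tendsto
              (fun m : ℕ => ∑ k ∈ Finset.Icc (-(m : ℤ)) (m : ℤ),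
                ∑' j : J k,
                  ((2:ℝ) ^ k * ((2 * ρ k (j : ℕ)) ^ n) ^ (1/p)) *
                    ∫ x : Euc n, a k (j : ℕ) x * g x)
              Filter.atTop (nhds (∫ x : Euc n, f x * g x))) ∧
          -- (iii) the coefficients compute the `H^{p,q}` quasinorm
          ENNReal.ofReal c₁ * lorentzNorm p q (ntMax ψ f) ≤
            ellq q (fun k =>
              (∑' j : J k,
                ENNReal.ofReal (((2:ℝ) ^ k * ((2 * ρ k (j : ℕ)) ^ n) ^ (1/p)) ^ p)) ^ (1/p)) ∧
          ellq q (fun k =>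
              (∑' j : J k,
                ENNReal.ofReal (((2:ℝ) ^ k * ((2 * ρ k (j : ℕ)) ^ n) ^ (1/p)) ^ p)) ^ (1/p)) ≤
            ENNReal.ofReal c₂ * lorentzNorm p q (ntMax ψ f) := by
  classical
  have hn0 : (0 : ℝ) < n := by exact_mod_cast hn
  set N := ⌊(n : ℝ) * (1 / p - 1)⌋₊ with hN
  obtain ⟨M, hM0⟩ := exists_nat_ge (((n : ℝ) + 2) / p)
  have hM : (n : ℝ) + 2 ≤ M * p := by rwa [div_le_iff₀ hp0] at hM0
  set ε : ℝ := 1 / (100 * n) with hεdef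
  have hε : 0 < ε := by positivity
  have hnε' : n * ε = 1 / 100 := by rw [hεdef]; field_simp
  have hε' : ε ≤ 1 / 100 := by
    rw [← hnε']
    have : (1 : ℝ) ≤ n := by exact_mod_cast hn
    nlinarith
  have hnε : n * ε ≤ 1 / 2 := by rw [hnε']; norm_num
  obtain ⟨L, hL⟩ := grand_mom N ψ hψ.continuous hψc hψi M ε hε
  obtain ⟨K, hK1, hpou⟩ := exists_pou n L
  have hK : 0 ≤ K := by linarith
  obtain ⟨A, hA, hGm⟩ := hL K hK
  obtain ⟨B, θ, hB, hθ⟩ := exists_dual n N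
  set I := ∫ y, ψ y with hI
  have hI0 : 0 < |I| := abs_pos.2 hψi
  set C0 : ℝ := 2 * |I|⁻¹ + Fintype.card (MI n N) * (A * 1 * 1 * B) +
      (3 * ((n : ℝ) + 1)) ^ n * (Fintype.card (MI n N) * (A * (2 ^ L * K) * 2 * B)) with hC0
  obtain ⟨s0, hs0⟩ := pow_unbounded_of_one_lt C0 (one_lt_two)
  set ω := volume (Metric.ball (0 : Euc n) 1) with hωdef
  have hω : ω ≠ 0 := (Metric.measure_ball_pos _ _ one_pos).ne'
  obtain ⟨E, hE, hEb⟩ := Vset_norm hn p hp0 q hq M hM s0 (ENNReal.ofReal (40 ^ n) / ω)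
    (ENNReal.div_lt_top ENNReal.ofReal_ne_top hω).ne
  refine ⟨(3 * (20 * n + 1)) ^ n, 1, E.toReal + 1, by positivity, one_pos, by positivity, ?_⟩
  intro f0 hf0 hl0
  -- pass to a measurable representative
  obtain ⟨f, hfm, hff⟩ : ∃ f : Euc n → ℝ, Measurable f ∧ f0 =ᵐ[volume] f := by
    have := hf0.aestronglyMeasurable.aemeasurable
    exact ⟨this.mk f0, this.measurable_mk, this.ae_eq_mk⟩
  have hf : LocallyIntegrable f volume := by
    intro x
    obtain ⟨s, hs, hi⟩ := hf0 x
    exact ⟨s, hs, hi.congr_fun_ae (ae_restrict_of_ae hff)⟩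
  have hconv : ∀ t y, convAt ψ f0 t y = convAt ψ f t y := by
    intro t y
    refine integral_congr_ae ?_
    filter_upwards [hff] with x hx
    rw [hx]
  have hnt : ntMax ψ f0 = ntMax ψ f := by
    funext x; simp only [ntMax, hconv]
  have hfg0 : ∀ g : Euc n → ℝ, ∫ x, f0 x * g x = ∫ x, f x * g x := by
    intro g
    refine integral_congr_ae ?_
    filter_upwards [hff] with x hx
    rw [hx]
  rw [hnt] at hl0 ⊢
  simp only [hfg0]
  obtain ⟨hv, hv0⟩ := Vset_fin hn p hp0 q hq M hM ψ f hl0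
  have hex : ∀ κ : ℤ, ∃ D : Lv n ε L K, D.Ω = Vset ψ f M κ := by
    intro κ
    obtain ⟨J, c, r, hW⟩ := exists_whit hn ε hε hε' _ (Vset_open ψ f M κ) (hv κ)
    obtain ⟨η, h1, h2, h3, h4⟩ := hpou ε _ J c r hW
    exact ⟨⟨_, J, c, r, η, hW, h1, h2, h3, h4⟩, rfl⟩
  choose D hD using hex
  have hG : ∀ κ, (D κ).GBd N f A ((2 : ℝ) ^ κ) := fun κ => hGm f hf κ (D κ) (hD κ)
  have hsub : ∀ κ, (D (κ + 1)).Ω ⊆ (D κ).Ω := fun κ => by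
    rw [hD, hD]; exact Vset_anti ψ f M (by omega)
  have hr : ∀ κ, ∀ j ∈ (D κ).J, 0 < (D κ).r j := fun κ => (D κ).W.pos
  set lam : ℤ → ℕ → ℝ := fun k j => (2 : ℝ) ^ k * ((2 * (20 * (D (k - s0)).r j)) ^ n) ^ (1 / p) with hlam
  have hlam0 : ∀ k, ∀ j ∈ (D (k - s0)).J, 0 < lam k j := by
    intro k j hj
    have := hr _ j hj
    simp only [hlam]; positivity
  refine ⟨fun k => (D (k - s0)).J, fun k j x => (lam k j)⁻¹ * (D (k - s0)).Aj (D (k - s0 + 1)) θ f j x,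
    fun k => (D (k - s0)).c, fun k j => 20 * (D (k - s0)).r j, ?_, ?_, ?_, ?_, ?_⟩
  · intro k j hj
    have hrj := hr _ j hj
    refine ⟨by positivity, ?_, ?_, ?_, ?_⟩
    · exact ((D (k - s0)).Aj_meas (hsub _) hθ hB hK hnε hfm hA (by positivity) (hG _) j).const_mul _
    · intro x hx
      simp only [(D (k - s0)).Aj_supp (hsub _) hθ hj hx, mul_zero]
    · filter_upwards [ae_bound hψ.continuous hψc hf M] with x hx
      have h1 := (D (k - s0)).Aj_bdd (hsub _) hθ hB hK hnε hA (by positivity) (by positivity) (hG (k - s0)) (hG (k - s0 + 1))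
        (Z := (2 : ℝ) ^ (k - s0 + 1 : ℤ) * |I|⁻¹) (by positivity) j x (by
          intro hxΩ
          rw [hD] at hxΩ
          rw [← div_eq_mul_inv, le_div_iff₀ hI0]
          exact hx _ hxΩ)
      have h2 : |(D (k - s0)).Aj (D (k - s0 + 1)) θ f j x| ≤ (2 : ℝ) ^ k := by
        refine h1.trans ?_
        have e1 : (2 : ℝ) ^ (k - s0 + 1 : ℤ) = (2 : ℝ) ^ (k - s0 : ℤ) * 2 := by
          rw [zpow_add₀ (by norm_num), zpow_one]
        have e2 : (2 : ℝ) ^ k = (2 : ℝ) ^ (k - s0 : ℤ) * 2 ^ s0 := by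
          rw [← zpow_natCast, ← zpow_add₀ (by norm_num)]; congr 1; ring
        rw [e1, e2]
        calc _ = (2 : ℝ) ^ (k - s0 : ℤ) * C0 := by rw [hC0]; ring
          _ ≤ _ := by gcongr
      rw [abs_mul, abs_of_pos (inv_pos.2 (hlam0 k j hj))]
      calc (lam k j)⁻¹ * |(D (k - s0)).Aj (D (k - s0 + 1)) θ f j x| ≤ (lam k j)⁻¹ * (2 : ℝ) ^ k :=
            mul_le_mul_of_nonneg_left h2 (inv_pos.2 (hlam0 k j hj)).le
        _ = _ := by
            simp only [hlam]
            rw [mul_inv, mul_comm, ← mul_assoc, mul_inv_cancel₀ (by positivity), one_mul]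
    · intro α hα
      have h1 := (D (k - s0)).Aj_mom (hsub _) hθ hB hK hnε hf hA (by positivity) (hG (k - s0 + 1)) hj α
        (fun i => (Finset.single_le_sum (fun _ _ => Nat.zero_le _) (Finset.mem_univ i)).trans hα)
      have h2 : ∀ y : Euc n, (∏ i, y i ^ α i) * ((lam k j)⁻¹ * (D (k - s0)).Aj (D (k - s0 + 1)) θ f j y) =
          (lam k j)⁻¹ * ((D (k - s0)).Aj (D (k - s0 + 1)) θ f j y * ∏ i, y i ^ α i) := fun y => by ring
      simp only [h2]
      rw [integral_const_mul, h1, mul_zero]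
  · intro k x
    exact (D (k - s0)).cube_overlap (by linarith) x
  · intro g hg hgc
    have h1 := limit_main hn hψ.continuous hψc hψi hθ hB hK hA hnε hf D hD hG hv hv0 s0 hg.continuous hgc
    refine h1.congr fun m => Finset.sum_congr rfl fun k _ => tsum_congr fun j => ?_
    have h2 : ∀ x, (lam k j)⁻¹ * (D (k - s0)).Aj (D (k - s0 + 1)) θ f j x * g x =
        (lam k j)⁻¹ * ((D (k - s0)).Aj (D (k - s0 + 1)) θ f j x * g x) := fun x => by ring
    simp only [h2]
    rw [integral_const_mul, ← mul_assoc]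
    change _ = lam k j * (lam k j)⁻¹ * _
    rw [mul_inv_cancel₀ (hlam0 k j j.2).ne', one_mul]
  · have e : ∀ k : ℤ, ∑' j : (D (k - s0)).J, ENNReal.ofReal (((2:ℝ) ^ k * ((2 * (20 * (D (k - s0)).r j)) ^ n) ^ (1/p)) ^ p) =
        ((2 : ℝ≥0∞) ^ k) ^ p * ∑' j : (D (k - s0)).J, ENNReal.ofReal ((2 * (20 * (D (k - s0)).r j)) ^ n) := by
      intro k
      rw [← ENNReal.tsum_mul_left]
      exact tsum_congr fun j => coef_eq hp0 k (by have := hr _ j j.2; positivity)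
    simp only [e]
    rw [ENNReal.ofReal_one, one_mul]
    change ellq q (fun k => (2 : ℝ≥0∞) ^ k * (distFn (ntMax ψ f) ((2 : ℝ≥0∞) ^ k)) ^ (1/p)) ≤ _
    refine ellq_mono q _ _ fun k => ?_
    rw [ENNReal.mul_rpow_of_nonneg _ _ (by positivity), ← ENNReal.rpow_mul, mul_one_div_cancel hp0.ne', ENNReal.rpow_one]
    gcongr
    rw [distFn_ntMax]
    refine (measure_mono ?_).trans (D (k - s0)).lower
    rw [hD]
    exact (apSet_sub_Vset ψ f M k).trans (Vset_anti ψ f M (by omega))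
  · have e : ∀ k : ℤ, ∑' j : (D (k - s0)).J, ENNReal.ofReal (((2:ℝ) ^ k * ((2 * (20 * (D (k - s0)).r j)) ^ n) ^ (1/p)) ^ p) =
        ((2 : ℝ≥0∞) ^ k) ^ p * ∑' j : (D (k - s0)).J, ENNReal.ofReal ((2 * (20 * (D (k - s0)).r j)) ^ n) := by
      intro k
      rw [← ENNReal.tsum_mul_left]
      exact tsum_congr fun j => coef_eq hp0 k (by have := hr _ j j.2; positivity)
    simp only [e]
    have h3 : E ≤ ENNReal.ofReal (E.toReal + 1) :=
      ENNReal.le_ofReal_iff_toReal_le hE (by positivity) |>.2 (by linarith)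
    refine le_trans (ellq_mono q _ _ fun k => ?_) ((hEb ψ f).trans (mul_le_mul_left h3 _))
    refine ENNReal.rpow_le_rpow ?_ (by positivity)
    rw [mul_left_comm]
    gcongr
    rw [← hD]
    exact (D (k - s0)).upper


end
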